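/- arXiv:2103.12008 — 2 statements merged into one kernel-verified Lean document; each statement's English description precedes it below -/
import Mathlib

section
/- Let S be an unramified regular local ring of mixed characteristic p ≥ 3. Assume S[ω] and S[μ] are integrally closed (i.e. f,g ∉ S^{p∧p²}), h₁ ≠ 0, h₂ ≠ 0, and fg ∈ S^{p∧p²}. Since S/pS is a UFD, write h₁ ≡ z·c and h₂ ≡ z·e modulo pS with z ∈ S ∖ pS and c,e ∈ S whose images in S/pS are relatively prime. Set η_i := p^{−1}(ω−h₁)^i(μ−h₂)^{p−i} for 1 ≤ i ≤ p−1 and ε := p^{−1} Σ_{i=1}^{p} (−1)^i c^{p−i} e^{i−1} (μ−h₂)^{p−i} (ω−h₁)^{i−1}. Then R equals the S-submodule of K generated by A[η₁,…,η_{p−1}] ∪ {ε}; in particular the minimal number of generators of R as an S-module satisfies ν_S(R) ≤ p² + 1. -/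
/-- A height one prime ideal of a commutative ring. -/
def IsHeightOnePrime {S : Type*} [CommRing S] (P : Ideal S) : Prop :=
  ∃ hP : P.IsPrime, Order.height (⟨P, hP⟩ : PrimeSpectrum S) = 1

/-- `c ∈ S` is square free if `P S_P = c S_P` for every height one prime `P` containing `c`. -/
def PaperSquarefree {S : Type*} [CommRing S] (c : S) : Prop :=
  ∀ (P : Ideal S) (hP : P.IsPrime), Order.height (⟨P, hP⟩ : PrimeSpectrum S) = 1 → c ∈ P →
    haveI := hP
    Ideal.map (algebraMap S (Localization.AtPrime P)) P =
      Ideal.span {algebraMap S (Localization.AtPrime P) c}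

/-- Two elements satisfy `𝒜₁` if no height one prime contains both of them. -/
def SatisfiesA1 {S : Type*} [CommRing S] (f g : S) : Prop :=
  ∀ P : Ideal S, IsHeightOnePrime P → ¬(f ∈ P ∧ g ∈ P)

/-- The depth of a module over a local ring: the supremum of the lengths of
regular sequences on `M` contained in the maximal ideal. -/
noncomputable def modDepth (S : Type*) [CommRing S] [IsLocalRing S]
    (M : Type*) [AddCommGroup M] [Module S M] : ℕ∞ :=
  sSup {n : ℕ∞ | ∃ rs : List S, (rs.length : ℕ∞) = n ∧
    (∀ r ∈ rs, r ∈ IsLocalRing.maximalIdeal S) ∧ RingTheory.Sequence.IsRegular M rs}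

/-- A commutative ring is Cohen-Macaulay if each of its localizations at a prime
has depth equal to its Krull dimension. -/
def IsCMRing (R : Type*) [CommRing R] : Prop :=
  ∀ (Q : Ideal R) (hQ : Q.IsPrime),
    haveI := hQ
    (modDepth (Localization.AtPrime Q) (Localization.AtPrime Q) : WithBot ℕ∞) =
      ringKrullDim (Localization.AtPrime Q)

/-- The `n`-th symbolic power of a prime ideal `P`, i.e. `Pⁿ A_P ∩ A`. -/
noncomputable def symbPow {A : Type*} [CommRing A] (P : Ideal A) (hP : P.IsPrime) (n : ℕ) :
    Ideal A :=
  haveI := hP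
  Ideal.comap (algebraMap A (Localization.AtPrime P))
    (Ideal.map (algebraMap A (Localization.AtPrime P)) (P ^ n))

/-- `ω`, as an element of the subalgebra `A = S[ω,μ]`. -/
noncomputable def omegaA {S : Type*} [CommRing S] {K : Type*} [Field K] [Algebra S K]
    (ω μ : K) : Algebra.adjoin S ({ω, μ} : Set K) :=
  ⟨ω, Algebra.subset_adjoin (Set.mem_insert _ _)⟩

/-- `μ`, as an element of the subalgebra `A = S[ω,μ]`. -/
noncomputable def muA {S : Type*} [CommRing S] {K : Type*} [Field K] [Algebra S K]
    (ω μ : K) : Algebra.adjoin S ({ω, μ} : Set K) :=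
  ⟨μ, Algebra.subset_adjoin (Set.mem_insert_of_mem _ rfl)⟩

/-- The ideal `P = (p, ω−h₁, μ−h₂)` of `A = S[ω,μ]`. -/
noncomputable def Pid {S : Type*} [CommRing S] {K : Type*} [Field K] [Algebra S K]
    (p : ℕ) (ω μ : K) (h₁ h₂ : S) : Ideal (Algebra.adjoin S ({ω, μ} : Set K)) :=
  Ideal.span {(p : Algebra.adjoin S ({ω, μ} : Set K)),
    omegaA ω μ - algebraMap S _ h₁, muA ω μ - algebraMap S _ h₂}

/-- The colon module `(A :_K N) = {x ∈ K : x·N ⊆ A}`, as an `S`-submodule of `K`. -/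
noncomputable def colonSubmodule (S : Type*) [CommRing S] (K : Type*) [Field K] [Algebra S K]
    (A : Subalgebra S K) (N : Set K) : Submodule S K where
  carrier := {x : K | ∀ z ∈ N, x * z ∈ A}
  add_mem' := fun hx hy z hz => by
    simpa [add_mul] using add_mem (hx z hz) (hy z hz)
  zero_mem' := fun z hz => by simpa using A.zero_mem
  smul_mem' := fun c x hx z hz => by
    rw [Algebra.smul_def, mul_assoc]
    exact mul_mem (A.algebraMap_mem c) (hx z hz)

/-- `M` admits a free resolution `0 → Sⁿ → Sᵐ → M → 0`; for a finitely generated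
module over a Noetherian local ring this says exactly `pd_S(M) ≤ 1`. -/
def HasFreeResLengthLE1 (S : Type*) [CommRing S] (M : Type*) [AddCommGroup M] [Module S M] :
    Prop :=
  ∃ (n m : ℕ) (φ : (Fin n → S) →ₗ[S] (Fin m → S)) (ψ : (Fin m → S) →ₗ[S] M),
    Function.Injective φ ∧ Function.Surjective ψ ∧ LinearMap.range φ = LinearMap.ker ψ

/-- The ideal `Q` contains an `S`-regular sequence of length three, i.e. `Q` has grade
(at least) three. -/
def ContainsRegSeq3 (S : Type*) [CommRing S] (Q : Ideal S) : Prop :=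
  ∃ rs : List S, rs.length = 3 ∧ (∀ r ∈ rs, r ∈ Q) ∧ RingTheory.Sequence.IsRegular S rs

section Part1
universe u
open IsLocalRing

def RegN (R : Type u) [CommRing R] [IsLocalRing R] (n : ℕ) : Prop :=
  (∃ s : Finset R, s.card ≤ n ∧ Ideal.span (s : Set R) = maximalIdeal R) ∧
    (n : WithBot ℕ∞) ≤ ringKrullDim R

lemma regN_quot {R : Type u} [CommRing R] [IsLocalRing R] [IsNoetherianRing R] {n : ℕ}
    (h : RegN R (n + 1)) {x : R} (hx : x ∈ maximalIdeal R) (hx2 : x ∉ maximalIdeal R ^ 2)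
    [IsLocalRing (R ⧸ Ideal.span {x})] : RegN (R ⧸ Ideal.span {x}) n := by
  classical
  obtain ⟨⟨s, hs, hsp⟩, hd⟩ := h
  constructor
  · have hx' : x ∈ Ideal.span (s : Set R) := hsp ▸ hx
    obtain ⟨r, hr⟩ := (Submodule.mem_span_finset' (R := R)).1 hx'
    have hj : ∃ j : s, IsUnit (r j) := by
      by_contra hcon
      push Not at hcon
      apply hx2
      rw [← hr, pow_two]
      refine Ideal.sum_mem _ fun i _ => ?_
      refine Ideal.mul_mem_mul ((mem_maximalIdeal _).2 (hcon i)) ?_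
      rw [← hsp]; exact Ideal.subset_span i.2
    obtain ⟨j, hj⟩ := hj
    refine ⟨(s.erase j).image (Ideal.Quotient.mk (Ideal.span {x})), ?_, ?_⟩
    · refine Finset.card_image_le.trans ?_
      rw [Finset.card_erase_of_mem j.2]; omega
    · rw [← map_maximalIdeal_of_surjective (Ideal.Quotient.mk (Ideal.span {x}))
        Ideal.Quotient.mk_surjective, ← hsp, Ideal.map_span]
      apply le_antisymm
      · apply Ideal.span_mono
        rw [Finset.coe_image]
        exact Set.image_mono (Finset.coe_subset.2 (Finset.erase_subset _ _))
      · rw [Ideal.span_le]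
        rintro _ ⟨y, hy, rfl⟩
        by_cases hyj : y = j
        · subst hyj
          obtain ⟨w, hw⟩ := hj.exists_left_inv
          have h1 : (Ideal.Quotient.mk (Ideal.span {x})) (r j * j) =
              - ∑ i ∈ Finset.univ.erase j, (Ideal.Quotient.mk (Ideal.span {x})) (r i * i) := by
            have h2 : (Ideal.Quotient.mk (Ideal.span {x})) x = 0 :=
              Ideal.Quotient.eq_zero_iff_mem.2 (Ideal.mem_span_singleton_self x)
            have h4 := congrArg (Ideal.Quotient.mk (Ideal.span {x})) hr
            rw [h2, ← Finset.add_sum_erase _ _ (Finset.mem_univ j), map_add, map_sum] at h4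
            exact eq_neg_of_add_eq_zero_left h4
          have h3 : (Ideal.Quotient.mk (Ideal.span {x})) (j : R) =
              (Ideal.Quotient.mk (Ideal.span {x})) w *
                (Ideal.Quotient.mk (Ideal.span {x})) (r j * j) := by
            rw [← map_mul, ← mul_assoc, hw, one_mul]
          rw [h3, h1]
          apply Ideal.mul_mem_left
          apply neg_mem
          refine Ideal.sum_mem _ fun i hi => ?_
          rw [map_mul]
          apply Ideal.mul_mem_left
          apply Ideal.subset_span
          rw [Finset.coe_image]
          refine ⟨i, ?_, rfl⟩
          simp only [Finset.coe_erase, Set.mem_sdiff, Set.mem_singleton_iff]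
          refine ⟨i.2, fun hij => ?_⟩
          exact (Finset.mem_erase.1 hi).1 (Subtype.ext hij)
        · apply Ideal.subset_span
          rw [Finset.coe_image]
          exact ⟨y, by simpa using (⟨hy, hyj⟩ : y ∈ s ∧ ¬ y = j), rfl⟩
  · have := ringKrullDim_le_ringKrullDim_quotient_add_card ({x} : Finset R) (by
      rw [Finset.coe_singleton, Set.singleton_subset_iff, SetLike.mem_coe, IsLocalRing.ringJacobson_eq_maximalIdeal]; exact hx)
    have h2 := hd.trans this
    rw [Finset.coe_singleton] at h2
    simp only [Finset.card_singleton, Nat.cast_add, Nat.cast_one] at h2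
    exact ENat.WithBot.add_le_add_one_right_iff.1 h2

def UFR (R : Type u) [CommRing R] : ℕ → (M : Type u) → [AddCommGroup M] → [Module R M] → Prop
  | 0, M, _, _ => Module.Free R M
  | n + 1, M, _, _ => ∀ (k : ℕ) (f : (Fin k → R) →ₗ[R] M), Function.Surjective f →
      UFR R n (LinearMap.ker f)

lemma UFR_lift (R : Type u) [CommRing R] [IsLocalRing R] [IsNoetherianRing R] {x : R}
    (hxm : x ∈ maximalIdeal R) (hx0 : ∀ r : R, x * r = 0 → r = 0) :
    ∀ (n : ℕ) (N : Type u) [AddCommGroup N] [Module R N] [Module.Finite R N]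
      (_ : ∀ y : N, x • y = 0 → y = 0)
      (N' : Type u) [AddCommGroup N'] [Module (R ⧸ Ideal.span {x}) N'] (π : N →+ N')
      (_ : ∀ (r : R) (y : N), π (r • y) = Ideal.Quotient.mk (Ideal.span {x}) r • π y)
      (_ : Function.Surjective π) (_ : ∀ y, π y = 0 → ∃ y', y = x • y'),
      UFR (R ⧸ Ideal.span {x}) n N' → UFR R n N := by
  intro n
  induction n with
  | zero =>
    intro N _ _ _ hN N' _ _ π hπ hs hk h
    have hfree : Module.Free (R ⧸ Ideal.span {x}) N' := h
    have hfin : Module.Finite (R ⧸ Ideal.span {x}) N' := by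
      obtain ⟨s, hs'⟩ := (inferInstance : Module.Finite R N).fg_top
      classical
      refine ⟨⟨s.image π, ?_⟩⟩
      rw [eq_top_iff]
      intro y _
      obtain ⟨y, rfl⟩ := hs y
      have : y ∈ Submodule.span R (s : Set N) := hs' ▸ trivial
      induction this using Submodule.span_induction with
      | mem y hy => exact Submodule.subset_span (by simpa using ⟨y, hy, rfl⟩)
      | zero => simp
      | add a b _ _ ha hb => rw [map_add]; exact add_mem (ha trivial) (hb trivial)
      | smul r a _ ha => rw [hπ]; exact Submodule.smul_mem _ _ (ha trivial)
    have : Nontrivial (R ⧸ Ideal.span {x}) := by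
      apply Ideal.Quotient.nontrivial_iff.2
      intro ht
      rw [Ideal.span_singleton_eq_top] at ht
      exact (mem_maximalIdeal _).1 hxm ht
    let b := Module.finBasis (R ⧸ Ideal.span {x}) N'
    choose y hy using fun i => hs (b i)
    let F := Fintype.linearCombination R y
    have hF : ∀ v, F v = ∑ i, v i • y i := fun v => Fintype.linearCombination_apply R y v
    have hFπ : ∀ v, π (F v) = ∑ i, Ideal.Quotient.mk (Ideal.span {x}) (v i) • b i := by
      intro v; rw [hF, map_sum]; exact Finset.sum_congr rfl fun i _ => by rw [hπ, hy]
    have hjac : Ideal.span {x} ≤ Ideal.jacobson (⊥ : Ideal R) := by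
      rw [IsLocalRing.jacobson_eq_maximalIdeal _ bot_ne_top, Ideal.span_singleton_le_iff_mem]
      exact hxm
    have hsurj : LinearMap.range F = ⊤ := by
      rw [eq_top_iff]
      refine Submodule.le_of_le_smul_of_le_jacobson_bot (I := Ideal.span {x}) Module.Finite.fg_top
        hjac ?_
      intro m _
      choose r hr using fun i => Ideal.Quotient.mk_surjective (b.repr (π m) i)
      have h1 : π (m - F r) = 0 := by
        rw [map_sub, hFπ, sub_eq_zero]
        conv_lhs => rw [← b.sum_repr (π m)]
        exact Finset.sum_congr rfl fun i _ => by rw [hr]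
      obtain ⟨m', hm'⟩ := hk _ h1
      rw [show m = F r + x • m' by rw [← hm']; abel]
      refine Submodule.add_mem_sup ⟨r, rfl⟩ ?_
      exact Submodule.smul_mem_smul (Ideal.mem_span_singleton_self x) trivial
    have hinj : LinearMap.ker F = ⊥ := by
      rw [eq_bot_iff]
      refine Submodule.le_of_le_smul_of_le_jacobson_bot (I := Ideal.span {x})
        (IsNoetherian.noetherian _) hjac ?_
      rw [bot_sup_eq]
      intro v hv
      have h1 := hFπ v
      rw [LinearMap.mem_ker.1 hv, map_zero] at h1
      have h2 := Fintype.linearIndependent_iff.1 b.linearIndependent _ h1.symm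
      have h3 : ∀ i, ∃ w, v i = x * w := fun i => by
        obtain ⟨w, hw⟩ := Ideal.mem_span_singleton.1 (Ideal.Quotient.eq_zero_iff_mem.1 (h2 i))
        exact ⟨w, hw⟩
      choose w hw using h3
      have hvw : v = x • w := funext hw
      rw [hvw]
      refine Submodule.smul_mem_smul (Ideal.mem_span_singleton_self x) ?_
      rw [LinearMap.mem_ker]
      apply hN
      rw [← map_smul, ← hvw]; exact hv
    exact Module.Free.of_equiv (LinearEquiv.ofBijective F
      ⟨LinearMap.ker_eq_bot.1 hinj, LinearMap.range_eq_top.1 hsurj⟩)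
  | succ n ih =>
    intro N _ _ _ hN N' _ _ π hπ hs hk h k f hf
    let D := R ⧸ Ideal.span {x}
    let q := Ideal.Quotient.mk (Ideal.span {x})
    let f' : (Fin k → D) →ₗ[D] N' := Fintype.linearCombination D (fun i => π (f (Pi.single i 1)))
    have hf' : ∀ v : Fin k → R, f' (fun i => q (v i)) = π (f v) := by
      intro v
      have hv : f v = ∑ i, v i • f (Pi.single i 1) := by
        conv_lhs => rw [pi_eq_sum_univ' v]
        simp only [map_sum, map_smul]
      rw [hv, map_sum]
      show Fintype.linearCombination D _ _ = _
      rw [Fintype.linearCombination_apply]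
      exact Finset.sum_congr rfl fun i _ => by rw [hπ]
    have hs' : Function.Surjective f' := by
      intro y
      obtain ⟨y, rfl⟩ := hs y
      obtain ⟨v, rfl⟩ := hf y
      exact ⟨_, hf' v⟩
    let ρ : LinearMap.ker f →+ LinearMap.ker f' :=
      { toFun := fun v => ⟨fun i => q (v.1 i), by
          rw [LinearMap.mem_ker, hf', LinearMap.mem_ker.1 v.2, map_zero]⟩
        map_zero' := by ext; simp
        map_add' := fun a b => by ext; simp }
    refine ih (LinearMap.ker f) ?_ (LinearMap.ker f') ρ ?_ ?_ ?_ (h k f' hs')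
    · intro y hy
      ext i
      apply hx0
      have := congrFun (congrArg Subtype.val hy) i
      exact this
    · intro r y
      ext i
      simp [ρ, q]
    · rintro ⟨w, hw⟩
      choose v hv using fun i => Ideal.Quotient.mk_surjective (w i)
      have hwv : w = fun i => q (v i) := funext fun i => (hv i).symm
      have h1 : π (f v) = 0 := by rw [← hf', ← hwv]; exact hw
      obtain ⟨y, hy⟩ := hk _ h1
      obtain ⟨v', rfl⟩ := hf y
      refine ⟨⟨v - x • v', by rw [LinearMap.mem_ker, map_sub, map_smul, hy, sub_self]⟩, ?_⟩
      ext i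
      have : q x = 0 := Ideal.Quotient.eq_zero_iff_mem.2 (Ideal.mem_span_singleton_self x)
      show q ((v - x • v') i) = w i
      simp only [Pi.sub_apply, Pi.smul_apply, smul_eq_mul, map_sub, map_mul, this, zero_mul, sub_zero]
      exact hv i
    · intro v hv
      have h3 : ∀ i, ∃ w, v.1 i = x * w := fun i => by
        have h4 : q (v.1 i) = 0 := congrFun (congrArg Subtype.val hv) i
        obtain ⟨w, hw⟩ := Ideal.mem_span_singleton.1 (Ideal.Quotient.eq_zero_iff_mem.1 h4)
        exact ⟨w, hw⟩
      choose w hw using h3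
      have hvw : v.1 = x • w := funext hw
      refine ⟨⟨w, ?_⟩, Subtype.ext hvw⟩
      rw [LinearMap.mem_ker]
      apply hN
      rw [← map_smul, ← hvw]; exact v.2
end Part1

section Part2
universe u
open IsLocalRing

lemma regN_zero_field {R : Type u} [CommRing R] [IsLocalRing R] (h : RegN R 0) : IsField R := by
  obtain ⟨⟨s, hs, hsp⟩, -⟩ := h
  have : s = ∅ := Finset.card_eq_zero.1 (by omega)
  subst this
  rw [isField_iff_maximalIdeal_eq, ← hsp]; simp

lemma ufr_zero_of_field {R : Type u} [CommRing R] (h : IsField R)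
    (M : Type u) [AddCommGroup M] [Module R M] : UFR R 0 M := by
  show Module.Free R M
  let := h.toField
  exact Module.Free.of_divisionRing R M

lemma regN_main : ∀ (n : ℕ) (R : Type u) [CommRing R] [IsLocalRing R] [IsNoetherianRing R],
    RegN R n → IsDomain R ∧ ∀ (M : Type u) [AddCommGroup M] [Module R M] [Module.Finite R M],
      UFR R n M := by
  intro n
  induction n with
  | zero =>
    intro R _ _ _ h
    have hf := regN_zero_field h
    exact ⟨hf.isDomain, fun M _ _ _ => ufr_zero_of_field hf M⟩
  | succ n ih =>
    intro R _ _ _ h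
    classical
    have hfin : (minimalPrimes R).Finite := minimalPrimes.finite_of_isNoetherianRing R
    have hex : ∃ x ∈ maximalIdeal R, x ∉ maximalIdeal R ^ 2 ∧ ∀ P ∈ minimalPrimes R, x ∉ P := by
      by_contra hcon
      push Not at hcon
      have hdim : ¬ (ringKrullDim R ≤ 0) := by
        intro h0
        have := h.2.trans h0
        norm_cast at this
      let t : Finset (Ideal R) := insert (maximalIdeal R ^ 2) hfin.toFinset
      have hsub : (maximalIdeal R : Set R) ⊆ ⋃ i ∈ (t : Set (Ideal R)), (id i : Ideal R) := by
        intro x hx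
        by_cases hx2 : x ∈ maximalIdeal R ^ 2
        · exact Set.mem_biUnion (x := maximalIdeal R ^ 2) (by simp [t]) hx2
        · obtain ⟨P, hP, hxP⟩ := hcon x hx hx2
          exact Set.mem_biUnion (x := P) (by simp [t, hP]) hxP
      obtain ⟨I, hI, hmI⟩ := (Ideal.subset_union_prime (s := t) (f := id) (maximalIdeal R ^ 2)
        (maximalIdeal R ^ 2) (by
          intro i hi hi1 _
          simp only [t, Finset.mem_insert, Set.Finite.mem_toFinset] at hi
          rcases hi with hi | hi
          · exact absurd hi hi1
          · exact hi.1.1) (I := maximalIdeal R)).1 hsub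
      simp only [t, Finset.mem_insert, Set.Finite.mem_toFinset] at hI
      rcases hI with rfl | hI
      · have hm : maximalIdeal R = ⊥ := by
          refine eq_bot_iff.2 (Submodule.le_of_le_smul_of_le_jacobson_bot (I := maximalIdeal R)
            (IsNoetherian.noetherian _) (IsLocalRing.jacobson_eq_maximalIdeal _ bot_ne_top).ge ?_)
          rw [bot_sup_eq]
          simpa [pow_two] using hmI
        have hf := (isField_iff_maximalIdeal_eq (R := R)).2 hm
        exact hdim (ringKrullDim_eq_zero_of_isField hf).le
      · apply hdim
        have hIp : I.IsPrime := hI.1.1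
        have hIm : I = maximalIdeal R := le_antisymm (le_maximalIdeal hIp.ne_top) hmI
        rw [← IsLocalRing.maximalIdeal_height_eq_ringKrullDim, ← hIm]
        rw [(Ideal.height_eq_zero_iff).2 hI]
        simp
    obtain ⟨x, hxm, hx2, hxP⟩ := hex
    have hnt : Nontrivial (R ⧸ Ideal.span {x}) := by
      apply Ideal.Quotient.nontrivial_iff.2
      intro ht
      rw [Ideal.span_singleton_eq_top] at ht
      exact (mem_maximalIdeal _).1 hxm ht
    have : IsLocalRing (R ⧸ Ideal.span {x}) :=
      IsLocalRing.of_surjective' (Ideal.Quotient.mk _) Ideal.Quotient.mk_surjective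
    obtain ⟨hD, hU⟩ := ih (R ⧸ Ideal.span {x}) (regN_quot h hxm hx2)
    have hxp : (Ideal.span {x}).IsPrime := (Ideal.Quotient.isDomain_iff_prime _).1 hD
    obtain ⟨P, hP, hPx⟩ := Ideal.exists_minimalPrimes_le (I := ⊥) (J := Ideal.span {x}) bot_le
    have hPp : P.IsPrime := hP.1.1
    have hxnP := hxP P hP
    have hjac : Ideal.span {x} ≤ Ideal.jacobson (⊥ : Ideal R) := by
      rw [IsLocalRing.jacobson_eq_maximalIdeal _ bot_ne_top, Ideal.span_singleton_le_iff_mem]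
      exact hxm
    have hPbot : P = ⊥ := by
      refine eq_bot_iff.2 (Submodule.le_of_le_smul_of_le_jacobson_bot (I := Ideal.span {x})
            (IsNoetherian.noetherian _) hjac ?_)
      rw [bot_sup_eq]
      intro y hy
      obtain ⟨t, rfl⟩ := Ideal.mem_span_singleton.1 (hPx hy)
      exact Submodule.smul_mem_smul (Ideal.mem_span_singleton_self x)
        ((hPp.mem_or_mem hy).resolve_left hxnP)
    have hdom : IsDomain R := by
      have hb : (⊥ : Ideal R).IsPrime := hPbot ▸ hPp
      exact IsDomain.of_bot_isPrime R
    have hx0 : x ≠ 0 := fun h0 => hxnP (h0 ▸ P.zero_mem)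
    refine ⟨hdom, ?_⟩
    intro M _ _ _ k f hf
    refine UFR_lift R hxm (fun r hr => (mul_eq_zero.1 hr).resolve_left hx0) n (LinearMap.ker f) ?_
      (LinearMap.ker f ⧸ (Ideal.span {x} • ⊤ : Submodule R (LinearMap.ker f)))
      (Submodule.mkQ _).toAddMonoidHom ?_ (Submodule.mkQ_surjective _) ?_ ?_
    · intro y hy
      ext i
      have := congrFun (congrArg Subtype.val hy) i
      exact (mul_eq_zero.1 this).resolve_left hx0
    · intro r y
      rfl
    · intro y hy
      have h1 : y ∈ (Ideal.span {x} • ⊤ : Submodule R (LinearMap.ker f)) :=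
        (Submodule.Quotient.mk_eq_zero _).1 hy
      rw [Submodule.ideal_span_singleton_smul] at h1
      obtain ⟨y', -, hy'⟩ := h1
      exact ⟨y', hy'.symm⟩
    · have : Module.Finite (R ⧸ Ideal.span {x})
        (LinearMap.ker f ⧸ (Ideal.span {x} • ⊤ : Submodule R (LinearMap.ker f))) :=
        Module.Finite.of_restrictScalars_finite R _ _
      exact hU _
end Part2

section Part3
universe u
open IsLocalRing TensorProduct

lemma ufr_stablyFree (R B : Type u) [CommRing R] [IsNoetherianRing R] [CommRing B] [Algebra R B]
    [Module.Flat R B] : ∀ (n : ℕ) (N : Type u) [AddCommGroup N] [Module R N] [Module.Finite R N],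
    UFR R n N → Module.Projective B (B ⊗[R] N) → Module.IsStablyFree B (B ⊗[R] N) := by
  intro n
  induction n with
  | zero =>
    intro N _ _ _ h _
    have : Module.Free R N := h
    infer_instance
  | succ n ih =>
    intro N _ _ _ h hproj
    obtain ⟨k, f, hf⟩ := Module.Finite.exists_fin' R N
    have hK := h k f hf
    let g := f.baseChange B
    let ι := (LinearMap.ker f).subtype.baseChange B
    have hg : Function.Surjective g := LinearMap.lTensor_surjective B hf
    have hι : Function.Injective ι :=
      Module.Flat.lTensor_preserves_injective_linearMap (M := B) _ (Submodule.subtype_injective _)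
    have hex : Function.Exact ι g :=
      lTensor_exact B (f := (LinearMap.ker f).subtype) (g := f) (LinearMap.exact_subtype_ker_map f) hf
    obtain ⟨l, hl⟩ := Module.projective_lifting_property g LinearMap.id hg
    obtain ⟨e, -, -⟩ := hex.splitSurjectiveEquiv hι ⟨l, hl⟩
    have hKproj : Module.Projective B (B ⊗[R] LinearMap.ker f) := by
      have h1 : Module.Projective B ((B ⊗[R] LinearMap.ker f) × (B ⊗[R] N)) :=
        Module.Projective.of_equiv e
      exact Module.Projective.of_split (LinearMap.inl B _ (B ⊗[R] N)) (LinearMap.fst B _ _) (by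
        ext; simp)
    have hsf := ih (LinearMap.ker f) hK hKproj
    obtain ⟨P, _, _, _, _, _⟩ := Module.IsStablyFree.exist_free_prod B (B ⊗[R] LinearMap.ker f)
    have hfr : Module.Free B ((B ⊗[R] N) × ((B ⊗[R] LinearMap.ker f) × P)) := by
      let e1 : ((B ⊗[R] (Fin k → R)) × P) ≃ₗ[B] ((B ⊗[R] N) × ((B ⊗[R] LinearMap.ker f) × P)) :=
        (e.prodCongr (LinearEquiv.refl B P)) ≪≫ₗ
          ((LinearEquiv.prodComm B _ _).prodCongr (LinearEquiv.refl B P)) ≪≫ₗ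
          LinearEquiv.prodAssoc B _ _ _
      exact Module.Free.of_equiv e1
    exact Module.IsStablyFree.of_free_prod B (B ⊗[R] N) ((B ⊗[R] LinearMap.ker f) × P)
end Part3

section Part4
universe u
open IsLocalRing TensorProduct

lemma principal_of_ufr {D B : Type u} [CommRing D] [IsNoetherianRing D] [CommRing B] [IsDomain B]
    [Algebra D B] [Module.Flat D B] {n : ℕ} (I Q : Ideal D) (hU : UFR D n I) {c : B} (hc : c ≠ 0)
    (hIQ : I.map (algebraMap D B) * Q.map (algebraMap D B) = Ideal.span {c}) :
    (I.map (algebraMap D B)).IsPrincipal := by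
  let KB := FractionRing B
  let ψ : B →ₗ[B] KB := Algebra.linearMap B KB
  have hψ : Function.Injective ψ := IsFractionRing.injective B KB
  have hcK : algebraMap B KB c ≠ 0 := by
    intro h; exact hc (IsFractionRing.injective B KB (by rw [h, map_zero]))
  let U : Submodule B KB := Submodule.map ψ (I.map (algebraMap D B))
  let V : Submodule B KB := Submodule.span B {(algebraMap B KB c)⁻¹} *
    Submodule.map ψ (Q.map (algebraMap D B))
  have hmul : ∀ I J : Ideal B, Submodule.map ψ (I * J) = Submodule.map ψ I * Submodule.map ψ J := by
    intro I J
    exact Submodule.map_mul (R := B) I J (Algebra.ofId B KB)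
  have hUV : U * V = 1 := by
    show Submodule.map ψ _ * (_ * Submodule.map ψ _) = 1
    rw [mul_left_comm, ← hmul, hIQ, Ideal.span, Submodule.map_span, Submodule.span_mul_span,
      Submodule.one_eq_span]
    congr 1
    ext x
    simp [ψ, inv_mul_cancel₀ hcK]
  let Uu : (Submodule B KB)ˣ := ⟨U, V, hUV, by rw [mul_comm, hUV]⟩
  have hfs : FaithfulSMul B KB := (faithfulSMul_iff_algebraMap_injective B KB).2
    (IsFractionRing.injective B KB)
  have hinv : Module.Invertible B U :=
    Module.Invertible.left (Submodule.tensorInvEquiv Uu)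
  let φ : B ⊗[D] I →ₗ[B] B := LinearMap.liftBaseChange B ((Algebra.linearMap D B).comp I.subtype)
  have hφi : Function.Injective φ := by
    have h1 : Function.Injective (LinearMap.lTensor B I.subtype) :=
      Module.Flat.lTensor_preserves_injective_linearMap (M := B) _ (Submodule.subtype_injective _)
    have h2 : ∀ x, φ x = TensorProduct.rid D B (LinearMap.lTensor B I.subtype x) := by
      intro x
      induction x with
      | zero => simp
      | add x y hx hy => rw [map_add, hx, hy, map_add, map_add]
      | tmul b i => simp [φ, Algebra.smul_def, mul_comm]
    intro x y hxy
    rw [h2, h2] at hxy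
    exact h1 ((TensorProduct.rid D B).injective hxy)
  have hφr : LinearMap.range φ = I.map (algebraMap D B) := by
    apply le_antisymm
    · rintro _ ⟨x, rfl⟩
      induction x with
      | zero => simp
      | add x y hx hy => rw [map_add]; exact add_mem hx hy
      | tmul b i =>
        simp only [φ, LinearMap.liftBaseChange_tmul, LinearMap.comp_apply, Submodule.subtype_apply,
          Algebra.linearMap_apply, smul_eq_mul]
        exact Ideal.mul_mem_left _ _ (Ideal.mem_map_of_mem _ i.2)
    · rw [Ideal.map, Ideal.span_le]
      rintro _ ⟨i, hi, rfl⟩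
      exact ⟨1 ⊗ₜ ⟨i, hi⟩, by simp [φ]⟩
  have e1 : (B ⊗[D] I) ≃ₗ[B] U :=
    (LinearEquiv.ofInjective φ hφi) ≪≫ₗ LinearEquiv.ofEq _ _ hφr ≪≫ₗ
      Submodule.equivMapOfInjective ψ hψ _
  have hp : Module.Projective B (B ⊗[D] I) := Module.Projective.of_equiv e1.symm
  have hsf := ufr_stablyFree D B n I hU hp
  have hsfU : Module.IsStablyFree B U := hsf.equiv e1
  have hfree : Module.Free B U := Module.free_of_isStablyFree_of_invertible B U
  obtain ⟨e2⟩ := Module.Invertible.free_iff_linearEquiv.1 hfree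
  let e3 : (I.map (algebraMap D B)) ≃ₗ[B] B := Submodule.equivMapOfInjective ψ hψ _ ≪≫ₗ e2
  refine ⟨⟨(e3.symm 1 : I.map (algebraMap D B)), ?_⟩⟩
  apply le_antisymm
  · intro x hx
    rw [Submodule.mem_span_singleton]
    refine ⟨e3 ⟨x, hx⟩, ?_⟩
    have : e3 ⟨x, hx⟩ • e3.symm 1 = ⟨x, hx⟩ := by
      rw [← map_smul, smul_eq_mul, mul_one, e3.symm_apply_apply]
    exact congrArg Subtype.val this
  · rw [Submodule.span_singleton_le_iff_mem]
    exact (e3.symm 1).2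

/-- the colon ideal. -/
def colQ {D : Type u} [CommRing D] (c e : D) : Ideal D where
  carrier := {y | c ∣ y * e}
  add_mem' := fun ha hb => by
    show c ∣ _
    rw [add_mul]; exact dvd_add ha hb
  zero_mem' := by simp
  smul_mem' := fun r x hx => by
    show c ∣ r * x * e
    rw [mul_assoc]; exact dvd_mul_of_dvd_right hx r

lemma lemG0 {D : Type u} [CommRing D] [IsDomain D] [IsNoetherianRing D] [IsIntegrallyClosed D]
    {F : Type u} [Field F] [Algebra D F] [IsFractionRing D F] {c e : D} (hc : c ≠ 0)
    (t : F) (ht : ∀ j ∈ colQ c e ⊔ colQ e c, ∃ d, t * algebraMap D F j = algebraMap D F d) :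
    ∃ d, t = algebraMap D F d := by
  have hint : IsIntegral D t := by
    refine isIntegral_of_smul_mem_submodule
      (Submodule.map (Algebra.linearMap D F) (colQ c e)) ?_ ?_ t ?_
    · rw [Submodule.ne_bot_iff]
      refine ⟨algebraMap D F c, ⟨c, ?_, rfl⟩, ?_⟩
      · exact Dvd.intro _ rfl
      · intro h; exact hc (IsFractionRing.injective D F (by rw [h, map_zero]))
    · exact Submodule.FG.map _ (IsNoetherian.noetherian _)
    · rintro _ ⟨y, hy, rfl⟩
      have hy0 : c ∣ y * e := hy
      obtain ⟨w, hw⟩ := hy0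
      have hw' : w ∈ colQ e c := ⟨y, by rw [mul_comm w, ← hw, mul_comm]⟩
      obtain ⟨d, hd⟩ := ht y (Submodule.mem_sup_left hy)
      obtain ⟨d', hd'⟩ := ht w (Submodule.mem_sup_right hw')
      refine ⟨d, ?_, hd.symm⟩
      refine ⟨d', IsFractionRing.injective D F ?_⟩
      have h1 := congrArg (algebraMap D F) hw
      simp only [map_mul] at h1 ⊢
      rw [← hd, ← hd', mul_assoc, h1]; ring
  obtain ⟨d, hd⟩ := IsIntegrallyClosed.algebraMap_eq_of_integral hint
  exact ⟨d, hd.symm⟩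

lemma lemG {D : Type u} [CommRing D] [IsDomain D] [IsNoetherianRing D] [IsIntegrallyClosed D]
    {F : Type u} [Field F] [Algebra D F] [IsFractionRing D F] {c e : D} (hc : c ≠ 0)
    (t : F) (ht : ∀ j ∈ colQ c e ⊔ colQ e c, ∃ N, ∃ d, t * algebraMap D F j ^ N = algebraMap D F d) :
    ∃ d, t = algebraMap D F d := by
  let It : F → Ideal D := fun t =>
    { carrier := {r | ∃ d, t * algebraMap D F r = algebraMap D F d}
      add_mem' := by
        rintro a b ⟨d, hd⟩ ⟨d', hd'⟩
        exact ⟨d + d', by rw [map_add, mul_add, hd, hd', map_add]⟩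
      zero_mem' := ⟨0, by simp⟩
      smul_mem' := by
        rintro r x ⟨d, hd⟩
        exact ⟨r * d, by rw [smul_eq_mul, map_mul, map_mul, ← hd]; ring⟩ }
  have hrad : colQ c e ⊔ colQ e c ≤ (It t).radical := by
    intro j hj
    obtain ⟨N, d, hd⟩ := ht j hj
    exact ⟨N, d, by rw [map_pow, hd]⟩
  obtain ⟨M, hM⟩ := Ideal.exists_pow_le_of_le_radical_of_fg hrad (IsNoetherian.noetherian _)
  have key : ∀ M, (colQ c e ⊔ colQ e c) ^ M ≤ It t → (1 : D) ∈ It t := by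
    intro M
    induction M with
    | zero => intro h; exact h (by simp)
    | succ M ih =>
      intro h
      apply ih
      intro y hy
      obtain ⟨d, hd⟩ := lemG0 (e := e) hc (t * algebraMap D F y) (by
        intro j hj
        obtain ⟨d, hd⟩ := h (show y * j ∈ _ by rw [pow_succ]; exact Ideal.mul_mem_mul hy hj)
        exact ⟨d, by rw [← hd, map_mul, mul_assoc]⟩)
      exact ⟨d, hd⟩
  obtain ⟨d, hd⟩ := key M hM
  exact ⟨d, by simpa using hd⟩
end Part4

section Part5
universe u
open IsLocalRing TensorProduct

lemma relprime_dvd_aux {D : Type u} [CommRing D] [IsDomain D] [IsNoetherianRing D]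
    [IsIntegrallyClosed D] (F : Type u) [Field F] [Algebra D F] [IsFractionRing D F]
    {n : ℕ} (hU : ∀ (M : Type u) [AddCommGroup M] [Module D M] [Module.Finite D M], UFR D n M)
    {c e a : D} (hc : c ≠ 0) (hce : IsRelPrime c e) (ha : c ∣ a * e) : c ∣ a := by
  classical
  let J := colQ c e ⊔ colQ e c
  obtain ⟨s, hs⟩ : J.FG := IsNoetherian.noetherian J
  change Ideal.span (s : Set D) = J at hs
  have hcQ : c ∈ colQ c e := Dvd.intro _ rfl
  let g : (MvPolynomial s D) := MvPolynomial.sumSMulX (Finsupp.equivFunOnFinite.symm (fun i : s => (i : D)))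
  have hg : g = ∑ i : s, (i : D) • MvPolynomial.X i := by
    simp [g, MvPolynomial.sumSMulX, Finsupp.linearCombination_apply, Finsupp.sum_fintype]
  let m : (MvPolynomial s D) →+* MvPolynomial s F := MvPolynomial.map (algebraMap D F)
  have hm : Function.Injective m := MvPolynomial.map_injective _ (IsFractionRing.injective D F)
  have hmC : ∀ d, m (MvPolynomial.C d) = MvPolynomial.C (algebraMap D F d) := fun d =>
    MvPolynomial.map_C _ _
  have hmX : ∀ i, m (MvPolynomial.X i) = MvPolynomial.X i := fun d => MvPolynomial.map_X _ _
  have hmg : m g = MvPolynomial.sumSMulX (Finsupp.equivFunOnFinite.symm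
      (fun i : s => algebraMap D F (i : D))) := by
    rw [hg]
    simp [hmC, hmX, MvPolynomial.sumSMulX, Finsupp.linearCombination_apply, Finsupp.sum_fintype,
      MvPolynomial.smul_eq_C_mul]
  have hs0 : ∃ i : s, (i : D) ≠ 0 := by
    by_contra hcon
    push Not at hcon
    have : J = ⊥ := by
      rw [← hs, Submodule.span_eq_bot]
      intro x hx; exact hcon ⟨x, hx⟩
    have h1 : c ∈ J := Submodule.mem_sup_left hcQ
    rw [this] at h1
    exact hc h1
  obtain ⟨i0, hi0⟩ := hs0
  have hi0F : algebraMap D F (i0 : D) ≠ 0 := by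
    intro h; exact hi0 (IsFractionRing.injective D F (by rw [h, map_zero]))
  have hirr : Irreducible (m g) := by
    rw [hmg]
    apply MvPolynomial.irreducible_sumSMulX
    · exact ⟨i0, by simpa using hi0⟩
    · intro r hr
      have := hr i0
      refine isUnit_of_dvd_unit this ?_
      exact isUnit_iff_ne_zero.2 hi0F
  have hprime : Prime (m g) := hirr.prime
  have hg0 : g ≠ 0 := by
    intro h; exact hprime.ne_zero (by rw [h, map_zero])
  -- Lemma G for polynomials
  have hG : ∀ (t : F) (N : ℕ) (q : (MvPolynomial s D)), MvPolynomial.C t * (m g) ^ N = m q →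
      ∃ d, t = algebraMap D F d := by
    intro t N q hq
    refine lemG (e := e) hc t ?_
    intro j hj
    have hj' : j ∈ Submodule.span D (s : Set D) := by
      change j ∈ Ideal.span (s : Set D)
      rw [hs]; exact hj
    obtain ⟨v, hv⟩ := Submodule.mem_span_finset'.1 hj'
    refine ⟨N, MvPolynomial.eval v q, ?_⟩
    have h1 := congrArg (MvPolynomial.eval (fun i => algebraMap D F (v i))) hq
    have h2 : ∀ w : (MvPolynomial s D), MvPolynomial.eval (fun i => algebraMap D F (v i)) (m w) =
        algebraMap D F (MvPolynomial.eval v w) := by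
      intro w
      exact (MvPolynomial.map_eval (algebraMap D F) v w).symm
    rw [map_mul, map_pow, h2, h2, MvPolynomial.eval_C] at h1
    have h3 : MvPolynomial.eval v g = j := by
      rw [hg, ← hv]; simp [MvPolynomial.smul_eval, mul_comm]
    rw [h3] at h1
    exact h1
  have hdvd : ∀ (x y : D) (N : ℕ) (q : (MvPolynomial s D)), y ≠ 0 → MvPolynomial.C x * g ^ N = MvPolynomial.C y * q →
      y ∣ x := by
    intro x y N q hy hq
    have hyF : algebraMap D F y ≠ 0 := by
      intro h; exact hy (IsFractionRing.injective D F (by rw [h, map_zero]))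
    obtain ⟨d, hd⟩ := hG (algebraMap D F x / algebraMap D F y) N q (by
      have h1 := congrArg m hq
      simp only [map_mul, map_pow, hmC] at h1
      have h2 : (MvPolynomial.C (algebraMap D F x) : MvPolynomial s F) =
          MvPolynomial.C (algebraMap D F y) * MvPolynomial.C (algebraMap D F x / algebraMap D F y) := by
        rw [← map_mul, mul_div_cancel₀ _ hyF]
      rw [h2, mul_assoc] at h1
      exact mul_left_cancel₀ (by simpa using hyF) h1)
    refine ⟨d, IsFractionRing.injective D F ?_⟩
    rw [map_mul, ← hd, mul_div_cancel₀ _ hyF]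
  let B := Localization.Away g
  have hBdom : IsDomain B := IsLocalization.isDomain_localization (powers_le_nonZeroDivisors_of_noZeroDivisors hg0)
  have hPB : Function.Injective (algebraMap (MvPolynomial s D) B) :=
    IsLocalization.injective B (powers_le_nonZeroDivisors_of_noZeroDivisors hg0)
  have hfl1 : Module.Flat (MvPolynomial s D) B := IsLocalization.flat B (Submonoid.powers g)
  have hfl : Module.Flat D B := Module.Flat.trans D (MvPolynomial s D) B
  have hgu : IsUnit (algebraMap (MvPolynomial s D) B g) := IsLocalization.Away.algebraMap_isUnit g
  have hDB : ∀ d : D, algebraMap D B d = algebraMap (MvPolynomial s D) B (MvPolynomial.C d) := fun d =>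
    IsScalarTower.algebraMap_apply D (MvPolynomial s D) B d
  let I : Ideal D := Ideal.span {c, e}
  have hJB : J.map (algebraMap D B) = ⊤ := by
    refine Ideal.eq_top_of_isUnit_mem _ ?_ hgu
    have hgB := congrArg (algebraMap (MvPolynomial s D) B) hg
    rw [hgB, map_sum]
    refine Ideal.sum_mem _ fun i _ => ?_
    rw [MvPolynomial.smul_eq_C_mul, map_mul, ← hDB]
    refine Ideal.mul_mem_right _ _ (Ideal.mem_map_of_mem _ ?_)
    rw [← hs]; exact Submodule.subset_span i.2
  have hIQ : I * colQ c e = Ideal.span {c} * J := by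
    apply le_antisymm
    · rw [Ideal.mul_le]
      intro x hx y hy
      obtain ⟨r, r', rfl⟩ := Ideal.mem_span_pair.1 hx
      have hy0 : c ∣ y * e := hy
      obtain ⟨w, hw⟩ := hy0
      have hw' : w ∈ colQ e c := ⟨y, by rw [mul_comm w, ← hw, mul_comm]⟩
      rw [show (r * c + r' * e) * y = c * (r * y + r' * w) by linear_combination r' * hw]
      exact Ideal.mul_mem_mul (Ideal.mem_span_singleton_self c)
        (add_mem (Ideal.mul_mem_left _ _ (Submodule.mem_sup_left hy))
          (Ideal.mul_mem_left _ _ (Submodule.mem_sup_right hw')))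
    · rw [Ideal.mul_sup]
      apply sup_le
      · exact Ideal.mul_mono_left (Ideal.span_mono (by simp))
      · rw [Ideal.mul_le]
        intro x hx w hw
        obtain ⟨r, rfl⟩ := Ideal.mem_span_singleton'.1 hx
        have hw0 : e ∣ w * c := hw
        obtain ⟨y, hy⟩ := hw0
        have hy' : y ∈ colQ c e := ⟨w, by rw [mul_comm y, ← hy, mul_comm]⟩
        rw [show r * c * w = r * (e * y) by rw [← hy]; ring]
        exact Ideal.mul_mem_left _ _ (Ideal.mul_mem_mul (Ideal.subset_span (by simp)) hy')
  have hcB : algebraMap D B c ≠ 0 := by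
    rw [hDB]
    intro h
    have := hPB (h.trans (map_zero _).symm)
    simp at this
    exact hc this
  have hpr := principal_of_ufr (B := B) I (colQ c e) (hU I) hcB (by
    rw [← Ideal.map_mul, hIQ, Ideal.map_mul, hJB, Ideal.mul_top, Ideal.map_span, Set.image_singleton])
  obtain ⟨⟨d, hd⟩⟩ := hpr
  obtain ⟨k, h, hh⟩ := IsLocalization.Away.surj g d
  have hIh : I.map (algebraMap D B) = Ideal.span {algebraMap (MvPolynomial s D) B h} := by
    rw [hd, ← hh]
    exact (Ideal.span_singleton_mul_right_unit (hgu.pow k) d).symm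
  have hclear : ∀ (x : D) (w : (MvPolynomial s D)), algebraMap D B x ∈ Ideal.span {algebraMap (MvPolynomial s D) B w} →
      ∃ N q, MvPolynomial.C x * g ^ N = w * q := by
    intro x w hx
    obtain ⟨y, hy⟩ := Ideal.mem_span_singleton.1 hx
    obtain ⟨N, q, hq⟩ := IsLocalization.Away.surj g y
    refine ⟨N, q, hPB ?_⟩
    rw [map_mul, map_mul, map_pow, ← hq, ← hDB, hy, mul_assoc]
  obtain ⟨N, q, hq⟩ := hclear c h (hIh ▸ Ideal.mem_map_of_mem _ (Ideal.subset_span (by simp)))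
  obtain ⟨N', q', hq'⟩ := hclear e h (hIh ▸ Ideal.mem_map_of_mem _ (Ideal.subset_span (by simp)))
  have hcF : algebraMap D F c ≠ 0 := by
    intro h; exact hc (IsFractionRing.injective D F (by rw [h, map_zero]))
  have hdv : m h ∣ m g ^ N := by
    have h1 := congrArg m hq
    simp only [map_mul, map_pow, hmC] at h1
    have hu : IsUnit (MvPolynomial.C (algebraMap D F c) : MvPolynomial s F) :=
      (isUnit_iff_ne_zero.2 hcF).map MvPolynomial.C
    refine (hu.dvd_mul_left).1 ?_
    exact ⟨_, h1⟩
  obtain ⟨j, -, hj⟩ := (dvd_prime_pow hprime N).1 hdv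
  obtain ⟨v, hv⟩ := hj.symm
  obtain ⟨r, hr, hvr⟩ := MvPolynomial.isUnit_iff_eq_C_of_isReduced.1 v.isUnit
  obtain ⟨l, hl⟩ := hG r j h (by rw [← hv, hvr, mul_comm])
  have hhl : h = MvPolynomial.C l * g ^ j := by
    apply hm
    rw [← hv, hvr, hl]; simp [hmC, mul_comm]
  have hl0 : l ≠ 0 := by
    rintro rfl
    rw [map_zero] at hl
    exact hr.ne_zero hl
  have hlc : l ∣ c := hdvd c l N (g ^ j * q) hl0 (by rw [hq, hhl, mul_assoc])
  have hle : l ∣ e := hdvd e l N' (g ^ j * q') hl0 (by rw [hq', hhl, mul_assoc])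
  have hlu : IsUnit l := hce hlc hle
  have htop : I.map (algebraMap D B) = ⊤ := by
    rw [hIh, Ideal.span_singleton_eq_top, hhl, map_mul, map_pow]
    exact (hlu.map (MvPolynomial.C.comp (RingHom.id D))).map (algebraMap (MvPolynomial s D) B) |>.mul (hgu.pow j)
  have haI : algebraMap D B a ∈ Ideal.span {algebraMap (MvPolynomial s D) B (MvPolynomial.C c)} := by
    have h1 : Ideal.span {a} * I ≤ Ideal.span {c} := by
      rw [Ideal.mul_le]
      intro x hx y hy
      obtain ⟨r, r', rfl⟩ := Ideal.mem_span_pair.1 hy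
      obtain ⟨x, rfl⟩ := Ideal.mem_span_singleton'.1 hx
      rw [Ideal.mem_span_singleton]
      obtain ⟨w, hw⟩ := ha
      exact ⟨x * a * r + x * r' * w, by linear_combination x * r' * hw⟩
    have h2 := Ideal.map_mono (f := algebraMap D B) h1
    rw [Ideal.map_mul, htop, Ideal.mul_top, Ideal.map_span, Ideal.map_span, Set.image_singleton,
      Set.image_singleton, hDB c] at h2
    exact h2 (Ideal.mem_span_singleton_self _)
  obtain ⟨N2, q2, hq2⟩ := hclear a _ haI
  exact hdvd a c N2 q2 hc hq2

lemma relprime_dvd {D : Type u} [CommRing D] [IsDomain D] [IsNoetherianRing D]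
    [IsIntegrallyClosed D]
    {n : ℕ} (hU : ∀ (M : Type u) [AddCommGroup M] [Module D M] [Module.Finite D M], UFR D n M)
    {c e a : D} (hc : c ≠ 0) (hce : IsRelPrime c e) (ha : c ∣ a * e) : c ∣ a :=
  relprime_dvd_aux (FractionRing D) hU hc hce ha

lemma ufm_of_regN {D : Type u} [CommRing D] [IsLocalRing D] [IsNoetherianRing D] [IsDomain D]
    [IsIntegrallyClosed D] {n : ℕ} (h : RegN D n) : UniqueFactorizationMonoid D := by
  have hU := (regN_main n D h).2
  refine ⟨fun {a} => ⟨fun hirr => ⟨hirr.ne_zero, hirr.not_isUnit, ?_⟩, Prime.irreducible⟩⟩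
  intro x y hxy
  by_cases hax : a ∣ y
  · exact Or.inr hax
  · left
    exact relprime_dvd hU hirr.ne_zero (hirr.isRelPrime_iff_not_dvd.2 hax) hxy
end Part5

section Part6
universe u
open IsLocalRing

lemma ufm_both {S : Type u} [CommRing S] [IsDomain S] [IsNoetherianRing S] [IsLocalRing S]
    [IsIntegrallyClosed S] {q : S} (hpS : Prime q)
    (hSmodp : IsIntegrallyClosed (S ⧸ Ideal.span {q}))
    (hreg : ∃ s : Finset S, Ideal.span (s : Set S) = IsLocalRing.maximalIdeal S ∧
      (s.card : WithBot ℕ∞) = ringKrullDim S)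
    (hmix : q ∈ IsLocalRing.maximalIdeal S ∧ q ∉ IsLocalRing.maximalIdeal S ^ 2) :
    UniqueFactorizationMonoid S ∧ UniqueFactorizationMonoid (S ⧸ Ideal.span {q}) := by
  obtain ⟨s, hs, hd⟩ := hreg
  have hR : RegN S s.card := ⟨⟨s, le_rfl, hs⟩, hd.le⟩
  refine ⟨ufm_of_regN hR, ?_⟩
  have hprime : (Ideal.span {q}).IsPrime := (Ideal.span_singleton_prime hpS.ne_zero).2 hpS
  have hdom : IsDomain (S ⧸ Ideal.span {q}) := Ideal.Quotient.isDomain _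
  have hloc : IsLocalRing (S ⧸ Ideal.span {q}) :=
    IsLocalRing.of_surjective' (Ideal.Quotient.mk _) Ideal.Quotient.mk_surjective
  obtain ⟨n, hn⟩ : ∃ n, s.card = n + 1 := by
    refine ⟨s.card - 1, ?_⟩
    rcases Nat.eq_zero_or_pos s.card with h | h
    · rw [Finset.card_eq_zero] at h
      subst h
      rw [Finset.coe_empty, Ideal.span_empty] at hs
      rw [← hs] at hmix
      exact absurd hmix.1 hpS.ne_zero
    · omega
  rw [hn] at hR
  exact ufm_of_regN (regN_quot hR hmix.1 hmix.2)

lemma dvd_of_relprime_pow {D : Type u} [CommRing D] [IsDomain D] [UniqueFactorizationMonoid D]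
    {c e s l : D} (hce : IsRelPrime c e) (n : ℕ) (h1 : s ∣ l * c ^ n) (h2 : s ∣ l * e ^ n) :
    s ∣ l := by
  by_cases hs0 : s = 0
  · subst hs0
    rw [zero_dvd_iff] at h1 h2 ⊢
    by_contra hl
    have hc := (mul_eq_zero.1 h1).resolve_left hl
    have he := (mul_eq_zero.1 h2).resolve_left hl
    have h0 : IsUnit (0 : D) := by
      have hc0 : c = 0 := by
        by_contra h; exact pow_ne_zero n h hc
      have he0 : e = 0 := by
        by_contra h; exact pow_ne_zero n h he
      rw [hc0, he0] at hce
      exact hce dvd_rfl dvd_rfl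
    exact not_isUnit_zero h0
  obtain ⟨s1, s2, hs1, hs2, rfl⟩ := exists_dvd_and_dvd_of_dvd_mul h1
  obtain ⟨l', rfl⟩ := hs1
  have hs10 : s1 ≠ 0 := left_ne_zero_of_mul hs0
  rw [mul_assoc] at h2
  have h3 := (mul_dvd_mul_iff_left hs10).1 h2
  have h4 : IsRelPrime s2 (e ^ n) := (hce.pow (m := n) (n := n)).of_dvd_left hs2
  exact mul_dvd_mul_left _ (h4.dvd_of_dvd_mul_right h3)

/-- Translation to `S`. -/
lemma dvd_mod {S : Type u} [CommRing S] {q : S} (hpS : Prime q)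
    (hU : UniqueFactorizationMonoid (S ⧸ Ideal.span {q})) {c e : S}
    (hce : IsRelPrime (Ideal.Quotient.mk (Ideal.span {q}) c) (Ideal.Quotient.mk (Ideal.span {q}) e))
    (n : ℕ) {s l y1 y2 z1 z2 : S} (h1 : s * y1 = q * z1 + l * c ^ n)
    (h2 : s * y2 = q * z2 + l * e ^ n) : ∃ t r, l = s * t + q * r := by
  have hprime : (Ideal.span {q}).IsPrime := (Ideal.span_singleton_prime hpS.ne_zero).2 hpS
  have hdom : IsDomain (S ⧸ Ideal.span {q}) := Ideal.Quotient.isDomain _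
  have hq : Ideal.Quotient.mk (Ideal.span {q}) q = 0 :=
    Ideal.Quotient.eq_zero_iff_mem.2 (Ideal.mem_span_singleton_self q)
  have h3 := dvd_of_relprime_pow (s := Ideal.Quotient.mk (Ideal.span {q}) s)
    (l := Ideal.Quotient.mk (Ideal.span {q}) l) hce n
    ⟨Ideal.Quotient.mk (Ideal.span {q}) y1, by
      have := congrArg (Ideal.Quotient.mk (Ideal.span {q})) h1
      simpa [hq] using this.symm⟩
    ⟨Ideal.Quotient.mk (Ideal.span {q}) y2, by
      have := congrArg (Ideal.Quotient.mk (Ideal.span {q})) h2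
      simpa [hq] using this.symm⟩
  obtain ⟨t, ht⟩ := h3
  obtain ⟨t, rfl⟩ := Ideal.Quotient.mk_surjective t
  rw [← map_mul, Ideal.Quotient.eq, Ideal.mem_span_singleton] at ht
  obtain ⟨r, hr⟩ := ht
  exact ⟨t, r, by linear_combination hr⟩
end Part6

section Part7
universe u
section GGs
variable {S K : Type*} [CommRing S] [Field K] [Algebra S K]

/-- The filtration. -/
def GG (S : Type*) {K : Type*} [CommRing S] [Field K] [Algebra S K] (p : ℕ) (u v : K) (n : ℤ) :
    Submodule S K :=
  Submodule.span S {x | ∃ (l : ℤ) (i j : ℕ), n ≤ i + j + p * l ∧ x = (p : K) ^ l * u ^ i * v ^ j}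

lemma GG_gen {p : ℕ} {u v : K} {n : ℤ} (l : ℤ) (i j : ℕ) (h : n ≤ i + j + p * l) :
    (p : K) ^ l * u ^ i * v ^ j ∈ GG S p u v n :=
  Submodule.subset_span ⟨l, i, j, h, rfl⟩

lemma GG_mul {p : ℕ} (hp : (p : K) ≠ 0) {u v : K} {m n : ℤ} {x y : K}
    (hx : x ∈ GG S p u v m) (hy : y ∈ GG S p u v n) : x * y ∈ GG S p u v (m + n) := by
  have h := Submodule.mul_mem_mul hx hy
  unfold GG at h
  rw [Submodule.span_mul_span] at h
  refine (Submodule.span_le.2 ?_) h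
  rintro _ ⟨_, ⟨l, i, j, h1, rfl⟩, _, ⟨l', i', j', h2, rfl⟩, rfl⟩
  have : (p : K) ^ l * u ^ i * v ^ j * ((p : K) ^ l' * u ^ i' * v ^ j') =
    (p : K) ^ (l + l') * u ^ (i + i') * v ^ (j + j') := by
    rw [zpow_add₀ hp]; ring
  simp only [SetLike.mem_coe]
  rw [this]
  apply GG_gen
  push_cast
  linarith

lemma GG_mono {p : ℕ} {u v : K} {m n : ℤ} (h : m ≤ n) : GG S p u v n ≤ GG S p u v m := by
  apply Submodule.span_le.2
  rintro _ ⟨l, i, j, h1, rfl⟩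
  exact GG_gen l i j (h.trans h1)

lemma GG_u {p : ℕ} {u v : K} : u ∈ GG S p u v 1 := by
  simpa using GG_gen (S := S) (p := p) (u := u) (v := v) (n := 1) 0 1 0 (by simp)
lemma GG_v {p : ℕ} {u v : K} : v ∈ GG S p u v 1 := by
  simpa using GG_gen (S := S) (p := p) (u := u) (v := v) (n := 1) 0 0 1 (by simp)
lemma GG_p {p : ℕ} {u v : K} : (p : K) ∈ GG S p u v p := by
  simpa using GG_gen (S := S) (p := p) (u := u) (v := v) (n := p) 1 0 0 (by simp)
lemma GG_pinv {p : ℕ} {u v : K} : (p : K)⁻¹ ∈ GG S p u v (-p) := by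
  simpa using GG_gen (S := S) (p := p) (u := u) (v := v) (n := -p) (-1) 0 0 (by simp)
lemma GG_one {p : ℕ} {u v : K} : (1 : K) ∈ GG S p u v 0 := by
  simpa using GG_gen (S := S) (p := p) (u := u) (v := v) (n := 0) 0 0 0 (by simp)
lemma GG_alg {p : ℕ} {u v : K} (s : S) : algebraMap S K s ∈ GG S p u v 0 := by
  rw [Algebra.algebraMap_eq_smul_one]
  exact Submodule.smul_mem _ _ GG_one

lemma GG_pow {p : ℕ} (hp : (p : K) ≠ 0) {u v : K} {m : ℤ} {x : K}
    (hx : x ∈ GG S p u v m) (k : ℕ) : x ^ k ∈ GG S p u v (k * m) := by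
  induction k with
  | zero => simpa using GG_one
  | succ k ih =>
    rw [pow_succ]
    have := GG_mul hp ih hx
    convert this using 2
    push_cast; ring

lemma GG_algmul {p : ℕ} {u v : K} {m : ℤ} {x : K} (s : S)
    (hx : x ∈ GG S p u v m) : algebraMap S K s * x ∈ GG S p u v m := by
  rw [← Algebra.smul_def]; exact Submodule.smul_mem _ _ hx

/-- The basis elements. -/
noncomputable def ee {K : Type*} [Field K] (p : ℕ) (u v : K) (k : Fin p × Fin p) : K :=
  if (k.1 : ℕ) + k.2 < p then u ^ (k.1 : ℕ) * v ^ (k.2 : ℕ)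
  else (p : K)⁻¹ * (u ^ (k.1 : ℕ) * v ^ (k.2 : ℕ))

lemma ee_mem {p : ℕ} {u v : K} (k : Fin p × Fin p) : ee p u v k ∈ GG S p u v 0 := by
  unfold ee
  split_ifs with h
  · simpa using GG_gen (S := S) (p := p) (u := u) (v := v) (n := 0) 0 k.1 k.2 (by positivity)
  · have := GG_gen (S := S) (p := p) (u := u) (v := v) (n := 0) (-1) k.1 k.2 (by push Not at h; zify at h; linarith)
    simpa [mul_assoc] using this

lemma GG_le_span {p : ℕ} (hp : (p : K) ≠ 0) {u v : K} (nu nv : ℕ → S)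
    (hu : u ^ p = p * ∑ m ∈ Finset.range p, algebraMap S K (nu m) * u ^ m)
    (hv : v ^ p = p * ∑ m ∈ Finset.range p, algebraMap S K (nv m) * v ^ m) :
    GG S p u v 0 ≤ Submodule.span S (Set.range (ee p u v)) := by
  have key : ∀ N : ℕ, ∀ i j : ℕ, i + j = N → ∀ l : ℤ, (0:ℤ) ≤ i + j + p * l →
      (p : K) ^ l * u ^ i * v ^ j ∈ Submodule.span S (Set.range (ee p u v)) := by
    intro N
    induction N using Nat.strong_induction_on with
    | _ N ih =>
    intro i j hij l hl
    by_cases hi : p ≤ i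
    · obtain ⟨i', rfl⟩ := Nat.exists_eq_add_of_le hi
      have : (p : K) ^ l * u ^ (p + i') * v ^ j =
        ∑ m ∈ Finset.range p, algebraMap S K (nu m) * ((p : K) ^ (l + 1) * u ^ (m + i') * v ^ j) := by
        rw [pow_add, hu, zpow_add₀ hp, Finset.mul_sum, Finset.sum_mul, Finset.mul_sum, Finset.sum_mul]
        refine Finset.sum_congr rfl fun m _ => ?_
        rw [zpow_one]; ring
      rw [this]
      refine Submodule.sum_mem _ fun m hm => ?_
      rw [← Algebra.smul_def]
      have hm' := Finset.mem_range.1 hm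
      refine Submodule.smul_mem _ _ (ih (m + i' + j) (by omega) _ _ rfl _ ?_)
      push_cast at hl ⊢
      linarith [Int.natCast_nonneg m]
    by_cases hj : p ≤ j
    · obtain ⟨j', rfl⟩ := Nat.exists_eq_add_of_le hj
      have : (p : K) ^ l * u ^ i * v ^ (p + j') =
        ∑ m ∈ Finset.range p, algebraMap S K (nv m) * ((p : K) ^ (l + 1) * u ^ i * v ^ (m + j')) := by
        rw [pow_add, hv, zpow_add₀ hp, Finset.mul_sum, Finset.sum_mul, Finset.mul_sum]
        refine Finset.sum_congr rfl fun m _ => ?_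
        rw [zpow_one]; ring
      rw [this]
      refine Submodule.sum_mem _ fun m hm => ?_
      rw [← Algebra.smul_def]
      have hm' := Finset.mem_range.1 hm
      refine Submodule.smul_mem _ _ (ih (i + (m + j')) (by omega) _ _ rfl _ ?_)
      push_cast at hl ⊢
      linarith [Int.natCast_nonneg m]
    push Not at hi hj
    have hee := Submodule.subset_span (R := S) (Set.mem_range_self (f := ee p u v) (⟨i, hi⟩, ⟨j, hj⟩))
    by_cases hlt : i + j < p
    · have hl0 : 0 ≤ l := by
        by_contra hneg
        have : (p : ℤ) * l ≤ p * (-1) := mul_le_mul_of_nonneg_left (by omega) (by positivity)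
        zify at hlt; linarith
      obtain ⟨l', rfl⟩ := Int.eq_ofNat_of_zero_le hl0
      have h2 := Submodule.smul_mem _ ((p : S) ^ l') hee
      convert h2 using 1
      simp [ee, hlt, Algebra.smul_def, mul_assoc]
    · have hl0 : 0 ≤ l + 1 := by
        by_contra hneg
        have : (p : ℤ) * l ≤ p * (-2) := mul_le_mul_of_nonneg_left (by omega) (by positivity)
        zify at hi hj; linarith
      obtain ⟨l', hl'⟩ := Int.eq_ofNat_of_zero_le hl0
      have hl2 : l = l' + (-1) := by omega
      have h2 := Submodule.smul_mem _ ((p : S) ^ l') hee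
      convert h2 using 1
      simp [ee, hlt, Algebra.smul_def, hl2, zpow_add₀ hp]
      ring
  apply Submodule.span_le.2
  rintro _ ⟨l, i, j, h1, rfl⟩
  exact key _ i j rfl l h1

lemma GG_zero_eq {p : ℕ} (hp : (p : K) ≠ 0) {u v : K} (nu nv : ℕ → S)
    (hu : u ^ p = p * ∑ m ∈ Finset.range p, algebraMap S K (nu m) * u ^ m)
    (hv : v ^ p = p * ∑ m ∈ Finset.range p, algebraMap S K (nv m) * v ^ m) :
    GG S p u v 0 = Submodule.span S (Set.range (ee p u v)) :=
  le_antisymm (GG_le_span hp nu nv hu hv) (by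
    apply Submodule.span_le.2; rintro _ ⟨k, rfl⟩; exact ee_mem k)

/-- GG 0 as a subalgebra. -/
noncomputable def EE (S : Type*) {K : Type*} [CommRing S] [Field K] [Algebra S K] {p : ℕ}
    (hp : (p : K) ≠ 0) (u v : K) : Subalgebra S K :=
  (GG S p u v 0).toSubalgebra GG_one (fun x y hx hy => by simpa using GG_mul hp hx hy)

lemma mem_EE {p : ℕ} {hp : (p : K) ≠ 0} {u v x : K} : x ∈ EE S hp u v ↔ x ∈ GG S p u v 0 := Iff.rfl

lemma adjoin_eq_EE {p : ℕ} (hp0 : 0 < p) (hp : (p : K) ≠ 0) {ω μ : K} (h1 h2 : S) (nu nv : ℕ → S)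
    (hu : (ω - algebraMap S K h1) ^ p = p * ∑ m ∈ Finset.range p, algebraMap S K (nu m) * (ω - algebraMap S K h1) ^ m)
    (hv : (μ - algebraMap S K h2) ^ p = p * ∑ m ∈ Finset.range p, algebraMap S K (nv m) * (μ - algebraMap S K h2) ^ m) :
    Algebra.adjoin S (({ω, μ} : Set K) ∪ {x : K | ∃ i : ℕ, 1 ≤ i ∧ i ≤ p - 1 ∧ x = (p : K)⁻¹ * ((ω - algebraMap S K h1) ^ i * (μ - algebraMap S K h2) ^ (p - i))})
    = EE S hp (ω - algebraMap S K h1) (μ - algebraMap S K h2) := by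
  apply le_antisymm
  · apply Algebra.adjoin_le
    rintro x ((rfl | rfl) | ⟨i, hi1, hi2, rfl⟩)
    · have h := Submodule.add_mem _ (GG_mono (S := S) (p := p) (u := x - algebraMap S K h1) (v := μ - algebraMap S K h2) (by norm_num : (0:ℤ) ≤ 1) GG_u) (GG_alg h1)
      simpa [mem_EE] using h
    · have h := Submodule.add_mem _ (GG_mono (S := S) (p := p) (u := ω - algebraMap S K h1) (v := x - algebraMap S K h2) (by norm_num : (0:ℤ) ≤ 1) GG_v) (GG_alg h2)
      simpa [mem_EE] using h
    · rw [SetLike.mem_coe, mem_EE]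
      have := GG_gen (S := S) (p := p) (u := ω - algebraMap S K h1) (v := μ - algebraMap S K h2) (n := 0) (-1) i (p - i) (by push_cast [show i ≤ p by omega]; linarith)
      simpa [mul_assoc] using this
  · intro x hx
    rw [mem_EE, GG_zero_eq hp nu nv hu hv] at hx
    set B := Algebra.adjoin S (({ω, μ} : Set K) ∪ {x : K | ∃ i : ℕ, 1 ≤ i ∧ i ≤ p - 1 ∧ x = (p : K)⁻¹ * ((ω - algebraMap S K h1) ^ i * (μ - algebraMap S K h2) ^ (p - i))}) with hB
    have hω : ω - algebraMap S K h1 ∈ B := B.sub_mem (Algebra.subset_adjoin (by simp)) (B.algebraMap_mem _)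
    have hμ : μ - algebraMap S K h2 ∈ B := B.sub_mem (Algebra.subset_adjoin (by simp)) (B.algebraMap_mem _)
    refine (Submodule.span_le (p := Subalgebra.toSubmodule B)).2 ?_ hx
    rintro _ ⟨k, rfl⟩
    obtain ⟨⟨i, hi⟩, ⟨j, hj⟩⟩ := k
    simp only [ee, SetLike.mem_coe, Subalgebra.mem_toSubmodule]
    split_ifs with h
    · exact B.mul_mem (B.pow_mem hω _) (B.pow_mem hμ _)
    · obtain ⟨j', rfl⟩ : ∃ j', j = (p - i) + j' := ⟨j - (p - i), by omega⟩
      rw [pow_add, ← mul_assoc, ← mul_assoc, mul_assoc (p : K)⁻¹]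
      refine B.mul_mem (Algebra.subset_adjoin (Or.inr ⟨i, by omega, by omega, rfl⟩)) (B.pow_mem hμ _)
end GGs

section span
variable {L K : Type*} [Field L] [Field K] [Algebra L K]

lemma span_mon_top {p : ℕ} (hp : 0 < p) {x y : K}
    (hx : x ^ p ∈ Submodule.span L (Set.range fun k : Fin p => x ^ (k : ℕ)))
    (hy : y ^ p ∈ Submodule.span L (Set.range fun k : Fin p => y ^ (k : ℕ)))
    (hgen : Algebra.adjoin L ({x, y} : Set K) = ⊤) :
    Submodule.span L (Set.range fun k : Fin p × Fin p => x ^ (k.1 : ℕ) * y ^ (k.2 : ℕ)) = ⊤ := by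
  set X := Submodule.span L (Set.range fun k : Fin p => x ^ (k : ℕ)) with hX
  set Y := Submodule.span L (Set.range fun k : Fin p => y ^ (k : ℕ)) with hY
  have hW : Submodule.span L (Set.range fun k : Fin p × Fin p => x ^ (k.1 : ℕ) * y ^ (k.2 : ℕ)) = X * Y := by
    rw [hX, hY, Submodule.span_mul_span]
    congr 1
    ext w
    simp [Set.mem_mul]
  rw [hW]
  have st : ∀ (t : K), t ^ p ∈ Submodule.span L (Set.range fun k : Fin p => t ^ (k : ℕ)) → ∀ w ∈ Submodule.span L (Set.range fun k : Fin p => t ^ (k : ℕ)), t * w ∈ Submodule.span L (Set.range fun k : Fin p => t ^ (k : ℕ)) := by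
    intro t ht w hw
    induction hw using Submodule.span_induction with
    | mem w hw =>
      obtain ⟨k, rfl⟩ := hw
      simp only
      rw [← pow_succ']
      by_cases hk : (k : ℕ) + 1 < p
      · exact Submodule.subset_span ⟨⟨k + 1, hk⟩, rfl⟩
      · have : (k : ℕ) + 1 = p := by omega
        rwa [this]
    | zero => simp
    | add a b _ _ ha hb => rw [mul_add]; exact Submodule.add_mem _ ha hb
    | smul c a _ ha => rw [mul_smul_comm]; exact Submodule.smul_mem _ _ ha
  have h1 : ∀ w ∈ X * Y, x * w ∈ X * Y := by
    intro w hw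
    induction hw using Submodule.mul_induction_on' with
    | mem_mul_mem m hm n hn => rw [← mul_assoc]; exact Submodule.mul_mem_mul (st x hx m hm) hn
    | add a _ b _ ha hb => rw [mul_add]; exact Submodule.add_mem _ ha hb
  have h2 : ∀ w ∈ X * Y, y * w ∈ X * Y := by
    intro w hw
    induction hw using Submodule.mul_induction_on' with
    | mem_mul_mem m hm n hn => rw [mul_left_comm]; exact Submodule.mul_mem_mul hm (st y hy n hn)
    | add a _ b _ ha hb => rw [mul_add]; exact Submodule.add_mem _ ha hb
  have one : (1 : K) ∈ X * Y := by
    have := Submodule.mul_mem_mul (M := X) (N := Y) (Submodule.subset_span ⟨⟨0, hp⟩, rfl⟩) (Submodule.subset_span ⟨⟨0, hp⟩, rfl⟩)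
    simpa using this
  rw [eq_top_iff]
  rintro w -
  have hw : w ∈ Algebra.adjoin L ({x, y} : Set K) := by rw [hgen]; trivial
  suffices ∀ r ∈ X * Y, w * r ∈ X * Y by simpa using this 1 one
  induction hw using Algebra.adjoin_induction with
  | mem a ha =>
    rcases ha with rfl | rfl
    · exact h1
    · exact h2
  | algebraMap r => intro s hs; rw [← Algebra.smul_def]; exact Submodule.smul_mem _ _ hs
  | add a b _ _ ha hb => intro r hr; rw [add_mul]; exact Submodule.add_mem _ (ha r hr) (hb r hr)
  | mul a b _ _ ha hb => intro r hr; rw [mul_assoc]; exact ha _ (hb r hr)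

lemma exists_basis_mon {p : ℕ} (hp : 0 < p) {x y : K}
    (hx : x ^ p ∈ Submodule.span L (Set.range fun k : Fin p => x ^ (k : ℕ)))
    (hy : y ^ p ∈ Submodule.span L (Set.range fun k : Fin p => y ^ (k : ℕ)))
    (hgen : Algebra.adjoin L ({x, y} : Set K) = ⊤) (hdeg : Module.finrank L K = p ^ 2) :
    ∃ b : Module.Basis (Fin p × Fin p) L K, ∀ k, b k = x ^ (k.1 : ℕ) * y ^ (k.2 : ℕ) := by
  have hs := span_mon_top hp hx hy hgen
  have hli := linearIndependent_of_top_le_span_of_card_eq_finrank hs.ge (by rw [hdeg]; simp [sq])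
  exact ⟨Module.Basis.mk hli hs.ge, fun k => by simp⟩

lemma exists_basis_ee {p : ℕ} (hp : 0 < p) (hpK : (p : K) ≠ 0) {x y : K}
    (hx : x ^ p ∈ Submodule.span L (Set.range fun k : Fin p => x ^ (k : ℕ)))
    (hy : y ^ p ∈ Submodule.span L (Set.range fun k : Fin p => y ^ (k : ℕ)))
    (hgen : Algebra.adjoin L ({x, y} : Set K) = ⊤) (hdeg : Module.finrank L K = p ^ 2) :
    ∃ b : Module.Basis (Fin p × Fin p) L K, ∀ k, b k = ee p x y k := by
  obtain ⟨b, hb⟩ := exists_basis_mon hp hx hy hgen hdeg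
  have hpL : (p : L) ≠ 0 := by
    intro h; apply hpK; rw [← map_natCast (algebraMap L K), h, map_zero]
  let w : Fin p × Fin p → Lˣ := fun k => if (k.1 : ℕ) + k.2 < p then 1 else (Units.mk0 (p : L) hpL)⁻¹
  refine ⟨b.unitsSMul w, fun k => ?_⟩
  rw [Module.Basis.unitsSMul_apply, hb]
  simp only [w, ee]
  split_ifs with h
  · simp
  · rw [Units.smul_def, Algebra.smul_def]; simp

end span

section coord
variable {S L K ι : Type*} [CommRing S] [Field L] [Field K] [Algebra L K] [Algebra S L] [Algebra S K] [IsScalarTower S L K] [Fintype ι]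

lemma mem_span_iff_coord (b : Module.Basis ι L K) {x : K} :
    x ∈ Submodule.span S (Set.range b) ↔ ∀ k, ∃ s : S, b.repr x k = algebraMap S L s := by
  classical
  constructor
  · intro hx
    induction hx using Submodule.span_induction with
    | mem w hw =>
      obtain ⟨k, rfl⟩ := hw
      intro k'
      by_cases h : k = k'
      · exact ⟨1, by simp [h]⟩
      · exact ⟨0, by simp [h]⟩
    | zero => exact fun k => ⟨0, by simp⟩
    | add a b _ _ ha hb =>
      intro k
      obtain ⟨s, hs⟩ := ha k
      obtain ⟨t, ht⟩ := hb k
      exact ⟨s + t, by simp [hs, ht]⟩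
    | smul c a _ ha =>
      intro k
      obtain ⟨s, hs⟩ := ha k
      refine ⟨c * s, ?_⟩
      rw [← algebraMap_smul L c a, map_smul]
      simp [hs, Algebra.smul_def]
  · intro h
    choose s hs using h
    rw [← b.sum_repr x]
    refine Submodule.sum_mem _ fun k _ => ?_
    rw [hs, algebraMap_smul]
    exact Submodule.smul_mem _ _ (Submodule.subset_span ⟨k, rfl⟩)
end coord
end Part7

section Part8
universe u
lemma binom_rel {S K : Type*} [CommRing S] [Field K] [Algebra S K] {p : ℕ} (hp : p.Prime)
    {h a f : S} {ω : K} (hf : f = h ^ p + a * (p : S)) (hω : ω ^ p = algebraMap S K f) :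
    ∃ nu : ℕ → S, nu 0 = a ∧ nu 1 = - h ^ (p - 1) ∧
    (ω - algebraMap S K h) ^ p = p * ∑ m ∈ Finset.range p, algebraMap S K (nu m) * (ω - algebraMap S K h) ^ m := by
  have hp1 := hp.one_lt
  set u := ω - algebraMap S K h with hu
  have hb : ∀ m, ∃ k : ℕ, m ≠ 0 → m < p → p.choose m = p * k := by
    intro m
    by_cases hm : m ≠ 0 ∧ m < p
    · obtain ⟨k, hk⟩ := hp.dvd_choose_self hm.1 hm.2
      exact ⟨k, fun _ _ => hk⟩
    · exact ⟨0, fun h1 h2 => absurd ⟨h1, h2⟩ hm⟩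
  choose k hk using hb
  have hk1 : k 1 = 1 := by
    have := hk 1 one_ne_zero hp1
    rw [Nat.choose_one_right] at this
    nlinarith [hp.pos]
  refine ⟨fun m => if m = 0 then a else -(k m : S) * h ^ (p - m), by simp, by simp [hk1], ?_⟩
  have h1 : (u + algebraMap S K h) ^ p = algebraMap S K f := by rw [hu, sub_add_cancel, hω]
  rw [add_pow, Finset.sum_range_succ, hf] at h1
  obtain ⟨q, rfl⟩ : ∃ q, p = q + 1 := ⟨p - 1, by omega⟩
  rw [Finset.sum_range_succ'] at h1 ⊢
  have h2 : ∀ m ∈ Finset.range q, u ^ (m + 1) * algebraMap S K h ^ (q + 1 - (m + 1)) * ((q+1).choose (m + 1) : K) =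
    (q + 1 : ℕ) * (algebraMap S K ((k (m+1) : S) * h ^ (q + 1 - (m+1))) * u ^ (m+1)) := by
    intro m hm
    rw [hk (m + 1) (by simp) (by simpa using hm)]
    push_cast [map_mul, map_pow]
    ring
  rw [Finset.sum_congr rfl h2, ← Finset.mul_sum] at h1
  simp only [map_add, map_mul, map_pow, map_natCast] at h1
  simp at h1 ⊢
  linear_combination h1

lemma split_sum {S K : Type*} [CommRing S] [Field K] [Algebra S K] {p : ℕ} (hp : 2 ≤ p)
    (nu : ℕ → S) (u : K) : ∑ m ∈ Finset.range p, algebraMap S K (nu m) * u ^ m =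
      algebraMap S K (nu 0) + algebraMap S K (nu 1) * u +
      u ^ 2 * ∑ m ∈ Finset.range (p - 2), algebraMap S K (nu (m + 2)) * u ^ m := by
  obtain ⟨q, rfl⟩ : ∃ q, p = q + 2 := ⟨p - 2, by omega⟩
  rw [Finset.sum_range_succ', Finset.sum_range_succ', Finset.mul_sum]
  simp only [Nat.add_sub_cancel]
  have : ∀ m ∈ Finset.range q, algebraMap S K (nu (m + 1 + 1)) * u ^ (m + 1 + 1) =
    u ^ 2 * (algebraMap S K (nu (m + 2)) * u ^ m) := fun m _ => by ring
  rw [Finset.sum_congr rfl this]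
  simp; ring

lemma dvd_of_quad_aux {C : Type*} [CommRing C] [IsDomain C] [IsIntegrallyClosed C] (F : Type*) [Field F] [Algebra C F] [IsFractionRing C F] {x y s d : C}
    (hy : y ≠ 0) (h : x ^ 2 + s * x * y = d * y ^ 2) : y ∣ x := by
  have hyF : algebraMap C F y ≠ 0 := by
    intro h0; exact hy (IsFractionRing.injective C F (by simpa using h0))
  have hint : IsIntegral C (algebraMap C F x / algebraMap C F y) := by
    refine ⟨Polynomial.X ^ 2 + (Polynomial.C s * Polynomial.X + Polynomial.C (-d)), ?_, ?_⟩
    · apply Polynomial.monic_X_pow_add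
      exact lt_of_le_of_lt Polynomial.degree_linear_le (by norm_num)
    · have h' := congrArg (algebraMap C F) h
      simp only [map_add, map_mul, map_pow] at h'
      simp
      field_simp
      linear_combination h'
  obtain ⟨t, ht⟩ := IsIntegrallyClosed.isIntegral_iff.1 hint
  refine ⟨t, IsFractionRing.injective C F ?_⟩
  rw [map_mul, ht]
  field_simp

lemma dvd_of_quad {C : Type*} [CommRing C] [IsDomain C] [IsIntegrallyClosed C] {x y s d : C}
    (hy : y ≠ 0) (h : x ^ 2 + s * x * y = d * y ^ 2) : y ∣ x := dvd_of_quad_aux (FractionRing C) hy h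

lemma pow_div_mem {S K : Type*} [CommRing S] [Field K] [Algebra S K] {p : ℕ} (hp : 2 ≤ p)
    (hpK : (p : K) ≠ 0) {h a : S} {ω : K} (nu : ℕ → S) 
    (hic : IsIntegrallyClosed (Algebra.adjoin S ({ω} : Set K)))
    (h0 : nu 0 = p * a) (hu0 : ω - algebraMap S K h ≠ 0)
    (hu : (ω - algebraMap S K h) ^ p = p * ∑ m ∈ Finset.range p, algebraMap S K (nu m) * (ω - algebraMap S K h) ^ m) :
    ∃ y ∈ Algebra.adjoin S ({ω} : Set K), (ω - algebraMap S K h) ^ (p - 1) = p * y := by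
  set C := Algebra.adjoin S ({ω} : Set K) with hC
  set u : C := ⟨ω, Algebra.subset_adjoin rfl⟩ - algebraMap S C h with hudef
  have huc : (u : K) = ω - algebraMap S K h := rfl
  rw [← huc] at hu hu0 ⊢
  rw [split_sum hp, h0] at hu
  obtain ⟨q, rfl⟩ : ∃ q, p = q + 2 := ⟨p - 2, by omega⟩
  simp only [Nat.add_sub_cancel] at hu
  set s : C := -(algebraMap S C (nu 1) + u * ∑ m ∈ Finset.range q, algebraMap S C (nu (m + 2)) * u ^ m) with hs
  have hsc : (s : K) = -(algebraMap S K (nu 1) + u * ∑ m ∈ Finset.range q, algebraMap S K (nu (m + 2)) * (u : K) ^ m) := by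
    rw [hs]; push_cast; rfl
  have hrel : (u : K) ^ (q + 2) = (q + 2 : ℕ) * ((q + 2 : ℕ) * algebraMap S K a - u * s) := by
    rw [hu, hsc]; simp only [map_mul, map_natCast]; ring
  have e2 : (((q + 2 : ℕ) : C) : K) = ((q + 2 : ℕ) : K) := map_natCast C.val _
  have : ((q + 2 : ℕ) : C) ∣ u ^ (q + 1) := by
    refine dvd_of_quad (s := s) (d := algebraMap S C a * u ^ q) (fun h => hpK ?_) ?_
    · rw [← e2, h]; rfl
    · apply Subtype.ext
      apply mul_left_cancel₀ hu0
      have e1 : ((algebraMap S C a : C) : K) = algebraMap S K a := rfl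
      simp only [Subalgebra.coe_add, Subalgebra.coe_mul, Subalgebra.coe_pow, e1, e2]
      linear_combination (u : K) ^ (q + 1) * hrel
  obtain ⟨y, hy⟩ := this
  refine ⟨y, y.2, ?_⟩
  have := congrArg Subtype.val hy
  rw [Subalgebra.coe_mul, e2] at this
  exact this

lemma nt_facts {S : Type*} [CommRing S] [IsDomain S] {p : ℕ} (hp : p.Prime) (hpS : Prime (p : S))
    {f g h₁ h₂ a b : S} (hf : f = h₁ ^ p + a * (p : S)) (hg : g = h₂ ^ p + b * (p : S))
    (hfg1 : ∃ x y : S, f * g = x ^ p + y * (p : S) ^ 2)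
    (z c e : S) (hz : z ∉ Ideal.span {((p : ℕ) : S)})
    (hce : IsRelPrime (Ideal.Quotient.mk (Ideal.span {((p : ℕ) : S)}) c)
      (Ideal.Quotient.mk (Ideal.span {((p : ℕ) : S)}) e))
    (hc1 : h₁ - z * c ∈ Ideal.span {((p : ℕ) : S)})
    (hc2 : h₂ - z * e ∈ Ideal.span {((p : ℕ) : S)}) (ha : ¬ (p : S) ∣ a) (hb : ¬ (p : S) ∣ b) :
    ¬ (p : S) ∣ c ∧ ¬ (p : S) ∣ e ∧ (p : S) ∣ a * e ^ p + b * c ^ p := by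
  rw [Ideal.mem_span_singleton] at hz hc1 hc2
  have hdv : ∀ x y : S, (p : S) ∣ x - y → (p : S) ^ 2 ∣ x ^ p - y ^ p := by
    intro x y h
    have := dvd_sub_pow_of_dvd_sub h 1
    simpa using this
  have hdv1 : ∀ x y : S, (p : S) ∣ x - y → (p : S) ∣ x ^ p - y ^ p := fun x y h =>
    (dvd_pow_self _ two_ne_zero).trans (hdv x y h)
  have hmain : (p : S) ∣ a * h₂ ^ p + b * h₁ ^ p := by
    obtain ⟨x, y, hxy⟩ := hfg1
    have h1 : (p : S) ∣ x ^ p - (h₁ * h₂) ^ p := by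
      refine ⟨a * h₂ ^ p + b * h₁ ^ p + p * a * b - y * p, ?_⟩
      rw [hf, hg] at hxy
      rw [mul_pow]
      linear_combination -hxy
    have h2 : (p : S) ∣ x - h₁ * h₂ := by
      apply hpS.dvd_of_dvd_pow (n := p)
      obtain ⟨r, hr⟩ := exists_add_pow_prime_eq hp (x - h₁ * h₂) (h₁ * h₂)
      rw [sub_add_cancel] at hr
      obtain ⟨k, hk⟩ := h1
      exact ⟨k - (x - h₁ * h₂) * (h₁ * h₂) * r, by linear_combination hk - hr⟩
    obtain ⟨k, hk⟩ := hdv _ _ h2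
    refine ⟨k + y - a * b, mul_left_cancel₀ hpS.ne_zero ?_⟩
    rw [hf, hg] at hxy
    rw [mul_pow] at hk
    linear_combination hxy + hk
  have hh12 : ¬ ((p : S) ∣ h₁ ∧ (p : S) ∣ h₂) := by
    rintro ⟨h1, h2⟩
    have hc : (p : S) ∣ c := by
      have : (p : S) ∣ z * c := by simpa using dvd_sub h1 hc1
      exact (hpS.dvd_or_dvd this).resolve_left hz
    have he : (p : S) ∣ e := by
      have : (p : S) ∣ z * e := by simpa using dvd_sub h2 hc2
      exact (hpS.dvd_or_dvd this).resolve_left hz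
    have hc' : Ideal.Quotient.mk (Ideal.span {((p : ℕ) : S)}) c = 0 :=
      Ideal.Quotient.eq_zero_iff_mem.2 (Ideal.mem_span_singleton.2 hc)
    have he' : Ideal.Quotient.mk (Ideal.span {((p : ℕ) : S)}) e = 0 :=
      Ideal.Quotient.eq_zero_iff_mem.2 (Ideal.mem_span_singleton.2 he)
    rw [hc', he'] at hce
    have hu := hce (dvd_refl 0) (dvd_refl 0)
    have : Subsingleton (S ⧸ Ideal.span {((p : ℕ) : S)}) := isUnit_zero_iff.1 hu |> fun h => subsingleton_of_zero_eq_one h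
    rw [Ideal.Quotient.subsingleton_iff, Ideal.span_singleton_eq_top] at this
    exact hpS.not_isUnit this
  have hh1 : ¬ (p : S) ∣ h₁ := by
    intro h
    have : (p : S) ∣ a * h₂ ^ p := by
      have := dvd_sub hmain ((dvd_pow h hp.ne_zero).mul_left b)
      simpa using this
    exact hh12 ⟨h, hpS.dvd_of_dvd_pow ((hpS.dvd_or_dvd this).resolve_left ha)⟩
  have hh2 : ¬ (p : S) ∣ h₂ := by
    intro h
    have : (p : S) ∣ b * h₁ ^ p := by
      have := dvd_sub hmain ((dvd_pow h hp.ne_zero).mul_left a)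
      simpa using this
    exact hh12 ⟨hpS.dvd_of_dvd_pow ((hpS.dvd_or_dvd this).resolve_left hb), h⟩
  refine ⟨fun h => hh1 ?_, fun h => hh2 ?_, ?_⟩
  · simpa using dvd_add hc1 (h.mul_left z)
  · simpa using dvd_add hc2 (h.mul_left z)
  · have h1 := hdv1 _ _ hc1
    have h2 := hdv1 _ _ hc2
    have h3 : (p : S) ∣ z ^ p * (a * e ^ p + b * c ^ p) := by
      have := dvd_sub hmain (dvd_add (h2.mul_left a) (h1.mul_left b))
      convert this using 1
      ring
    exact (hpS.dvd_or_dvd h3).resolve_left fun h => hz (hpS.dvd_of_dvd_pow h)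
end Part8

section Part9
universe u
section tau
variable {S K : Type*} [CommRing S] [Field K] [Algebra S K]

lemma GG_sum_pow {p : ℕ} (hpK : (p : K) ≠ 0) {u v x : K} (hx : x ∈ GG S p u v 0) (n : ℕ) (q : ℕ → S) :
    ∑ m ∈ Finset.range n, algebraMap S K (q m) * x ^ m ∈ GG S p u v 0 := by
  refine Submodule.sum_mem _ fun m _ => GG_algmul _ ?_
  simpa using GG_pow hpK hx m

lemma tau_rel {p : ℕ} (hp : p.Prime) (hpK : (p : K) ≠ 0) {u v : K} (nu nv : ℕ → S)
    {h₁ h₂ a b z c e : S} (hnu0 : nu 0 = a) (hnu1 : nu 1 = - h₁ ^ (p - 1))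
    (hnv0 : nv 0 = b) (hnv1 : nv 1 = - h₂ ^ (p - 1))
    (hu : u ^ p = p * ∑ m ∈ Finset.range p, algebraMap S K (nu m) * u ^ m)
    (hv : v ^ p = p * ∑ m ∈ Finset.range p, algebraMap S K (nv m) * v ^ m)
    (hc1 : (p : S) ∣ h₁ - z * c) (hc2 : (p : S) ∣ h₂ - z * e) (hab : (p : S) ∣ a * e ^ p + b * c ^ p) :
    ∃ w ∈ GG S p u v 2, (algebraMap S K c * v + algebraMap S K e * u) ^ p =
      p * (algebraMap S K (-(z ^ (p - 1) * (c ^ (p - 1) * e ^ (p - 1)))) * (algebraMap S K c * v + algebraMap S K e * u) + w) := by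
  have h2p := hp.two_le
  rw [split_sum h2p, hnu0, hnu1] at hu
  rw [split_sum h2p, hnv0, hnv1] at hv
  obtain ⟨k0, hk0⟩ := hab
  obtain ⟨k1, hk1⟩ := hc1.trans (sub_dvd_pow_sub_pow h₁ (z * c) (p - 1))
  obtain ⟨k2, hk2⟩ := hc2.trans (sub_dvd_pow_sub_pow h₂ (z * e) (p - 1))
  set qu := ∑ m ∈ Finset.range (p - 2), algebraMap S K (nu (m + 2)) * u ^ m with hqu
  set qv := ∑ m ∈ Finset.range (p - 2), algebraMap S K (nv (m + 2)) * v ^ m with hqv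
  have u0 : u ∈ GG S p u v 0 := GG_mono (by norm_num) GG_u
  have v0 : v ∈ GG S p u v 0 := GG_mono (by norm_num) GG_v
  have hqu0 : qu ∈ GG S p u v 0 := GG_sum_pow hpK u0 _ fun m => nu (m + 2)
  have hqv0 : qv ∈ GG S p u v 0 := GG_sum_pow hpK v0 _ fun m => nv (m + 2)
  have hp2 : (p : K) ∈ GG S p u v 2 := GG_mono (by exact_mod_cast h2p) GG_p
  set x := algebraMap S K c * v with hx
  set y := algebraMap S K e * u with hy
  have x1 : x ∈ GG S p u v 1 := GG_algmul _ GG_v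
  have y1 : y ∈ GG S p u v 1 := GG_algmul _ GG_u
  have x0 : x ∈ GG S p u v 0 := GG_mono (by norm_num) x1
  have y0 : y ∈ GG S p u v 0 := GG_mono (by norm_num) y1
  set sg := ∑ k ∈ Finset.Ioo 0 p, x ^ (k - 1) * y ^ (p - k - 1) * ((p.choose k / p : ℕ) : K) with hsg
  have hsg0 : sg ∈ GG S p u v 0 := by
    refine Submodule.sum_mem _ fun k _ => ?_
    have h1 := GG_mul hpK (GG_mul hpK (GG_pow hpK x0 (k - 1)) (GG_pow hpK y0 (p - k - 1))) (GG_alg (p := p) (u := u) (v := v) ((p.choose k / p : ℕ) : S))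
    simpa using h1
  have xy2 : x * y ∈ GG S p u v 2 := by
    have := GG_mul hpK x1 y1
    rwa [one_add_one_eq_two] at this
  have hexp : (x + y) ^ p = x ^ p + y ^ p + p * (x * y * sg) := by
    rw [add_pow_prime_eq hp, hsg]; ring
  clear_value sg x y qu qv
  refine ⟨p * algebraMap S K k0 - p * algebraMap S K (k2 * c ^ p) * v - p * algebraMap S K (k1 * e ^ p) * u +
    algebraMap S K (c ^ p) * (v ^ 2 * qv) + algebraMap S K (e ^ p) * (u ^ 2 * qu) + x * y * sg, ?_, ?_⟩
  · have sq : ∀ t ∈ GG S p u v 1, t ^ 2 ∈ GG S p u v 2 := fun t ht => by simpa using GG_pow hpK ht 2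
    have m0 : ∀ {t r : K}, t ∈ GG S p u v 2 → r ∈ GG S p u v 0 → t * r ∈ GG S p u v 2 := by
      intro t r ht hr; simpa using GG_mul hpK ht hr
    refine Submodule.add_mem _ (Submodule.add_mem _ (Submodule.add_mem _ (Submodule.sub_mem _ (Submodule.sub_mem _ ?_ ?_) ?_) ?_) ?_) ?_
    · exact m0 hp2 (GG_alg _)
    · exact m0 (m0 hp2 (GG_alg _)) v0
    · exact m0 (m0 hp2 (GG_alg _)) u0
    · exact GG_algmul _ (m0 (sq _ GG_v) hqv0)
    · exact GG_algmul _ (m0 (sq _ GG_u) hqu0)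
    · exact m0 xy2 hsg0
  · rw [hexp, hx, hy, mul_pow, mul_pow, hu, hv, ← hx, ← hy]
    have hk0' := congrArg (algebraMap S K) hk0
    have hk1' := congrArg (algebraMap S K) hk1
    have hk2' := congrArg (algebraMap S K) hk2
    obtain ⟨q, rfl⟩ : ∃ q, p = q + 1 := ⟨p - 1, by omega⟩
    simp only [Nat.add_sub_cancel] at *
    simp only [map_add, map_sub, map_mul, map_pow, map_neg, map_natCast, mul_pow] at hk0' hk1' hk2' ⊢
    rw [hx, hy]
    linear_combination (((q + 1 : ℕ) : K)) * hk0' - ((q + 1 : ℕ) : K) * v * (algebraMap S K c) ^ (q + 1) * hk2'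
       - ((q + 1 : ℕ) : K) * u * (algebraMap S K e) ^ (q + 1) * hk1'

lemma eps_sq {p : ℕ} (hp : 2 ≤ p) (hpK : (p : K) ≠ 0) {u v τ w α : K} (hτ : τ ∈ GG S p u v 1)
    (hw : w ∈ GG S p u v 2) (h : τ ^ p = p * (α * τ + w)) :
    ∃ δ ∈ GG S p u v 0, ((p : K)⁻¹ * τ ^ (p - 1)) ^ 2 = α * ((p : K)⁻¹ * τ ^ (p - 1)) + δ := by
  refine ⟨(p : K)⁻¹ * (τ ^ (p - 2) * w), ?_, ?_⟩
  · have := GG_mul hpK (GG_pinv (S := S) (p := p) (u := u) (v := v)) (GG_mul hpK (GG_pow hpK hτ (p - 2)) hw)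
    convert this using 2
    push_cast [hp]; ring
  · obtain ⟨q, rfl⟩ : ∃ q, p = q + 2 := ⟨p - 2, by omega⟩
    simp only [Nat.add_sub_cancel]
    have e1 : q + 2 - 1 = q + 1 := by omega
    rw [e1]
    field_simp
    linear_combination τ ^ q * h

lemma isIntegral_of_quad {x α δ : K} (hα : IsIntegral S α) (hδ : IsIntegral S δ)
    (h : x ^ 2 = α * x + δ) : IsIntegral S x := by
  let A := integralClosure S K
  have : IsIntegral A x := by
    refine ⟨Polynomial.X ^ 2 + (Polynomial.C (-⟨α, hα⟩ : A) * Polynomial.X + Polynomial.C (-⟨δ, hδ⟩ : A)), ?_, ?_⟩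
    · apply Polynomial.monic_X_pow_add
      exact lt_of_le_of_lt Polynomial.degree_linear_le (by norm_num)
    · have e1 : algebraMap A K ⟨α, hα⟩ = α := rfl
      have e2 : algebraMap A K ⟨δ, hδ⟩ = δ := rfl
      simp [e1, e2]
      linear_combination h
  exact isIntegral_trans x this

lemma isIntegral_GG {p : ℕ} (hp : (p : K) ≠ 0) {u v : K} (nu nv : ℕ → S)
    (hu : u ^ p = p * ∑ m ∈ Finset.range p, algebraMap S K (nu m) * u ^ m)
    (hv : v ^ p = p * ∑ m ∈ Finset.range p, algebraMap S K (nv m) * v ^ m)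
    {x : K} (hx : x ∈ GG S p u v 0) : IsIntegral S x := by
  refine IsIntegral.of_mem_of_fg (EE S hp u v) ?_ x (mem_EE.2 hx)
  have : Subalgebra.toSubmodule (EE S hp u v) = GG S p u v 0 := by ext; rfl
  rw [this, GG_zero_eq hp nu nv hu hv]
  exact Submodule.fg_span (Set.finite_range _)

lemma choose_pred {p : ℕ} (hp : p.Prime) (k : ℕ) (hk : k < p) : (p : ℤ) ∣ ((p - 1).choose k : ℤ) - (-1) ^ k := by
  induction k with
  | zero => simp
  | succ k ih =>
    obtain ⟨d, hd⟩ := ih (by omega)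
    obtain ⟨t, ht⟩ := hp.dvd_choose_self (Nat.succ_ne_zero k) hk
    obtain ⟨q, rfl⟩ : ∃ q, p = q + 1 := ⟨p - 1, by omega⟩
    rw [Nat.succ_eq_add_one, Nat.choose_succ_succ] at ht
    simp only [Nat.add_sub_cancel] at *
    refine ⟨t - d, ?_⟩
    zify at ht
    push_cast at *
    rw [pow_succ]
    linear_combination ht - hd

/-- p times epsilon -/
noncomputable def Pol (p : ℕ) (u v : K) (c e : S) : K :=
  ∑ i ∈ Finset.Icc 1 p, (-1 : K) ^ i * algebraMap S K (c ^ (p - i) * e ^ (i - 1)) * v ^ (p - i) * u ^ (i - 1)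

lemma Pol_eq (p : ℕ) (u v : K) (c e : S) : Pol p u v c e =
    ∑ k ∈ Finset.range p, algebraMap S K ((-1) ^ (k + 1) * (c ^ (p - 1 - k) * e ^ k)) * (u ^ k * v ^ (p - 1 - k)) := by
  unfold Pol
  rw [← Finset.Ico_add_one_right_eq_Icc, Finset.sum_Ico_eq_sum_range]
  simp only [Nat.add_sub_cancel]
  refine Finset.sum_congr rfl fun k _ => ?_
  rw [show p - (1 + k) = p - 1 - k by omega, show 1 + k - 1 = k by omega, add_comm 1 k]
  simp only [map_mul, map_pow, map_neg, map_one]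
  ring

lemma Pol_mem {p : ℕ} (hpK : (p : K) ≠ 0) (u v : K) (c e : S) : Pol p u v c e ∈ GG S p u v 0 := by
  rw [Pol_eq]
  refine Submodule.sum_mem _ fun k _ => GG_algmul _ ?_
  have := GG_gen (S := S) (p := p) (u := u) (v := v) (n := 0) 0 k (p - 1 - k) (by positivity)
  simpa using this

lemma Pol_tau {p : ℕ} (hp : p.Prime) (hpK : (p : K) ≠ 0) (u v : K) (c e : S) :
    ∃ α ∈ GG S p u v 0, Pol p u v c e = - (algebraMap S K c * v + algebraMap S K e * u) ^ (p - 1) + p * α := by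
  have hd : ∀ k, ∃ d : ℤ, k < p → ((p - 1).choose k : ℤ) - (-1) ^ k = p * d := fun k => by
    by_cases hk : k < p
    · obtain ⟨d, hd⟩ := choose_pred hp k hk
      exact ⟨d, fun _ => hd⟩
    · exact ⟨0, fun h => absurd h hk⟩
  choose d hd using hd
  refine ⟨∑ k ∈ Finset.range p, algebraMap S K ((d k : S) * (c ^ (p - 1 - k) * e ^ k)) * (u ^ k * v ^ (p - 1 - k)), ?_, ?_⟩
  · refine Submodule.sum_mem _ fun k _ => GG_algmul _ ?_
    have := GG_gen (S := S) (p := p) (u := u) (v := v) (n := 0) 0 k (p - 1 - k) (by positivity)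
    simpa using this
  · have h1 : p - 1 + 1 = p := by have := hp.pos; omega
    rw [Pol_eq, add_comm (algebraMap S K c * v), add_pow, h1, Finset.mul_sum, ← Finset.sum_neg_distrib, ← Finset.sum_add_distrib]
    refine Finset.sum_congr rfl fun k hk => ?_
    have h2 := congrArg (Int.cast (R := K)) (hd k (Finset.mem_range.1 hk))
    push_cast at h2
    simp only [map_mul, map_pow, map_neg, map_one, map_intCast, mul_pow]
    rw [pow_succ]
    linear_combination (algebraMap S K e ^ k * u ^ k * algebraMap S K c ^ (p - 1 - k) * v ^ (p - 1 - k)) * h2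

lemma Pol_repr {L : Type*} [Field L] [Algebra L K] [Algebra S L] [IsScalarTower S L K] {p : ℕ} (u v : K) (c e : S)
    (b : Module.Basis (Fin p × Fin p) L K) (hb : ∀ k, b k = ee p u v k) (i : Fin p) :
    b.repr (Pol p u v c e) (i, i.rev) = algebraMap S L ((-1) ^ ((i : ℕ) + 1) * (c ^ (p - 1 - i) * e ^ (i : ℕ))) := by
  classical
  have : Pol p u v c e = ∑ k : Fin p, algebraMap S L ((-1) ^ ((k : ℕ) + 1) * (c ^ (p - 1 - k) * e ^ (k : ℕ))) • b (k, k.rev) := by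
    rw [Pol_eq, Finset.sum_range]
    refine Finset.sum_congr rfl fun k _ => ?_
    have : ee p u v (k, k.rev) = u ^ (k : ℕ) * v ^ (p - 1 - k) := by
      have h1 : (k.rev : ℕ) = p - 1 - k := by rw [Fin.val_rev]; omega
      simp only [ee, h1]
      rw [if_pos (by omega)]
    rw [hb, this, Algebra.smul_def, ← IsScalarTower.algebraMap_apply]
  rw [this, map_sum, Finsupp.finsetSum_apply, Finset.sum_eq_single i]
  · simp
  · intro j _ hj
    rw [map_smul, Finsupp.smul_apply, Module.Basis.repr_self, Finsupp.single_eq_of_ne]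
    · simp
    · simpa using fun h => (hj h.symm)
  · simp

end tau
end Part9

section Part10
universe u
section traceD
variable {S L K : Type*} [CommRing S] [Field L] [Field K] [Algebra L K] [Algebra S L] [Algebra S K] [IsScalarTower S L K]

lemma trace_mon {p : ℕ} (hp : 0 < p) {x y : K} {f g : L} (hx : x ^ p = algebraMap L K f) (hy : y ^ p = algebraMap L K g)
    (b : Module.Basis (Fin p × Fin p) L K) (hb : ∀ k, b k = x ^ (k.1 : ℕ) * y ^ (k.2 : ℕ))
    (A B : ℕ) (h : ¬ (p ∣ A ∧ p ∣ B)) : Algebra.trace L K (x ^ A * y ^ B) = 0 := by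
  classical
  rw [Algebra.trace_eq_matrix_trace b, Matrix.trace]
  refine Finset.sum_eq_zero fun m _ => ?_
  rw [Matrix.diag_apply, Algebra.leftMulMatrix_eq_repr_mul]
  have e : x ^ A * y ^ B * b m = (f ^ ((A + m.1) / p) * g ^ ((B + m.2) / p)) •
      b (⟨(A + m.1) % p, Nat.mod_lt _ hp⟩, ⟨(B + m.2) % p, Nat.mod_lt _ hp⟩) := by
    rw [hb, hb, Algebra.smul_def, map_mul, map_pow, map_pow, ← hx, ← hy, ← pow_mul, ← pow_mul]
    simp only
    calc _ = x ^ (A + m.1) * y ^ (B + m.2) := by ring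
      _ = x ^ (p * ((A + m.1) / p) + (A + m.1) % p) * y ^ (p * ((B + m.2) / p) + (B + m.2) % p) := by
        rw [Nat.div_add_mod, Nat.div_add_mod]
      _ = _ := by ring
  rw [e, map_smul, Finsupp.smul_apply, Module.Basis.repr_self, Finsupp.single_eq_of_ne, smul_zero]
  intro hm
  apply h
  have h1 := congrArg (fun t => (t.1 : ℕ)) hm
  have h2 := congrArg (fun t => (t.2 : ℕ)) hm
  simp only at h1 h2
  have key : ∀ (A m : ℕ), m < p → m = (A + m) % p → p ∣ A := by
    intro A m hm h
    have : A + m ≡ 0 + m [MOD p] := by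
      rw [Nat.ModEq, ← h, zero_add, Nat.mod_eq_of_lt hm]
    exact (Nat.modEq_zero_iff_dvd).1 (Nat.ModEq.add_right_cancel' m this)
  exact ⟨key A m.1 m.1.2 h1, key B m.2 m.2.2 h2⟩

lemma trace_coord {p : ℕ} (hp : 0 < p) {x y : K} {f g : L} (hx : x ^ p = algebraMap L K f) (hy : y ^ p = algebraMap L K g)
    (hx0 : x ≠ 0) (hy0 : y ≠ 0) (hdeg : Module.finrank L K = p ^ 2)
    (b : Module.Basis (Fin p × Fin p) L K) (hb : ∀ k, b k = x ^ (k.1 : ℕ) * y ^ (k.2 : ℕ))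
    (w : K) (m : Fin p × Fin p) : Algebra.trace L K (w * (b m)⁻¹) = (p : L) ^ 2 * b.repr w m := by
  classical
  conv_lhs => rw [← b.sum_repr w, Finset.sum_mul, map_sum]
  rw [Finset.sum_eq_single m]
  · have : b m ≠ 0 := b.ne_zero m
    rw [smul_mul_assoc, mul_inv_cancel₀ this, map_smul]
    have : Algebra.trace L K 1 = (p : L) ^ 2 := by
      have := Algebra.trace_algebraMap (R := L) (S := K) 1
      rw [map_one, hdeg] at this
      rw [this]; simp
    rw [this, smul_eq_mul, mul_comm]
  · intro k _ hk
    rw [smul_mul_assoc, map_smul]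
    have hxp : x ^ p ≠ 0 := pow_ne_zero _ hx0
    have hyp : y ^ p ≠ 0 := pow_ne_zero _ hy0
    have e : b k * (b m)⁻¹ = (f * g)⁻¹ • (x ^ (k.1 + (p - m.1) : ℕ) * y ^ (k.2 + (p - m.2) : ℕ)) := by
      rw [Algebra.smul_def, map_inv₀, map_mul, ← hx, ← hy, hb, hb]
      have h1 : x ^ p = x ^ (m.1 : ℕ) * x ^ (p - m.1) := by rw [← pow_add]; congr 1; omega
      have h2 : y ^ p = y ^ (m.2 : ℕ) * y ^ (p - m.2) := by rw [← pow_add]; congr 1; omega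
      rw [h1, h2, pow_add, pow_add]
      field_simp
    rw [e, map_smul, trace_mon hp hx hy b hb, smul_zero, smul_zero]
    rintro ⟨h1, h2⟩
    apply hk
    have key : ∀ i j : Fin p, p ∣ (i : ℕ) + (p - j) → i = j := by
      intro i j h
      have hi := i.2
      have hj := j.2
      obtain ⟨t, ht⟩ := h
      have : t = 1 := by
        rcases t with _ | _ | t
        · omega
        · rfl
        · exfalso
          have : p * (t + 1 + 1) = p * t + 2 * p := by ring
          have := Nat.zero_le (p * t)
          omega
      subst this
      apply Fin.ext; omega
    exact Prod.ext (key _ _ h1) (key _ _ h2)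
  · simp

lemma coord_pow_mem [IsDomain S] [IsIntegrallyClosed S] [IsFractionRing S L] [CharZero L] {p : ℕ} (hp : 0 < p) {x y : K} {f g : S} (hx : x ^ p = algebraMap S K f) (hy : y ^ p = algebraMap S K g)
    (hx0 : x ≠ 0) (hy0 : y ≠ 0) (hdeg : Module.finrank L K = p ^ 2)
    (b : Module.Basis (Fin p × Fin p) L K) (hb : ∀ k, b k = x ^ (k.1 : ℕ) * y ^ (k.2 : ℕ))
    {w : K} (hw : IsIntegral S w) (m : Fin p × Fin p) :
    ∃ s : S, ((p : L) ^ 2 * b.repr w m) ^ p * (algebraMap S L f ^ (m.1 : ℕ) * algebraMap S L g ^ (m.2 : ℕ)) = algebraMap S L s := by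
  have hx' : x ^ p = algebraMap L K (algebraMap S L f) := by rw [hx, ← IsScalarTower.algebraMap_apply]
  have hy' : y ^ p = algebraMap L K (algebraMap S L g) := by rw [hy, ← IsScalarTower.algebraMap_apply]
  have htr := trace_coord hp hx' hy' hx0 hy0 hdeg b hb w m
  set t := (p : L) ^ 2 * b.repr w m with ht
  have : FiniteDimensional L K := Module.Finite.of_basis b
  let Ω := AlgebraicClosure K
  have hsum := trace_eq_sum_embeddings (K := L) (L := K) Ω (x := w * (b m)⁻¹)
  rw [htr] at hsum
  have hint : IsIntegral S (algebraMap K Ω (algebraMap L K t * b m)) := by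
    rw [map_mul, ← IsScalarTower.algebraMap_apply, hsum, Finset.sum_mul]
    refine IsIntegral.sum _ fun σ _ => ?_
    have e : σ (w * (b m)⁻¹) * algebraMap K Ω (b m) = σ w * ((algebraMap K Ω x / σ x) ^ (m.1 : ℕ) * (algebraMap K Ω y / σ y) ^ (m.2 : ℕ)) := by
      rw [hb]
      simp only [map_mul, map_inv₀, map_pow, div_pow, mul_inv]
      ring
    rw [e]
    have hroot : ∀ (z : K) (r : L), z ≠ 0 → z ^ p = algebraMap L K r → IsIntegral S (algebraMap K Ω z / σ z) := by
      intro z r hz hzr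
      refine IsIntegral.of_pow hp ?_
      have : (algebraMap K Ω z / σ z) ^ p = 1 := by
        rw [div_pow, ← map_pow, ← map_pow, hzr, ← IsScalarTower.algebraMap_apply, AlgHom.commutes]
        apply div_self
        rw [← AlgHom.commutes σ, ← hzr]
        exact (map_ne_zero σ).2 (pow_ne_zero _ hz)
      rw [this]; exact isIntegral_one
    exact (hw.map (σ.restrictScalars S)).mul (((hroot x _ hx0 hx').pow _).mul ((hroot y _ hy0 hy').pow _))
  have hint2 : IsIntegral S (algebraMap L K t * b m) := (isIntegral_algebraMap_iff (algebraMap K Ω).injective).1 hint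
  have hint3 := hint2.pow p
  have e : (algebraMap L K t * b m) ^ p = algebraMap L K (t ^ p * (algebraMap S L f ^ (m.1 : ℕ) * algebraMap S L g ^ (m.2 : ℕ))) := by
    rw [hb, mul_pow, mul_pow, ← pow_mul, ← pow_mul, mul_comm (m.1 : ℕ), mul_comm (m.2 : ℕ), pow_mul, pow_mul, hx', hy']
    simp only [map_mul, map_pow]
  rw [e, isIntegral_algebraMap_iff (algebraMap L K).injective] at hint3
  obtain ⟨s, hs⟩ := IsIntegrallyClosed.isIntegral_iff.1 hint3
  exact ⟨s, hs.symm⟩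

lemma sqfree_ndvd [IsDomain S] [IsNoetherianRing S] {f q : S} (hq : Prime q) (hf : PaperSquarefree f) : ¬ q ^ 2 ∣ f := by
  intro h
  have hP : (Ideal.span {q}).IsPrime := (Ideal.span_singleton_prime hq.ne_zero).2 hq
  have hht : Order.height (⟨Ideal.span {q}, hP⟩ : PrimeSpectrum S) = 1 := by
    have := Ideal.height_span_singleton_eq_one_of_mem_nonZeroDivisors (mem_nonZeroDivisors_of_ne_zero hq.ne_zero) hq.not_isUnit
    exact (PrimeSpectrum.height_eq_orderHeight ⟨_, hP⟩).symm.trans this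
  have h1 := hf _ hP hht (Ideal.mem_span_singleton.2 ((dvd_pow_self q two_ne_zero).trans h))
  have h2 : algebraMap S (Localization.AtPrime (Ideal.span {q})) q ∈ Ideal.span {algebraMap S (Localization.AtPrime (Ideal.span {q})) f} := by
    rw [← h1]
    exact Ideal.mem_map_of_mem _ (Ideal.mem_span_singleton_self q)
  rw [Ideal.mem_span_singleton] at h2
  obtain ⟨r, hr⟩ := h2
  obtain ⟨⟨r', s'⟩, hrs⟩ := IsLocalization.surj (Ideal.span {q}).primeCompl r
  simp only at hrs
  have h3 : algebraMap S (Localization.AtPrime (Ideal.span {q})) (q * s') = algebraMap S (Localization.AtPrime (Ideal.span {q})) (f * r') := by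
    rw [map_mul, map_mul, ← hrs, hr]; ring
  have h4 := IsLocalization.injective (Localization.AtPrime (Ideal.span {q})) (Ideal.primeCompl_le_nonZeroDivisors (Ideal.span {q})) h3
  obtain ⟨k, hk⟩ := h
  rw [hk] at h4
  apply s'.2
  simp only [SetLike.mem_coe]
  rw [Ideal.mem_span_singleton]
  exact ⟨k * r', mul_left_cancel₀ hq.ne_zero (by linear_combination h4)⟩

lemma mem_of_pow_mul [IsDomain S] [IsNoetherianRing S] [IsIntegrallyClosed S] [IsFractionRing S L] (hU : UniqueFactorizationMonoid S)
    {p : ℕ} (hp : 0 < p) {f g : S}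
    (hfg : (¬IsUnit f ∧ ¬IsUnit g ∧ PaperSquarefree f ∧ PaperSquarefree g ∧ SatisfiesA1 f g) ∨
      (IsUnit f ∧ IsUnit g ∧ (∀ x : S, x ^ p ≠ f) ∧ (∀ x : S, x ^ p ≠ g))) {t : L} {i j : ℕ} (hi : i < p) (hj : j < p)
    {s : S} (hs : t ^ p * (algebraMap S L f ^ i * algebraMap S L g ^ j) = algebraMap S L s) :
    ∃ r : S, t = algebraMap S L r := by
  rcases hfg with ⟨-, -, hf, hg, hA⟩ | ⟨hf, hg, -, -⟩
  · have hnd := IsFractionRing.mk'_num_den' S t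
    have hred := IsFractionRing.num_den_reduced S t
    set n := IsFractionRing.num S t
    set m : S := (IsFractionRing.den S t : S) with hm
    have hm0 : m ≠ 0 := nonZeroDivisors.ne_zero (IsFractionRing.den S t).2
    have hmL : algebraMap S L m ≠ 0 := fun h => hm0 (IsFractionRing.injective S L (by simpa using h))
    have hS : n ^ p * (f ^ i * g ^ j) = s * m ^ p := by
      apply IsFractionRing.injective S L
      simp only [map_mul, map_pow]
      have hnm : algebraMap S L n = t * algebraMap S L m := by rw [← hnd]; exact (div_mul_cancel₀ _ hmL).symm
      rw [← hs, hnm]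
      ring
    by_cases hmu : IsUnit m
    · obtain ⟨m', hm'⟩ := hmu
      refine ⟨n * ↑m'⁻¹, ?_⟩
      rw [← hnd, div_eq_iff hmL, ← hm', ← map_mul]
      simp
    · exfalso
      obtain ⟨q, hq, hqm⟩ := WfDvdMonoid.exists_irreducible_factor hmu hm0
      have hqp : Prime q := UniqueFactorizationMonoid.irreducible_iff_prime.1 hq
      have hqn : ¬ q ∣ n := fun h => hq.not_isUnit (hred h hqm)
      have h1 : q ^ p ∣ f ^ i * g ^ j := by
        apply hqp.pow_dvd_of_dvd_mul_left (a := n ^ p) p (fun h => hqn (hqp.dvd_of_dvd_pow h))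
        rw [hS]
        exact (pow_dvd_pow_of_dvd hqm p).mul_left s
      have hP : (Ideal.span {q}).IsPrime := (Ideal.span_singleton_prime hqp.ne_zero).2 hqp
      have hht : IsHeightOnePrime (Ideal.span {q}) := by
        refine ⟨hP, ?_⟩
        have := Ideal.height_span_singleton_eq_one_of_mem_nonZeroDivisors (mem_nonZeroDivisors_of_ne_zero hqp.ne_zero) hqp.not_isUnit
        exact (PrimeSpectrum.height_eq_orderHeight ⟨_, hP⟩).symm.trans this
      have hA' := hA _ hht
      simp only [Ideal.mem_span_singleton] at hA'
      have fin : ∀ (f : S) (i : ℕ), i < p → PaperSquarefree f → ¬ q ^ p ∣ f ^ i := by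
        intro f i hi hf h
        have hqf : q ∣ f := hqp.dvd_of_dvd_pow ((dvd_pow_self q hp.ne').trans h)
        obtain ⟨f', rfl⟩ := hqf
        have h2 : q ^ (i + 1) ∣ (q * f') ^ i := (pow_dvd_pow q hi).trans h
        rw [mul_pow, pow_succ] at h2
        have h3 := (mul_dvd_mul_iff_left (pow_ne_zero i hqp.ne_zero)).1 h2
        have h4 := hqp.dvd_of_dvd_pow h3
        refine sqfree_ndvd hqp hf ?_
        rw [sq]
        exact mul_dvd_mul_left q h4
      by_cases hqf : q ∣ f
      · have hqg : ¬ q ∣ g := fun h => hA' ⟨hqf, h⟩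
        exact fin f i hi hf (hqp.pow_dvd_of_dvd_mul_right p (fun h => hqg (hqp.dvd_of_dvd_pow h)) h1)
      · exact fin g j hj hg (hqp.pow_dvd_of_dvd_mul_left p (fun h => hqf (hqp.dvd_of_dvd_pow h)) h1)
  · obtain ⟨v, hv⟩ := (hf.pow i).mul (hg.pow j)
    have h1 : t ^ p = algebraMap S L (s * ↑v⁻¹) := by
      rw [map_mul, ← hs, ← map_pow, ← map_pow, ← map_mul (algebraMap S L) (f ^ i), ← hv, mul_assoc, ← map_mul]
      simp
    have h2 : IsIntegral S t := IsIntegral.of_pow hp (by rw [h1]; exact isIntegral_algebraMap)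
    obtain ⟨r, hr⟩ := IsIntegrallyClosed.isIntegral_iff.1 h2
    exact ⟨r, hr.symm⟩

lemma psq_mem [IsDomain S] [IsNoetherianRing S] [IsIntegrallyClosed S] [IsFractionRing S L] [CharZero L]
    (hU : UniqueFactorizationMonoid S) {p : ℕ} (hp : 0 < p) {x y : K} {f g : S}
    (hfg : (¬IsUnit f ∧ ¬IsUnit g ∧ PaperSquarefree f ∧ PaperSquarefree g ∧ SatisfiesA1 f g) ∨
      (IsUnit f ∧ IsUnit g ∧ (∀ x : S, x ^ p ≠ f) ∧ (∀ x : S, x ^ p ≠ g)))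
    (hx : x ^ p = algebraMap S K f) (hy : y ^ p = algebraMap S K g)
    (hx0 : x ≠ 0) (hy0 : y ≠ 0) (hdeg : Module.finrank L K = p ^ 2)
    (b : Module.Basis (Fin p × Fin p) L K) (hb : ∀ k, b k = x ^ (k.1 : ℕ) * y ^ (k.2 : ℕ))
    {w : K} (hw : IsIntegral S w) (E : Subalgebra S K) (hxE : x ∈ E) (hyE : y ∈ E) : (p : K) ^ 2 * w ∈ E := by
  have h : (p : K) ^ 2 * w ∈ Submodule.span S (Set.range b) := by
    rw [mem_span_iff_coord]
    intro m
    obtain ⟨s, hs⟩ := coord_pow_mem hp hx hy hx0 hy0 hdeg b hb hw m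
    obtain ⟨r, hr⟩ := mem_of_pow_mul hU hp hfg m.1.2 m.2.2 hs
    refine ⟨r, ?_⟩
    have : (p : K) ^ 2 * w = ((p : L) ^ 2) • w := by rw [Algebra.smul_def]; simp
    rw [this, map_smul, Finsupp.smul_apply, smul_eq_mul, hr]
  refine (Submodule.span_le (p := Subalgebra.toSubmodule E)).2 ?_ h
  rintro _ ⟨k, rfl⟩
  rw [hb]
  exact E.mul_mem (E.pow_mem hxE _) (E.pow_mem hyE _)
end traceD
end Part10

section Part11
universe u
section locF
variable {K : Type*} [Field K]

/-- the ideal generated by two elements of a subring -/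
def Mm (E : Subring K) (u ψ : K) : AddSubgroup K where
  carrier := {x | ∃ a ∈ E, ∃ b ∈ E, x = a * u + b * ψ}
  zero_mem' := ⟨0, E.zero_mem, 0, E.zero_mem, by simp⟩
  add_mem' := by
    rintro _ _ ⟨a, ha, b, hb, rfl⟩ ⟨a', ha', b', hb', rfl⟩
    exact ⟨a + a', E.add_mem ha ha', b + b', E.add_mem hb hb', by ring⟩
  neg_mem' := by
    rintro _ ⟨a, ha, b, hb, rfl⟩
    exact ⟨-a, E.neg_mem ha, -b, E.neg_mem hb, by ring⟩

lemma Mm_mul {E : Subring K} {u ψ x y : K} (hx : x ∈ E) (hy : y ∈ Mm E u ψ) : x * y ∈ Mm E u ψ := by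
  obtain ⟨a, ha, b, hb, rfl⟩ := hy
  exact ⟨x * a, E.mul_mem hx ha, x * b, E.mul_mem hx hb, by ring⟩

lemma Mm_le {E : Subring K} {u ψ x : K} (hu : u ∈ E) (hψ : ψ ∈ E) (hx : x ∈ Mm E u ψ) : x ∈ E := by
  obtain ⟨a, ha, b, hb, rfl⟩ := hx
  exact E.add_mem (E.mul_mem ha hu) (E.mul_mem hb hψ)

lemma Mm_u {E : Subring K} {u ψ : K} : u ∈ Mm E u ψ := ⟨1, E.one_mem, 0, E.zero_mem, by simp⟩
lemma Mm_psi {E : Subring K} {u ψ : K} : ψ ∈ Mm E u ψ := ⟨0, E.zero_mem, 1, E.one_mem, by simp⟩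

/-- E + E t -/
def Ep (E : Subring K) (t A B : K) (hA : A ∈ E) (hB : B ∈ E) (h : t ^ 2 = A * t + B) : Subring K where
  carrier := {x | ∃ a ∈ E, ∃ b ∈ E, x = a + b * t}
  zero_mem' := ⟨0, E.zero_mem, 0, E.zero_mem, by simp⟩
  one_mem' := ⟨1, E.one_mem, 0, E.zero_mem, by simp⟩
  add_mem' := by
    rintro _ _ ⟨a, ha, b, hb, rfl⟩ ⟨a', ha', b', hb', rfl⟩
    exact ⟨a + a', E.add_mem ha ha', b + b', E.add_mem hb hb', by ring⟩
  neg_mem' := by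
    rintro _ ⟨a, ha, b, hb, rfl⟩
    exact ⟨-a, E.neg_mem ha, -b, E.neg_mem hb, by ring⟩
  mul_mem' := by
    rintro _ _ ⟨a, ha, b, hb, rfl⟩ ⟨a', ha', b', hb', rfl⟩
    refine ⟨a * a' + b * b' * B, ?_, a * b' + b * a' + b * b' * A, ?_, by linear_combination b * b' * h⟩
    · exact E.add_mem (E.mul_mem ha ha') (E.mul_mem (E.mul_mem hb hb') hB)
    · exact E.add_mem (E.add_mem (E.mul_mem ha hb') (E.mul_mem hb ha')) (E.mul_mem (E.mul_mem hb hb') hA)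

lemma local_lemma {q : ℕ} (E : Subring K) {u ψ β γ t r : K} (hu : u ∈ E) (hψ : ψ ∈ E) (hβ : β ∈ E) (hγ : γ ∈ E)
    (hβi : β⁻¹ ∈ E) (hβ0 : β ≠ 0) (hu0 : u ≠ 0)
    (hdich : ∀ x ∈ E, x ∈ Mm E u ψ ∨ x⁻¹ ∈ E) (h1 : (1 : K) ∉ Mm E u ψ)
    (htu : t * u = ψ ^ (q + 2)) (htE : t ∉ E) (hrel : ψ ^ (q + 3) = u * (β * ψ + γ * u))
    (M : ℕ) (hr : ∀ k : ℕ, u ^ M * r ^ k ∈ E) : ∃ a ∈ E, ∃ b ∈ E, r = a + b * t := by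
  have hMle : ∀ x, x ∈ Mm E u ψ → x ∈ E := fun x => Mm_le hu hψ
  have h0M : (0 : K) ∈ Mm E u ψ := (Mm E u ψ).zero_mem
  have hψt : ψ * t = β * ψ + γ * u := by
    apply mul_right_cancel₀ hu0
    linear_combination ψ * htu + hrel
  have hδE : γ * ψ ^ (q + 1) ∈ E := E.mul_mem hγ (E.pow_mem hψ _)
  have ht2 : t ^ 2 = β * t + γ * ψ ^ (q + 1) := by
    apply mul_right_cancel₀ hu0
    linear_combination (t - β) * htu + ψ ^ (q + 1) * hψt
  have hinv : ∀ x ∈ E, x ∉ Mm E u ψ → x⁻¹ ∈ E ∧ x ≠ 0 := by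
    intro x hx hxM
    exact ⟨(hdich x hx).resolve_left hxM, fun h => hxM (h ▸ h0M)⟩
  have hprime : ∀ x ∈ E, ∀ y ∈ E, x * y ∈ Mm E u ψ → x ∉ Mm E u ψ → y ∈ Mm E u ψ := by
    intro x hx y hy hxy hxM
    obtain ⟨hi, h0⟩ := hinv x hx hxM
    have := Mm_mul hi hxy
    rwa [inv_mul_cancel_left₀ h0] at this
  have hψpow : ∀ n : ℕ, ψ ^ (n + 1) ∈ Mm E u ψ := fun n => by
    rw [pow_succ]; exact Mm_mul (E.pow_mem hψ n) Mm_psi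
  have hδM : γ * ψ ^ (q + 1) ∈ Mm E u ψ := Mm_mul hγ (hψpow q)
  set E' := Ep E t β (γ * ψ ^ (q + 1)) hβ hδE ht2 with hE'
  have hEE' : ∀ x ∈ E, x ∈ E' := fun x hx => ⟨x, hx, 0, E.zero_mem, by simp⟩
  have htE' : t ∈ E' := ⟨0, E.zero_mem, 1, E.one_mem, by simp⟩
  have hME' : ∀ x ∈ Mm E u ψ, ∀ y ∈ E', x * y ∈ Mm E u ψ := by
    rintro _ ⟨a, ha, b, hb, rfl⟩ _ ⟨c, hc, d, hd, rfl⟩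
    have : (a * u + b * ψ) * (c + d * t) = (a * c + b * d * γ) * u + (b * c + b * d * β + a * d * ψ ^ (q + 1)) * ψ := by
      linear_combination a * d * htu + b * d * hψt
    rw [this]
    refine ⟨_, ?_, _, ?_, rfl⟩
    · exact E.add_mem (E.mul_mem ha hc) (E.mul_mem (E.mul_mem hb hd) hγ)
    · exact E.add_mem (E.add_mem (E.mul_mem hb hc) (E.mul_mem (E.mul_mem hb hd) hβ)) (E.mul_mem (E.mul_mem ha hd) (E.pow_mem hψ _))
  set π := u * (t - β) + ψ * t with hπ
  have hπM : π ∈ Mm E u ψ := by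
    refine ⟨γ - β, E.sub_mem hγ hβ, β + ψ ^ (q + 1), E.add_mem hβ (E.pow_mem hψ _), ?_⟩
    rw [hπ]; linear_combination htu + hψt
  set m1 := u * γ * ψ ^ q + γ * ψ ^ (q + 1) - β * ψ ^ (q + 1) with hm1
  set m2 := u * γ * ψ ^ q + γ * ψ ^ (q + 1) with hm2
  have hm0 : u * γ * ψ ^ q ∈ Mm E u ψ := by
    have := Mm_mul (E.mul_mem hγ (E.pow_mem hψ q)) (Mm_u (E := E) (u := u) (ψ := ψ))
    convert this using 1; ring
  have hm2M : m2 ∈ Mm E u ψ := AddSubgroup.add_mem _ hm0 hδM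
  have hm1M : m1 ∈ Mm E u ψ := AddSubgroup.sub_mem _ hm2M (Mm_mul hβ (hψpow q))
  have hX : π * (t - β) = β ^ 2 * u + m1 * ψ := by
    rw [hπ, hm1]
    linear_combination (u + ψ) * ht2 - β * htu
  have hY : π * t = β * γ * u + (β ^ 2 + m2) * ψ := by
    rw [hπ, hm2]
    linear_combination (u + ψ) * ht2 + β * hψt
  set D := β ^ 2 * (β ^ 2 + m2) - m1 * (β * γ) with hD
  have hDE : D ∈ E := E.sub_mem (E.mul_mem (E.pow_mem hβ _) (E.add_mem (E.pow_mem hβ _) (hMle _ hm2M))) (E.mul_mem (hMle _ hm1M) (E.mul_mem hβ hγ))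
  have hDM : D ∉ Mm E u ψ := by
    intro h
    apply h1
    have h2 : β ^ 4 ∈ Mm E u ψ := by
      have : β ^ 4 = D - β ^ 2 * m2 + (β * γ) * m1 := by rw [hD]; ring
      rw [this]
      exact AddSubgroup.add_mem _ (AddSubgroup.sub_mem _ h (Mm_mul (E.pow_mem hβ 2) hm2M)) (Mm_mul (E.mul_mem hβ hγ) hm1M)
    have h3 := Mm_mul (E.pow_mem hβi 4) h2
    rwa [← mul_pow, inv_mul_cancel₀ hβ0, one_pow] at h3
  obtain ⟨hDi, hD0⟩ := hinv D hDE hDM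
  have hMπ : ∀ x ∈ Mm E u ψ, ∃ y ∈ E', x = π * y := by
    have hu' : u = π * (D⁻¹ * ((β ^ 2 + m2) * (t - β) - m1 * t)) := by
      field_simp
      rw [hD]
      linear_combination -(β ^ 2 + m2) * hX + m1 * hY
    have hψ' : ψ = π * (D⁻¹ * (β ^ 2 * t - β * γ * (t - β))) := by
      field_simp
      rw [hD]
      linear_combination -β ^ 2 * hY + β * γ * hX
    rintro _ ⟨a, ha, b, hb, rfl⟩
    refine ⟨a * (D⁻¹ * ((β ^ 2 + m2) * (t - β) - m1 * t)) + b * (D⁻¹ * (β ^ 2 * t - β * γ * (t - β))), ?_, ?_⟩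
    · have b' := hEE' _ hβ
      have g' := hEE' _ hγ
      have d' := hEE' _ hDi
      have m1' := hEE' _ (hMle _ hm1M)
      have m2' := hEE' _ (hMle _ hm2M)
      have tb := E'.sub_mem htE' b'
      refine E'.add_mem (E'.mul_mem (hEE' _ ha) (E'.mul_mem d' (E'.sub_mem (E'.mul_mem (E'.add_mem (E'.pow_mem b' 2) m2') tb) (E'.mul_mem m1' htE')))) 
        (E'.mul_mem (hEE' _ hb) (E'.mul_mem d' (E'.sub_mem (E'.mul_mem (E'.pow_mem b' 2) htE') (E'.mul_mem (E'.mul_mem b' g') tb))))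
    · linear_combination a * hu' + b * hψ'
  have hsq : ∀ y ∈ E', y ^ 2 ∈ Mm E u ψ → y ∈ Mm E u ψ := by
    rintro _ ⟨a, ha, b, hb, rfl⟩ h
    have e : (a + b * t) ^ 2 = (a ^ 2 + b ^ 2 * (γ * ψ ^ (q + 1))) + (2 * a * b + b ^ 2 * β) * t := by
      linear_combination b ^ 2 * ht2
    rw [e] at h
    have h2E : (2 : K) ∈ E := by
      rw [← one_add_one_eq_two]; exact E.add_mem E.one_mem E.one_mem
    have hP : a ^ 2 + b ^ 2 * (γ * ψ ^ (q + 1)) ∈ E := E.add_mem (E.pow_mem ha 2) (E.mul_mem (E.pow_mem hb 2) hδE)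
    have hQ : 2 * a * b + b ^ 2 * β ∈ E := E.add_mem (E.mul_mem (E.mul_mem h2E ha) hb) (E.mul_mem (E.pow_mem hb 2) hβ)
    have hQM : 2 * a * b + b ^ 2 * β ∈ Mm E u ψ := by
      by_contra hn
      obtain ⟨hi, h0⟩ := hinv _ hQ hn
      apply htE
      have h3 := E.mul_mem hi (E.sub_mem (hMle _ h) hP)
      rwa [add_sub_cancel_left, inv_mul_cancel_left₀ h0] at h3
    have h4 := AddSubgroup.sub_mem _ h (hME' _ hQM t htE')
    rw [add_sub_cancel_right] at h4
    have h5 := AddSubgroup.sub_mem _ h4 (Mm_mul (E.pow_mem hb 2) hδM)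
    rw [add_sub_cancel_right] at h5
    have haM : a ∈ Mm E u ψ := by
      by_contra hn
      rw [sq] at h5
      exact hn (hprime a ha a ha h5 hn)
    have h6 := AddSubgroup.sub_mem _ hQM (Mm_mul (E.mul_mem h2E hb) haM)
    have h7 : b * (b * β) ∈ Mm E u ψ := by convert h6 using 1; ring
    have hbM : b ∈ Mm E u ψ := by
      by_contra hn
      have h8 := hprime b hb _ (E.mul_mem hb hβ) h7 hn
      have h9 := Mm_mul hβi h8
      rw [mul_comm b, inv_mul_cancel_left₀ hβ0] at h9
      exact hn h9
    exact AddSubgroup.add_mem _ haM (hME' _ hbM t htE')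
  have hπE' : π ∈ E' := hEE' _ (hMle _ hπM)
  have hπ0 : π ≠ 0 := by
    intro h
    obtain ⟨y, _, hy⟩ := hMπ u Mm_u
    exact hu0 (by rw [hy, h, zero_mul])
  -- power of π divisible by u
  have hπu : ∃ y ∈ E', π ^ (q + 2) = u * y := by
    let u1 : E' := ⟨u, hEE' _ hu⟩
    let x1 : E' := ⟨t - β, E'.sub_mem htE' (hEE' _ hβ)⟩
    let s1 : E' := ⟨ψ * t, E'.mul_mem (hEE' _ hψ) htE'⟩
    have h1 : u1 ∣ (u1 * x1 + s1) ^ (q + 2) - s1 ^ (q + 2) :=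
      (Dvd.intro x1 (by ring)).trans (sub_dvd_pow_sub_pow (u1 * x1 + s1) s1 (q + 2))
    obtain ⟨k, hk⟩ := h1
    have hk' := congrArg (Subtype.val) hk
    simp only [AddSubgroupClass.coe_sub, Subring.coe_pow, Subring.coe_add, Subring.coe_mul, u1, x1, s1] at hk'
    refine ⟨k + t ^ (q + 3), E'.add_mem k.2 (E'.pow_mem htE' _), ?_⟩
    rw [hπ]
    linear_combination hk' - t ^ (q + 2) * htu
  obtain ⟨y0, hy0, hy⟩ := hπu
  set N := (q + 2) * M with hN
  have hNk : ∀ k : ℕ, π ^ N * r ^ k ∈ E' := by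
    intro k
    have : π ^ N * r ^ k = y0 ^ M * (u ^ M * r ^ k) := by
      rw [hN, pow_mul, hy]; ring
    rw [this]
    exact E'.mul_mem (E'.pow_mem hy0 _) (hEE' _ (hr k))
  have hex : ∃ n, π ^ n * r ∈ E' := ⟨N, by simpa using hNk 1⟩
  classical
  by_cases hn0 : Nat.find hex = 0
  · have := Nat.find_spec hex
    rw [hn0, pow_zero, one_mul] at this
    exact this
  · exfalso
    obtain ⟨n, hn⟩ := Nat.exists_eq_succ_of_ne_zero hn0
    have hs := Nat.find_spec hex
    rw [hn] at hs
    have hdesc : ∀ j : ℕ, (π ^ n.succ * r) ^ 2 ^ j ∈ Mm E u ψ → π ^ n.succ * r ∈ Mm E u ψ := by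
      intro j
      induction j with
      | zero => simp
      | succ j ih =>
        intro h
        rw [pow_succ 2 j, pow_mul] at h
        exact ih (hsq _ (E'.pow_mem hs _) h)
    have hbig : (π ^ n.succ * r) ^ 2 ^ N ∈ Mm E u ψ := by
      have hlt : N < 2 ^ N := Nat.lt_two_pow_self
      obtain ⟨d, hd⟩ : ∃ d, n.succ * 2 ^ N = 1 + d + N := ⟨n.succ * 2 ^ N - N - 1, by
        have : 2 ^ N ≤ n.succ * 2 ^ N := Nat.le_mul_of_pos_left _ (Nat.succ_pos n)
        omega⟩
      have : (π ^ n.succ * r) ^ 2 ^ N = π * (π ^ d * (π ^ N * r ^ 2 ^ N)) := by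
        rw [mul_pow, ← pow_mul, hd]; ring
      rw [this]
      exact hME' _ hπM _ (E'.mul_mem (E'.pow_mem hπE' _) (hNk _))
    obtain ⟨y, hyE, hyy⟩ := hMπ _ (hdesc N hbig)
    have : π ^ n * r = y := by
      apply mul_left_cancel₀ hπ0
      rw [← hyy, pow_succ]; ring
    exact Nat.find_min hex (m := n) (by rw [hn]; exact Nat.lt_succ_self n) (this ▸ hyE)
end locF
end Part11

section Part12
universe u
section locE
variable {S K : Type*} [CommRing S] [IsDomain S] [Field K] [Algebra S K]

/-- The localization of `EE` at the complement of `pS`. -/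
def Eloc {p : ℕ} (hpS : Prime (p : S)) (hpK : (p : K) ≠ 0) (u v : K) : Subring K where
  carrier := {x | ∃ s : S, ¬ (p : S) ∣ s ∧ algebraMap S K s * x ∈ GG S p u v 0}
  mul_mem' := by
    rintro x y ⟨s, hs, hx⟩ ⟨t, ht, hy⟩
    refine ⟨s * t, hpS.not_dvd_mul hs ht, ?_⟩
    have := GG_mul hpK hx hy
    rw [map_mul, mul_mul_mul_comm]; simpa using this
  one_mem' := ⟨1, fun h => hpS.not_unit (isUnit_of_dvd_one h), by simpa using GG_one⟩
  add_mem' := by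
    rintro x y ⟨s, hs, hx⟩ ⟨t, ht, hy⟩
    refine ⟨s * t, hpS.not_dvd_mul hs ht, ?_⟩
    have := Submodule.add_mem _ (GG_algmul t hx) (GG_algmul s hy)
    convert this using 1
    rw [map_mul]; ring
  zero_mem' := ⟨1, fun h => hpS.not_unit (isUnit_of_dvd_one h), by simp⟩
  neg_mem' := by
    rintro x ⟨s, hs, hx⟩
    exact ⟨s, hs, by rw [mul_neg]; exact Submodule.neg_mem _ hx⟩

lemma Eloc_of_GG {p : ℕ} {hpS : Prime (p : S)} {hpK : (p : K) ≠ 0} {u v x : K}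
    (hx : x ∈ GG S p u v 0) : x ∈ Eloc hpS hpK u v :=
  ⟨1, fun h => hpS.not_unit (isUnit_of_dvd_one h), by simpa using hx⟩

lemma Eloc_inv {p : ℕ} {hpS : Prime (p : S)} {hpK : (p : K) ≠ 0} {u v : K} {s : S}
    (hs : ¬ (p : S) ∣ s) (h0 : algebraMap S K s ≠ 0) : (algebraMap S K s)⁻¹ ∈ Eloc hpS hpK u v :=
  ⟨s, hs, by rw [mul_inv_cancel₀ h0]; exact GG_one⟩

lemma exists_norm {A : Type*} [CommRing A] [Algebra S A] {q : S} (hq : Prime q) {s : S} (hs : ¬ q ∣ s)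
    {x : A} (hx : IsIntegral S x) :
    ∃ t : S, ¬ q ∣ t ∧ ∃ y : A, algebraMap S A t = (algebraMap S A s + algebraMap S A q * x) * y := by
  obtain ⟨f, hf, hfx⟩ := hx
  set F := f.scaleRoots q with hF
  have h1 : Polynomial.aeval (algebraMap S A q * x) F = 0 := by
    have := Polynomial.scaleRoots_eval₂_eq_zero (f := algebraMap S A) (r := x) (s := q) hfx
    simpa [Polynomial.aeval_def] using this
  refine ⟨F.eval (-s), ?_, ?_⟩
  · intro hd
    have hd2 : q ∣ F.eval (-s) - (-s) ^ f.natDegree := by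
      rw [Polynomial.eval_eq_sum_range, hF, Polynomial.natDegree_scaleRoots, Finset.sum_range_succ]
      simp only [Polynomial.coeff_scaleRoots]
      have : f.coeff f.natDegree = 1 := hf
      rw [this]; simp only [Nat.sub_self, pow_zero, one_mul, mul_one, add_sub_cancel_right]
      refine Finset.dvd_sum fun i hi => ?_
      have : f.natDegree - i ≠ 0 := by have := Finset.mem_range.1 hi; omega
      exact Dvd.dvd.mul_right (Dvd.dvd.mul_left (dvd_pow_self q this) _) _
    have h3 := (dvd_sub hd hd2)
    rw [sub_sub_cancel] at h3
    have := hq.dvd_of_dvd_pow h3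
    exact hs ((dvd_neg).1 this)
  · have h2 := Polynomial.sub_dvd_eval_sub (algebraMap S A (-s)) (algebraMap S A q * x) (F.map (algebraMap S A))
    rw [Polynomial.eval_map_algebraMap, Polynomial.eval_map_algebraMap, h1, sub_zero, Polynomial.aeval_algebraMap_apply] at h2
    obtain ⟨y, hy⟩ := h2
    refine ⟨-y, ?_⟩
    rw [← Polynomial.coe_aeval_eq_eval]
    rw [hy]; rw [map_neg]; ring

lemma Eloc_one_add_p {p : ℕ} {hpS : Prime (p : S)} {hpK : (p : K) ≠ 0} {u v : K}
    (hσ : ∀ s : S, s ≠ 0 → algebraMap S K s ≠ 0)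
    (nu nv : ℕ → S)
    (hu : u ^ p = p * ∑ m ∈ Finset.range p, algebraMap S K (nu m) * u ^ m)
    (hv : v ^ p = p * ∑ m ∈ Finset.range p, algebraMap S K (nv m) * v ^ m)
    {y : K} (hy : y ∈ Eloc hpS hpK u v) : (1 + p * y) ≠ 0 ∧ (1 + p * y)⁻¹ ∈ Eloc hpS hpK u v := by
  obtain ⟨s, hs, hx⟩ := hy
  let A := EE S hpK u v
  let x : A := ⟨algebraMap S K s * y, hx⟩
  have hxi : IsIntegral S x := by
    have := isIntegral_GG hpK nu nv hu hv hx
    exact (isIntegral_algebraMap_iff (A := A) (B := K) Subtype.val_injective).1 this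
  obtain ⟨t, ht, w, hw⟩ := exists_norm hpS hs hxi
  have hw' := congrArg (Subtype.val) hw
  have hw2 : algebraMap S K t = (algebraMap S K s + p * (algebraMap S K s * y)) * w := by
    have : algebraMap S K (p : S) = (p : K) := by simp
    rw [← this]; exact hw'
  have ht0 := hσ t (fun h => ht (h ▸ dvd_zero _))
  have e : algebraMap S K t = (1 + p * y) * (algebraMap S K s * w) := by rw [hw2]; ring
  have h0 : (1 + p * y) ≠ 0 := by
    intro h; rw [h, zero_mul] at e; exact ht0 e
  refine ⟨h0, t, ht, ?_⟩
  rw [e, mul_comm, inv_mul_cancel_left₀ h0]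
  exact GG_algmul s w.2

lemma inv_one_add_of_pow {E : Subring K} {P : K} (hE : ∀ y ∈ E, (1 + P * y) ≠ 0 ∧ (1 + P * y)⁻¹ ∈ E)
    {x : K} (hx : x ∈ E) {n : ℕ} {y : K} (hy : y ∈ E) (h : x ^ n = P * y) :
    1 + x ≠ 0 ∧ (1 + x)⁻¹ ∈ E := by
  have h1 : (1 - (-x)) ∣ 1 - (-x) ^ n := by
    simpa using sub_dvd_pow_sub_pow (1 : K) (-x) n
  have hg := mul_neg_geom_sum (-x) n
  obtain ⟨h0, hi⟩ := hE (-(-1) ^ n * y) (E.mul_mem (E.neg_mem (E.pow_mem (E.neg_mem E.one_mem) _)) hy)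
  have e : (1 + x) * ∑ i ∈ Finset.range n, (-x) ^ i = 1 + P * (-(-1) ^ n * y) := by
    rw [sub_neg_eq_add] at hg
    rw [hg, neg_pow, h]; ring
  have hne : 1 + x ≠ 0 := by
    intro h; rw [h, zero_mul] at e; exact h0 e.symm
  refine ⟨hne, ?_⟩
  rw [← e, mul_inv] at hi
  have hs : ∑ i ∈ Finset.range n, (-x) ^ i ≠ 0 := by
    intro h; rw [h, mul_zero] at e; exact h0 e.symm
  have := E.mul_mem hi (E.sum_mem (t := Finset.range n) fun i _ => E.pow_mem (E.neg_mem hx) i)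
  rwa [inv_mul_cancel_right₀ hs] at this

lemma GG_sub {p : ℕ} {u v θ N : K} (hpK : (p : K) ≠ 0) (hu0 : u ≠ 0) (W : Subring K)
    (hS : ∀ s : S, algebraMap S K s ∈ W) (hu : u ∈ W) (hθ : θ ∈ W) (hN : N ∈ W) (hNi : N⁻¹ ∈ W)
    (hup : u ^ p = p * N) (hv : v = θ * u) (n : ℕ) {x : K} (hx : x ∈ GG S p u v n) :
    ∃ y ∈ W, x = u ^ n * y := by
  unfold GG at hx
  induction hx using Submodule.span_induction with
  | mem x hx =>
    obtain ⟨l, i, j, h, rfl⟩ := hx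
    have hN0 : N ≠ 0 := by
      rintro rfl
      rw [mul_zero] at hup; exact pow_ne_zero _ hu0 hup
    have hpe : (p : K) = u ^ p * N⁻¹ := by rw [hup]; field_simp
    obtain ⟨k, hk⟩ := Int.eq_ofNat_of_zero_le (sub_nonneg.2 h)
    refine ⟨u ^ k * (N⁻¹) ^ l * θ ^ j, ?_, ?_⟩
    · refine W.mul_mem (W.mul_mem (W.pow_mem hu _) ?_) (W.pow_mem hθ _)
      cases l with
      | ofNat l => simpa using W.pow_mem hNi l
      | negSucc l => simpa [zpow_negSucc] using W.pow_mem hN (l + 1)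
    · have : (u : K) ^ k = u ^ ((i : ℤ) + j + p * l - n) := by
        rw [← zpow_natCast, hk]
      rw [this, hpe, hv, zpow_sub₀ hu0, zpow_add₀ hu0, zpow_add₀ hu0, mul_zpow, zpow_mul, mul_pow]
      simp only [zpow_natCast]
      field_simp
  | zero => exact ⟨0, W.zero_mem, by simp⟩
  | add x y _ _ h1 h2 =>
    obtain ⟨a, ha, rfl⟩ := h1
    obtain ⟨b, hb, rfl⟩ := h2
    exact ⟨a + b, W.add_mem ha hb, by ring⟩
  | smul s x _ h =>
    obtain ⟨a, ha, rfl⟩ := h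
    exact ⟨algebraMap S K s * a, W.mul_mem (hS s) ha, by rw [Algebra.smul_def]; ring⟩

end locE
end Part12

section Part13
universe u
section locF
variable {S K : Type*} [CommRing S] [IsDomain S] [Field K] [Algebra S K]

/-- Elements which are constant modulo the ideal generated by `u`, `ψ`. -/
def Wr {q : S} (hq : Prime q) (hσ : ∀ s : S, s ≠ 0 → algebraMap S K s ≠ 0) (E : Subring K) (u ψ : K)
    (hS : ∀ s : S, algebraMap S K s ∈ E)
    (hSi : ∀ s : S, ¬ q ∣ s → (algebraMap S K s)⁻¹ ∈ E) : Subring K where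
  carrier := {x | x ∈ E ∧ ∃ s t : S, ¬ q ∣ t ∧ x - algebraMap S K s * (algebraMap S K t)⁻¹ ∈ Mm E u ψ}
  mul_mem' := by
    rintro x y ⟨hx, s, t, ht, h⟩ ⟨hy, s', t', ht', h'⟩
    refine ⟨E.mul_mem hx hy, s * s', t * t', hq.not_dvd_mul ht ht', ?_⟩
    have h1 := Mm_mul hx h'
    have h2 := Mm_mul (E.mul_mem (hS s') (hSi t' ht')) h
    convert AddSubgroup.add_mem _ h1 h2 using 1
    rw [map_mul, map_mul, mul_inv]; ring
  one_mem' := ⟨E.one_mem, 1, 1, fun h => hq.not_isUnit (isUnit_of_dvd_one h), by simpa using (Mm E u ψ).zero_mem⟩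
  add_mem' := by
    rintro x y ⟨hx, s, t, ht, h⟩ ⟨hy, s', t', ht', h'⟩
    refine ⟨E.add_mem hx hy, s * t' + s' * t, t * t', hq.not_dvd_mul ht ht', ?_⟩
    convert AddSubgroup.add_mem _ h h' using 1
    have h1 := hσ t (fun h => ht (h ▸ dvd_zero _))
    have h2 := hσ t' (fun h => ht' (h ▸ dvd_zero _))
    rw [map_add, map_mul, map_mul, map_mul]; field_simp; ring
  zero_mem' := ⟨E.zero_mem, 0, 1, fun h => hq.not_isUnit (isUnit_of_dvd_one h), by simpa using (Mm E u ψ).zero_mem⟩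
  neg_mem' := by
    rintro x ⟨hx, s, t, ht, h⟩
    refine ⟨E.neg_mem hx, -s, t, ht, ?_⟩
    convert AddSubgroup.neg_mem _ h using 1
    rw [map_neg]; ring

lemma loc_main {p : ℕ} (hp3 : 3 ≤ p) (hpS : Prime (p : S)) (hpK : (p : K) ≠ 0) {u v : K} (hu0 : u ≠ 0)
    (hσ : ∀ s : S, s ≠ 0 → algebraMap S K s ≠ 0)
    (nu nv : ℕ → S)
    (hu : u ^ p = p * ∑ m ∈ Finset.range p, algebraMap S K (nu m) * u ^ m)
    (hv : v ^ p = p * ∑ m ∈ Finset.range p, algebraMap S K (nv m) * v ^ m)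
    {c e α₁ : S} {w : K} (ha : ¬ (p : S) ∣ nu 0) (hc : ¬ (p : S) ∣ c) (hα : ¬ (p : S) ∣ α₁)
    (hw : w ∈ GG S p u v 2)
    (hrel : (algebraMap S K c * v + algebraMap S K e * u) ^ p =
      p * (algebraMap S K α₁ * (algebraMap S K c * v + algebraMap S K e * u) + w))
    (H1 : ∀ s : S, ¬ (p : S) ∣ s → algebraMap S K s * (p : K)⁻¹ ∉ GG S p u v 0)
    (H2 : ∀ s : S, ¬ (p : S) ∣ s →
      algebraMap S K s * ((p : K)⁻¹ * (algebraMap S K c * v + algebraMap S K e * u) ^ (p - 1)) ∉ GG S p u v 0)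
    {r : K} (hr : ∀ k : ℕ, (p : K) ^ 2 * r ^ k ∈ GG S p u v 0) :
    ∃ s : S, ¬ (p : S) ∣ s ∧ ∃ x ∈ GG S p u v 0, ∃ l : S, algebraMap S K s * r =
      x + algebraMap S K l * ((p : K)⁻¹ * (algebraMap S K c * v + algebraMap S K e * u) ^ (p - 1)) := by
  set E := Eloc hpS hpK u v with hEdef
  have hS : ∀ s : S, algebraMap S K s ∈ E := fun s => Eloc_of_GG (GG_alg s)
  have hnd : ∀ s : S, ¬ (p : S) ∣ s → algebraMap S K s ≠ 0 := fun s hs => hσ s (fun h => hs (h ▸ dvd_zero _))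
  have hSi : ∀ s : S, ¬ (p : S) ∣ s → (algebraMap S K s)⁻¹ ∈ E := fun s hs => Eloc_inv hs (hnd s hs)
  have huE : u ∈ E := Eloc_of_GG (GG_mono (by norm_num) GG_u)
  have hpE : (p : K) ∈ E := by simpa using hS (p : S)
  have h1p : ∀ y ∈ E, (1 + p * y) ≠ 0 ∧ (1 + p * y)⁻¹ ∈ E := fun y hy =>
    Eloc_one_add_p hσ nu nv hu hv hy
  set N := ∑ m ∈ Finset.range p, algebraMap S K (nu m) * u ^ m with hN
  obtain ⟨s', hs'E, hNs⟩ : ∃ s' ∈ E, N = algebraMap S K (nu 0) + u * s' := by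
    refine ⟨algebraMap S K (nu 1) + u * ∑ m ∈ Finset.range (p - 2), algebraMap S K (nu (m + 2)) * u ^ m, ?_, ?_⟩
    · exact E.add_mem (hS _) (E.mul_mem huE (E.sum_mem fun m _ => E.mul_mem (hS _) (E.pow_mem huE _)))
    · rw [hN, split_sum (by omega)]; ring
  have hNE : N ∈ E := by rw [hNs]; exact E.add_mem (hS _) (E.mul_mem huE hs'E)
  have ha0 := hnd _ ha
  have hNe : N = algebraMap S K (nu 0) * (1 + u * (s' * (algebraMap S K (nu 0))⁻¹)) := by
    rw [hNs]; field_simp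
  have hNi : N⁻¹ ∈ E := by
    have hy : s' * (algebraMap S K (nu 0))⁻¹ ∈ E := E.mul_mem hs'E (hSi _ ha)
    obtain ⟨_, h⟩ := inv_one_add_of_pow h1p (E.mul_mem huE hy) (n := p) (E.mul_mem hNE (E.pow_mem hy p))
      (by rw [mul_pow, hu]; ring)
    rw [hNe, mul_inv]
    exact E.mul_mem (hSi _ ha) h
  have hN0 : N ≠ 0 := by
    intro h; rw [h, mul_zero] at hu; exact pow_ne_zero _ hu0 hu
  have hup : u ^ (p - 1) * u = p * N := by rw [← hu, ← pow_succ]; congr 1; omega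
  set θ := v * u⁻¹ with hθ
  have hvθ : v = θ * u := by rw [hθ]; field_simp
  have hθE : θ ∈ E := by
    have h := GG_gen (S := S) (p := p) (u := u) (v := v) (n := 0) (-1) (p - 1) 1 (by
      have : ((p - 1 : ℕ) : ℤ) = p - 1 := by push_cast [show 1 ≤ p by omega]; ring
      rw [this]; push_cast; linarith)
    have h2 := E.mul_mem (Eloc_of_GG (hpS := hpS) (hpK := hpK) h) hNi
    convert h2 using 1
    rw [hθ]
    have : u ^ (p - 1) = p * N * u⁻¹ := by rw [← hup]; field_simp
    rw [this, zpow_neg_one]; field_simp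
  set ψ := algebraMap S K c * θ + algebraMap S K e with hψ
  have hψE : ψ ∈ E := E.add_mem (E.mul_mem (hS _) hθE) (hS _)
  have hτ : algebraMap S K c * v + algebraMap S K e * u = u * ψ := by rw [hψ, hvθ]; ring
  rw [hτ] at hrel H2 ⊢
  obtain ⟨w', hw'E, hw'⟩ := GG_sub hpK hu0 E hS huE hθE hNE hNi hu hvθ 2 (by exact_mod_cast hw)
  have hψp : ψ ^ p = u * ((algebraMap S K α₁ * N⁻¹) * ψ + (w' * N⁻¹) * u) := by
    have : (p : K) * N * ψ ^ p = p * (algebraMap S K α₁ * (u * ψ) + u ^ 2 * w') := by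
      rw [← hw', ← hrel, mul_pow, hu]
    have h2 : N * ψ ^ p = (algebraMap S K α₁ * (u * ψ) + u ^ 2 * w') := by
      apply mul_left_cancel₀ hpK; rw [← this]; ring
    apply mul_left_cancel₀ hN0
    rw [h2]; field_simp
  set β := algebraMap S K α₁ * N⁻¹ with hβ
  set γ := w' * N⁻¹ with hγ
  have hβE : β ∈ E := E.mul_mem (hS _) hNi
  have hγE : γ ∈ E := E.mul_mem hw'E hNi
  have hα0 := hnd _ hα
  have hβi : β⁻¹ ∈ E := by
    rw [hβ, mul_inv, inv_inv]; exact E.mul_mem (hSi _ hα) hNE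
  have hβ0 : β ≠ 0 := mul_ne_zero hα0 (inv_ne_zero hN0)
  -- radical
  have hMpow : ∀ x ∈ Mm E u ψ, ∃ n : ℕ, ∃ y ∈ E, x ^ n = p * y := by
    let J : Ideal E := (Ideal.span {(⟨p, hpE⟩ : E)}).radical
    have hJu : (⟨u, huE⟩ : E) ∈ J := ⟨p, Ideal.mem_span_singleton.2 ⟨⟨N, hNE⟩, Subtype.ext hu⟩⟩
    have hJψ : (⟨ψ, hψE⟩ : E) ∈ J := by
      have : (⟨ψ, hψE⟩ : E) ^ p ∈ J := by
        have : (⟨ψ, hψE⟩ : E) ^ p = ⟨β * ψ + γ * u, E.add_mem (E.mul_mem hβE hψE) (E.mul_mem hγE huE)⟩ * ⟨u, huE⟩ :=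
          Subtype.ext (by show ψ ^ p = _ * u; rw [hψp]; ring)
        rw [this]; exact J.mul_mem_left _ hJu
      exact (Ideal.radical_isRadical _) ⟨p, this⟩
    rintro x ⟨a, ha, b, hb, rfl⟩
    have : (⟨a, ha⟩ * ⟨u, huE⟩ + ⟨b, hb⟩ * ⟨ψ, hψE⟩ : E) ∈ J :=
      J.add_mem (J.mul_mem_left _ hJu) (J.mul_mem_left _ hJψ)
    obtain ⟨n, hn⟩ := this
    obtain ⟨y, hy⟩ := Ideal.mem_span_singleton.1 hn
    exact ⟨n, y, y.2, congrArg Subtype.val hy⟩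
  have hMinv : ∀ x ∈ Mm E u ψ, 1 + x ≠ 0 ∧ (1 + x)⁻¹ ∈ E := by
    intro x hx
    obtain ⟨n, y, hy, h⟩ := hMpow x hx
    exact inv_one_add_of_pow h1p (Mm_le huE hψE hx) hy h
  have h1M : (1 : K) ∉ Mm E u ψ := by
    intro h
    obtain ⟨n, y, hy, h⟩ := hMpow 1 h
    rw [one_pow] at h
    obtain ⟨s, hs, hx⟩ := hy
    apply H1 s hs
    convert hx using 2
    exact (inv_eq_of_mul_eq_one_right h.symm)
  set W := Wr hpS hσ E u ψ hS hSi with hW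
  have hWM : ∀ x ∈ Mm E u ψ, x ∈ W := fun x hx => ⟨Mm_le huE hψE hx, 0, 1,
    fun h => hpS.not_isUnit (isUnit_of_dvd_one h), by simpa using hx⟩
  have hWS : ∀ s : S, algebraMap S K s ∈ W := fun s => ⟨hS s, s, 1,
    fun h => hpS.not_isUnit (isUnit_of_dvd_one h), by simpa using (Mm E u ψ).zero_mem⟩
  have hWSi : ∀ s : S, ¬ (p : S) ∣ s → (algebraMap S K s)⁻¹ ∈ W := fun s hs => ⟨hSi s hs, 1, s, hs,
    by simpa using (Mm E u ψ).zero_mem⟩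
  have hus : u * s' ∈ Mm E u ψ := by rw [mul_comm]; exact Mm_mul hs'E Mm_u
  have hWN : N ∈ W := by
    rw [hNs]; exact W.add_mem (hWS _) (hWM _ hus)
  have hWNi : N⁻¹ ∈ W := by
    have : N⁻¹ = (algebraMap S K (nu 0))⁻¹ + (-(N⁻¹ * (algebraMap S K (nu 0))⁻¹)) * (u * s') := by
      have : u * s' = N - algebraMap S K (nu 0) := by rw [hNs]; ring
      rw [this]; field_simp; ring
    rw [this]
    exact W.add_mem (hWSi _ ha) (hWM _ (Mm_mul (E.neg_mem (E.mul_mem hNi (hSi _ ha))) hus))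
  have hc0 := hnd c hc
  have hWθ : θ ∈ W := by
    have : θ = (algebraMap S K c)⁻¹ * (ψ - algebraMap S K e) := by rw [hψ]; field_simp; ring
    rw [this]
    exact W.mul_mem (hWSi _ hc) (W.sub_mem (hWM _ Mm_psi) (hWS _))
  have hEW : ∀ x ∈ E, x ∈ W := by
    rintro x ⟨s, hs, hx⟩
    obtain ⟨y, hy, h⟩ := GG_sub hpK hu0 W hWS (hWM _ Mm_u) hWθ hWN hWNi hu hvθ 0 (by exact_mod_cast hx)
    have : x = (algebraMap S K s)⁻¹ * y := by
      rw [pow_zero, one_mul] at h; rw [← h, inv_mul_cancel_left₀ (hnd s hs)]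
    rw [this]; exact W.mul_mem (hWSi s hs) hy
  have hpM : (p : K) ∈ Mm E u ψ := by
    have : (p : K) = (N⁻¹ * u ^ (p - 1)) * u := by rw [mul_assoc, hup]; field_simp
    rw [this]; exact Mm_mul (E.mul_mem hNi (E.pow_mem huE _)) Mm_u
  have hdich : ∀ x ∈ E, x ∈ Mm E u ψ ∨ x⁻¹ ∈ E := by
    intro x hx
    obtain ⟨_, s, t, ht, h⟩ := hEW x hx
    by_cases hs : (p : S) ∣ s
    · left
      obtain ⟨k, rfl⟩ := hs
      have h2 : algebraMap S K ((p : S) * k) * (algebraMap S K t)⁻¹ ∈ Mm E u ψ := by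
        have := Mm_mul (E.mul_mem (hS k) (hSi t ht)) hpM
        convert this using 1
        rw [map_mul, map_natCast]; ring
      simpa using AddSubgroup.add_mem _ h h2
    · right
      have hs0 := hnd s hs
      have ht0 := hnd t ht
      set m := x - algebraMap S K s * (algebraMap S K t)⁻¹ with hm
      obtain ⟨h3, h4⟩ := hMinv _ (Mm_mul (E.mul_mem (hS t) (hSi s hs)) h)
      have hx2 : x = algebraMap S K s * (algebraMap S K t)⁻¹ * (1 + algebraMap S K t * (algebraMap S K s)⁻¹ * m) := by
        rw [hm]; field_simp; ring
      rw [hx2, mul_inv, mul_inv, inv_inv]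
      exact E.mul_mem (E.mul_mem (hSi s hs) (hS t)) h4
  set t := ψ ^ (p - 1) * u⁻¹ with ht
  have htu : t * u = ψ ^ (p - 1) := by rw [ht]; field_simp
  have hε : (p : K)⁻¹ * (u * ψ) ^ (p - 1) = N * t := by
    have : u ^ (p - 1) = p * N * u⁻¹ := by rw [← hup]; field_simp
    rw [mul_pow, this, ht]; field_simp
  rw [hε] at H2 ⊢
  have htE : t ∉ E := by
    intro h
    obtain ⟨s, hs, hx⟩ := E.mul_mem hNE h
    exact H2 s hs hx
  obtain ⟨q, rfl⟩ : ∃ q, p = q + 3 := ⟨p - 3, by omega⟩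
  have hM : ∀ k : ℕ, u ^ ((q + 3) * 2) * r ^ k ∈ E := by
    intro k
    have := E.mul_mem (E.pow_mem hNE 2) (Eloc_of_GG (hpS := hpS) (hpK := hpK) (hr k))
    convert this using 1
    rw [pow_mul, hu]; ring
  obtain ⟨A, hA, B, hB, hrAB⟩ := local_lemma E huE hψE hβE hγE hβi hβ0 hu0 hdich h1M
    (q := q) htu htE hψp _ hM
  obtain ⟨_, s, s2, hs2, hm⟩ := hEW _ (E.mul_mem hB hNi)
  have hmt : ∀ m ∈ Mm E u ψ, m * t ∈ E := by
    rintro _ ⟨x, hx, y, hy, rfl⟩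
    have hψt : ψ * t = β * ψ + γ * u := by
      apply mul_right_cancel₀ hu0
      rw [mul_assoc, htu, ← pow_succ']
      exact hψp.trans (mul_comm _ _)
    have : (x * u + y * ψ) * t = x * ψ ^ (q + 3 - 1) + y * (β * ψ + γ * u) := by
      rw [← htu, ← hψt]; ring
    rw [this]
    exact E.add_mem (E.mul_mem hx (E.pow_mem hψE _)) (E.mul_mem hy (E.add_mem (E.mul_mem hβE hψE) (E.mul_mem hγE huE)))
  have hA' := E.add_mem hA (E.mul_mem hNE (hmt _ hm))
  obtain ⟨s3, hs3, hx3⟩ := hA'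
  refine ⟨s2 * s3, hpS.not_dvd_mul hs2 hs3, _, GG_algmul s2 hx3, s * s3, ?_⟩
  have hs20 := hnd s2 hs2
  rw [hrAB, map_mul, map_mul]
  field_simp
  ring
end locF
end Part13

section Part14
universe u
section descG
variable {S L K : Type*} [CommRing S] [IsDomain S] [Field L] [Field K] [Algebra L K] [Algebra S L] [Algebra S K] [IsScalarTower S L K] [IsFractionRing S L]

lemma GG_coord {p : ℕ} (hpK : (p : K) ≠ 0) {u v : K} (nu nv : ℕ → S)
    (hu : u ^ p = p * ∑ m ∈ Finset.range p, algebraMap S K (nu m) * u ^ m)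
    (hv : v ^ p = p * ∑ m ∈ Finset.range p, algebraMap S K (nv m) * v ^ m)
    (b : Module.Basis (Fin p × Fin p) L K) (hb : ∀ k, b k = ee p u v k) {x : K} :
    x ∈ GG S p u v 0 ↔ ∀ k, ∃ s : S, b.repr x k = algebraMap S L s := by
  rw [GG_zero_eq hpK nu nv hu hv, ← mem_span_iff_coord b, show ee p u v = b from funext fun k => (hb k).symm]

lemma repr_smulS {ι : Type*} (b : Module.Basis ι L K) (s : S) (x : K) (k : ι) :
    b.repr (algebraMap S K s * x) k = algebraMap S L s * b.repr x k := by
  rw [IsScalarTower.algebraMap_apply S L K, ← Algebra.smul_def, map_smul, Finsupp.smul_apply, smul_eq_mul]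

lemma descent_G {p : ℕ} (hp3 : 3 ≤ p) (hpS : Prime (p : S)) (hpK : (p : K) ≠ 0) {u v : K} (nu nv : ℕ → S)
    (hU : UniqueFactorizationMonoid (S ⧸ Ideal.span {(p : S)}))
    (hu : u ^ p = p * ∑ m ∈ Finset.range p, algebraMap S K (nu m) * u ^ m)
    (hv : v ^ p = p * ∑ m ∈ Finset.range p, algebraMap S K (nv m) * v ^ m)
    (b : Module.Basis (Fin p × Fin p) L K) (hb : ∀ k, b k = ee p u v k)
    {c e : S} (hc : ¬ (p : S) ∣ c)
    (hce : IsRelPrime (Ideal.Quotient.mk (Ideal.span {(p : S)}) c) (Ideal.Quotient.mk (Ideal.span {(p : S)}) e))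
    {s l l' : S} {x x' : K} (hs : ¬ (p : S) ∣ s) (hx : x ∈ GG S p u v 0) (hx' : x' ∈ GG S p u v 0)
    (h : algebraMap S K s * (x + algebraMap S K l * ((p : K)⁻¹ * Pol p u v c e)) =
      p * (x' + algebraMap S K l' * ((p : K)⁻¹ * Pol p u v c e))) :
    ∃ x'' ∈ GG S p u v 0, ∃ l'' : S, x + algebraMap S K l * ((p : K)⁻¹ * Pol p u v c e) =
      p * (x'' + algebraMap S K l'' * ((p : K)⁻¹ * Pol p u v c e)) := by
  have hpc : algebraMap S K (p : S) = (p : K) := by simp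
  have hinj : Function.Injective (algebraMap S L) := IsFractionRing.injective S L
  have hco : ∀ {y : K}, y ∈ GG S p u v 0 ↔ ∀ k, ∃ s : S, b.repr y k = algebraMap S L s :=
    GG_coord hpK nu nv hu hv b hb
  let i0 : Fin p := ⟨0, by omega⟩
  let i1 : Fin p := ⟨p - 1, by omega⟩
  have hP0 : b.repr (Pol p u v c e) (i0, i0.rev) = algebraMap S L (-(c ^ (p - 1))) := by
    rw [Pol_repr u v c e b hb]; simp [i0]
  have hP1 : b.repr (Pol p u v c e) (i1, i1.rev) = algebraMap S L ((-1) ^ p * (e ^ (p - 1))) := by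
    rw [Pol_repr u v c e b hb]; simp [i1, Nat.sub_add_cancel (by omega : 1 ≤ p)]
  -- step 1
  have h1 : algebraMap S K s * (algebraMap S K p * x + algebraMap S K l * Pol p u v c e) =
      algebraMap S K p * (algebraMap S K p * x' + algebraMap S K l' * Pol p u v c e) := by
    rw [hpc]
    have := congrArg (fun y => (p : K) * y) h
    field_simp at this
    linear_combination this
  have hl : (p : S) ∣ l := by
    obtain ⟨X, hX⟩ := hco.1 hx (i0, i0.rev)
    obtain ⟨X', hX'⟩ := hco.1 hx' (i0, i0.rev)
    have h2 := congrArg (fun y => b.repr y (i0, i0.rev)) h1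
    simp only [repr_smulS, map_add, Finsupp.add_apply, hX, hX', hP0] at h2
    simp only [← map_mul, ← map_add] at h2
    have h3 := hinj h2
    have h4 : (p : S) ∣ s * (l * c ^ (p - 1)) :=
      ⟨s * X - (p * X' + l' * -(c ^ (p - 1))), by linear_combination -h3⟩
    rcases hpS.dvd_or_dvd h4 with h5 | h5
    · exact absurd h5 hs
    · rcases hpS.dvd_or_dvd h5 with h6 | h6
      · exact h6
      · exact absurd (hpS.dvd_of_dvd_pow h6) hc
  obtain ⟨l0, rfl⟩ := hl
  have hPm := Pol_mem (S := S) hpK u v c e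
  set y0 := x + algebraMap S K l0 * Pol p u v c e with hy0
  have hy0m : y0 ∈ GG S p u v 0 := Submodule.add_mem _ hx (GG_algmul _ hPm)
  have hy : x + algebraMap S K (p * l0) * ((p : K)⁻¹ * Pol p u v c e) = y0 := by
    rw [map_mul, hpc, hy0]; field_simp
  rw [hy] at h ⊢
  have h2 : algebraMap S K s * y0 = algebraMap S K p * x' + algebraMap S K l' * Pol p u v c e := by
    rw [h, hpc]; field_simp
  obtain ⟨t, r, hl'⟩ : ∃ t r, l' = s * t + p * r := by
    obtain ⟨X, hX⟩ := hco.1 hy0m (i0, i0.rev)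
    obtain ⟨X', hX'⟩ := hco.1 hx' (i0, i0.rev)
    obtain ⟨Y, hY⟩ := hco.1 hy0m (i1, i1.rev)
    obtain ⟨Y', hY'⟩ := hco.1 hx' (i1, i1.rev)
    have e1 := congrArg (fun y => b.repr y (i0, i0.rev)) h2
    have e2 := congrArg (fun y => b.repr y (i1, i1.rev)) h2
    simp only [repr_smulS, map_add, Finsupp.add_apply, hX, hX', hP0] at e1
    simp only [repr_smulS, map_add, Finsupp.add_apply, hY, hY', hP1] at e2
    simp only [← map_mul, ← map_add] at e1 e2
    have e1 := hinj e1
    have e2 := hinj e2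
    have hone : ((-1 : S) ^ p) * (-1) ^ p = 1 := by rw [← mul_pow]; simp
    refine dvd_mod hpS hU hce (p - 1) (s := s) (l := l') (y1 := -X) (y2 := (-1) ^ p * Y) (z1 := -X') (z2 := (-1) ^ p * Y') ?_ ?_
    · linear_combination -e1
    · linear_combination (-1) ^ p * e2 + l' * e ^ (p - 1) * hone
  have h3 : algebraMap S K s * (y0 - algebraMap S K t * Pol p u v c e) =
      algebraMap S K p * (x' + algebraMap S K r * Pol p u v c e) := by
    rw [mul_sub, h2, hl', map_add, map_mul, map_mul]; ring
  have hD : y0 - algebraMap S K t * Pol p u v c e ∈ GG S p u v 0 := Submodule.sub_mem _ hy0m (GG_algmul _ hPm)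
  have hC : x' + algebraMap S K r * Pol p u v c e ∈ GG S p u v 0 := Submodule.add_mem _ hx' (GG_algmul _ hPm)
  set D := y0 - algebraMap S K t * Pol p u v c e with hDd
  refine ⟨(p : K)⁻¹ * D, ?_, t, ?_⟩
  · rw [hco]
    intro k
    obtain ⟨X, hX⟩ := hco.1 hD k
    obtain ⟨Y, hY⟩ := hco.1 hC k
    have e1 := congrArg (fun y => b.repr y k) h3
    simp only [repr_smulS, hX, hY] at e1
    simp only [← map_mul] at e1
    have e1 := hinj e1
    have : (p : S) ∣ X := (hpS.dvd_or_dvd ⟨Y, e1⟩).resolve_left hs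
    obtain ⟨d, hd⟩ := this
    refine ⟨d, ?_⟩
    have h5 := repr_smulS b (p : S) ((p : K)⁻¹ * D) k
    rw [hpc, mul_inv_cancel_left₀ hpK, hX, hd, map_mul] at h5
    have hpL : algebraMap S L (p : S) ≠ 0 := fun h => hpS.ne_zero (hinj (by rw [h, map_zero]))
    exact (mul_left_cancel₀ hpL h5).symm
  · rw [hDd]; field_simp; ring

end descG
end Part14

section Part15
section asm
variable {S L K : Type*} [CommRing S] [Field L] [Field K] [Algebra L K] [Algebra S L] [Algebra S K] [IsScalarTower S L K]

lemma pow_mem_span_of_rel {p : ℕ} (hp : 0 < p) {u : K} (nu : ℕ → S)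
    (hu : u ^ p = p * ∑ m ∈ Finset.range p, algebraMap S K (nu m) * u ^ m) :
    u ^ p ∈ Submodule.span L (Set.range fun k : Fin p => u ^ (k : ℕ)) := by
  rw [hu, Finset.mul_sum]
  refine Submodule.sum_mem _ fun m hm => ?_
  have : (p : K) * (algebraMap S K (nu m) * u ^ m) = ((p : L) * algebraMap S L (nu m)) • u ^ m := by
    rw [Algebra.smul_def, map_mul, ← IsScalarTower.algebraMap_apply, map_natCast]; ring
  rw [this]
  exact Submodule.smul_mem _ _ (Submodule.subset_span ⟨⟨m, Finset.mem_range.1 hm⟩, rfl⟩)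

lemma pow_mem_span_of_pow {p : ℕ} (hp : 0 < p) {x : K} {f : S} (hx : x ^ p = algebraMap S K f) :
    x ^ p ∈ Submodule.span L (Set.range fun k : Fin p => x ^ (k : ℕ)) := by
  have : x ^ p = algebraMap S L f • x ^ 0 := by
    rw [Algebra.smul_def, ← IsScalarTower.algebraMap_apply, hx]; simp
  rw [this]
  exact Submodule.smul_mem _ _ (Submodule.subset_span ⟨⟨0, hp⟩, rfl⟩)

lemma adjoin_shift {ω μ : K} (h₁ h₂ : S) (h : Algebra.adjoin L ({ω, μ} : Set K) = ⊤) :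
    Algebra.adjoin L ({ω - algebraMap S K h₁, μ - algebraMap S K h₂} : Set K) = ⊤ := by
  rw [eq_top_iff, ← h]
  refine Algebra.adjoin_le ?_
  set A := Algebra.adjoin L ({ω - algebraMap S K h₁, μ - algebraMap S K h₂} : Set K)
  have hs : ∀ s : S, algebraMap S K s ∈ A := fun s => by
    rw [IsScalarTower.algebraMap_apply S L K]; exact A.algebraMap_mem _
  have h1 : ω - algebraMap S K h₁ ∈ A := Algebra.subset_adjoin (by simp)
  have h2 : μ - algebraMap S K h₂ ∈ A := Algebra.subset_adjoin (by simp)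
  rintro x (rfl | rfl)
  · simpa using A.add_mem h1 (hs h₁)
  · simpa using A.add_mem h2 (hs h₂)

lemma not_dvd_of_coord [IsDomain S] [IsFractionRing S L] {p : ℕ} (hpS : Prime (p : S)) (hpK : (p : K) ≠ 0) {u v : K} (nu nv : ℕ → S)
    (hu : u ^ p = p * ∑ m ∈ Finset.range p, algebraMap S K (nu m) * u ^ m)
    (hv : v ^ p = p * ∑ m ∈ Finset.range p, algebraMap S K (nv m) * v ^ m)
    (b : Module.Basis (Fin p × Fin p) L K) (hb : ∀ k, b k = ee p u v k) (k : Fin p × Fin p)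
    {s : S} (hs : ¬ (p : S) ∣ s) {y : K} (hy : y ∈ GG S p u v 0)
    (h : algebraMap S K s * b k = p * y) : False := by
  obtain ⟨t, ht⟩ := (GG_coord hpK nu nv hu hv b hb).1 hy k
  have hpc : algebraMap S K (p : S) = (p : K) := by simp
  rw [← hpc] at h
  have e := congrArg (fun y => b.repr y k) h
  simp only [repr_smulS, ht, Module.Basis.repr_self, Finsupp.single_eq_same, mul_one] at e
  rw [← map_mul] at e
  exact hs ⟨t, IsFractionRing.injective S L e⟩

end asm
end Part15

theorem stmt11
    {S : Type*} [CommRing S] [IsDomain S] [IsNoetherianRing S] [IsLocalRing S]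
    [IsIntegrallyClosed S]
    {L : Type*} [Field L] [CharZero L] [Algebra S L] [IsFractionRing S L]
    {K : Type*} [Field K] [Algebra L K] [Algebra S K] [IsScalarTower S L K]
    {p : ℕ} (hp : p.Prime) (hp3 : 3 ≤ p) (hpS : Prime ((p : ℕ) : S))
    (hSmodp : IsIntegrallyClosed (S ⧸ Ideal.span {((p : ℕ) : S)}))
    (hreg : ∃ s : Finset S, Ideal.span (s : Set S) = IsLocalRing.maximalIdeal S ∧
      (s.card : WithBot ℕ∞) = ringKrullDim S)
    (hmix : ((p : ℕ) : S) ∈ IsLocalRing.maximalIdeal S ∧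
      ((p : ℕ) : S) ∉ IsLocalRing.maximalIdeal S ^ 2)
    {f g h₁ h₂ a b : S} (hf : f = h₁ ^ p + a * (p : S)) (hg : g = h₂ ^ p + b * (p : S))
    (hfg : (¬IsUnit f ∧ ¬IsUnit g ∧ PaperSquarefree f ∧ PaperSquarefree g ∧ SatisfiesA1 f g) ∨
      (IsUnit f ∧ IsUnit g ∧ (∀ x : S, x ^ p ≠ f) ∧ (∀ x : S, x ^ p ≠ g)))
    {ω μ : K} (hω : ω ^ p = algebraMap S K f) (hμ : μ ^ p = algebraMap S K g)
    (hKgen : Algebra.adjoin L ({ω, μ} : Set K) = ⊤)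
    (hdeg : Module.finrank L K = p ^ 2)
    (hicω : IsIntegrallyClosed (Algebra.adjoin S ({ω} : Set K)))
    (hicμ : IsIntegrallyClosed (Algebra.adjoin S ({μ} : Set K)))
    (hh₁ : h₁ ≠ 0) (hh₂ : h₂ ≠ 0)
    (hfg1 : ∃ x y : S, f * g = x ^ p + y * (p : S) ^ 2)
    (z c e : S) (hz : z ∉ Ideal.span {((p : ℕ) : S)})
    (hce : IsRelPrime (Ideal.Quotient.mk (Ideal.span {((p : ℕ) : S)}) c)
      (Ideal.Quotient.mk (Ideal.span {((p : ℕ) : S)}) e))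
    (hc1 : h₁ - z * c ∈ Ideal.span {((p : ℕ) : S)})
    (hc2 : h₂ - z * e ∈ Ideal.span {((p : ℕ) : S)}) :
    Subalgebra.toSubmodule (integralClosure S K) =
      Submodule.span S
        ((Algebra.adjoin S (({ω, μ} : Set K) ∪ {x : K | ∃ i : ℕ, 1 ≤ i ∧ i ≤ p - 1 ∧ x = (p : K)⁻¹ * ((ω - algebraMap S K h₁) ^ i * (μ - algebraMap S K h₂) ^ (p - i))}) : Set K) ∪
          {(p : K)⁻¹ * ∑ i ∈ Finset.Icc 1 p, (-1 : K) ^ i * algebraMap S K (c ^ (p - i) * e ^ (i - 1)) * (μ - algebraMap S K h₂) ^ (p - i) * (ω - algebraMap S K h₁) ^ (i - 1)}) ∧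
    ∃ T : Finset K, T.card ≤ p ^ 2 + 1 ∧
      Submodule.span S (T : Set K) = Subalgebra.toSubmodule (integralClosure S K) := by
  
  have hpK : (p : K) ≠ 0 := by
    rw [← map_natCast (algebraMap L K)]
    exact fun h => hp.ne_zero (Nat.cast_injective (R := L) (by
      rw [(algebraMap L K).injective (h.trans (map_zero _).symm), Nat.cast_zero]))
  have hp0 := hp.pos
  have hSL : Function.Injective (algebraMap S L) := IsFractionRing.injective S L
  have hSK : Function.Injective (algebraMap S K) := by
    rw [IsScalarTower.algebraMap_eq S L K]; exact (algebraMap L K).injective.comp hSL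
  have hσ : ∀ s : S, s ≠ 0 → algebraMap S K s ≠ 0 := fun s hs h => hs (hSK (by rw [h, map_zero]))
  have hpc : algebraMap S K (p : S) = (p : K) := by simp
  obtain ⟨hUS, hUp⟩ := ufm_both hpS hSmodp hreg hmix
  obtain ⟨nu, hnu0, hnu1, hu⟩ := binom_rel hp hf hω
  obtain ⟨nv, hnv0, hnv1, hv⟩ := binom_rel hp hg hμ
  have hadj := adjoin_eq_EE hp0 hpK h₁ h₂ nu nv hu hv
  obtain ⟨bm, hbm⟩ := exists_basis_mon (L := L) hp0 (pow_mem_span_of_pow hp0 hω) (pow_mem_span_of_pow hp0 hμ) hKgen hdeg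
  obtain ⟨be, hbe⟩ := exists_basis_ee (L := L) hp0 hpK (pow_mem_span_of_rel hp0 nu hu) (pow_mem_span_of_rel hp0 nv hv)
    (adjoin_shift h₁ h₂ hKgen) hdeg
  have hω0 : ω ≠ 0 := by
    have := bm.ne_zero (⟨1, hp.one_lt⟩, ⟨0, hp0⟩)
    rw [hbm] at this; simpa using this
  have hμ0 : μ ≠ 0 := by
    have := bm.ne_zero (⟨0, hp0⟩, ⟨1, hp.one_lt⟩)
    rw [hbm] at this; simpa using this
  have hωE : ω ∈ EE S hpK (ω - algebraMap S K h₁) (μ - algebraMap S K h₂) := by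
    rw [← hadj]; exact Algebra.subset_adjoin (Or.inl (by simp))
  have hμE : μ ∈ EE S hpK (ω - algebraMap S K h₁) (μ - algebraMap S K h₂) := by
    rw [← hadj]; exact Algebra.subset_adjoin (Or.inl (by simp))
  have hE1 : Algebra.adjoin S ({ω} : Set K) ≤ EE S hpK (ω - algebraMap S K h₁) (μ - algebraMap S K h₂) :=
    Algebra.adjoin_le (by rintro x rfl; exact hωE)
  have hE2 : Algebra.adjoin S ({μ} : Set K) ≤ EE S hpK (ω - algebraMap S K h₁) (μ - algebraMap S K h₂) :=
    Algebra.adjoin_le (by rintro x rfl; exact hμE)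
  have hu0 : ω - algebraMap S K h₁ ≠ 0 := by
    have := be.ne_zero (⟨1, hp.one_lt⟩, ⟨0, hp0⟩)
    rw [hbe] at this
    intro h; apply this; rw [h]; simp [ee]
  have hv0 : μ - algebraMap S K h₂ ≠ 0 := by
    have := be.ne_zero (⟨0, hp0⟩, ⟨1, hp.one_lt⟩)
    rw [hbe] at this
    intro h; apply this; rw [h]; simp [ee]
  have h1nd : ¬ (p : S) ∣ 1 := fun h => hpS.not_isUnit (isUnit_of_dvd_one h)
  have ha : ¬ (p : S) ∣ a := by
    rintro ⟨a', rfl⟩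
    obtain ⟨y, hy, hyp⟩ := pow_div_mem hp.two_le hpK nu hicω hnu0 hu0 hu
    refine not_dvd_of_coord hpS hpK nu nv hu hv be hbe (⟨p - 1, by omega⟩, ⟨0, hp0⟩) h1nd (hE1 hy) ?_
    rw [← hyp, hbe]; simp [ee, hp0]
  have hb : ¬ (p : S) ∣ b := by
    rintro ⟨a', rfl⟩
    obtain ⟨y, hy, hyp⟩ := pow_div_mem hp.two_le hpK nv hicμ hnv0 hv0 hv
    refine not_dvd_of_coord hpS hpK nu nv hu hv be hbe (⟨0, hp0⟩, ⟨p - 1, by omega⟩) h1nd (hE2 hy) ?_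
    rw [← hyp, hbe]; simp [ee, hp0]
  obtain ⟨hcn, hen, hab⟩ := nt_facts hp hpS hf hg hfg1 z c e hz hce hc1 hc2 ha hb
  have hc1' := Ideal.mem_span_singleton.1 hc1
  have hc2' := Ideal.mem_span_singleton.1 hc2
  have hz' : ¬ (p : S) ∣ z := fun h => hz (Ideal.mem_span_singleton.2 h)
  obtain ⟨w, hw, hrel⟩ := tau_rel hp hpK nu nv hnu0 hnu1 hnv0 hnv1 hu hv hc1' hc2' hab
  obtain ⟨α, hα, hPol⟩ := Pol_tau hp hpK (ω - algebraMap S K h₁) (μ - algebraMap S K h₂) c e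
  have hεdef : (p : K)⁻¹ * ∑ i ∈ Finset.Icc 1 p, (-1 : K) ^ i * algebraMap S K (c ^ (p - i) * e ^ (i - 1)) * (μ - algebraMap S K h₂) ^ (p - i) * (ω - algebraMap S K h₁) ^ (i - 1) =
    (p : K)⁻¹ * Pol p (ω - algebraMap S K h₁) (μ - algebraMap S K h₂) c e := rfl
  rw [hεdef, hadj]
  clear hεdef
  have hintE : ∀ x ∈ GG S p (ω - algebraMap S K h₁) (μ - algebraMap S K h₂) 0, IsIntegral S x :=
    fun x hx => isIntegral_GG hpK nu nv hu hv hx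
  have hGe := GG_zero_eq hpK nu nv hu hv
  generalize hud : ω - algebraMap S K h₁ = u at *
  generalize hvd : μ - algebraMap S K h₂ = v at *
  have hPm := Pol_mem (S := S) hpK u v c e
  set ε := (p : K)⁻¹ * Pol p u v c e with hε
  have hεα : (p : K)⁻¹ * (algebraMap S K c * v + algebraMap S K e * u) ^ (p - 1) = α - ε := by
    rw [hε, hPol]; field_simp; ring
  have hτ1 : algebraMap S K c * v + algebraMap S K e * u ∈ GG S p u v 1 :=
    Submodule.add_mem _ (GG_algmul _ GG_v) (GG_algmul _ GG_u)
  have hεint : IsIntegral S ε := by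
    obtain ⟨δ, hδ, hq⟩ := eps_sq hp.two_le hpK hτ1 hw hrel
    have := isIntegral_of_quad isIntegral_algebraMap (hintE _ hδ) hq
    rw [hεα] at this
    simpa using (hintE _ hα).sub this
  have hkey : ∀ r : K, IsIntegral S r → ∃ x ∈ GG S p u v 0, ∃ l : S, r = x + algebraMap S K l * ε := by
    intro r hr
    have hr2 : ∀ k : ℕ, (p : K) ^ 2 * r ^ k ∈ GG S p u v 0 := fun k =>
      psq_mem hUS hp0 hfg hω hμ hω0 hμ0 hdeg bm hbm (hr.pow k) (EE S hpK u v) hωE hμE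
    have hα1 : ¬ (p : S) ∣ -(z ^ (p - 1) * (c ^ (p - 1) * e ^ (p - 1))) := by
      rw [dvd_neg]
      have hpw : ∀ s : S, ¬ (p : S) ∣ s → ¬ (p : S) ∣ s ^ (p - 1) := fun s hs h => hs (hpS.dvd_of_dvd_pow h)
      exact hpS.not_dvd_mul (hpw _ hz') (hpS.not_dvd_mul (hpw _ hcn) (hpw _ hen))
    obtain ⟨s, hs, x1, hx1, l1, h1⟩ := loc_main hp3 hpS hpK hu0 hσ nu nv hu hv (by rw [hnu0]; exact ha) hcn hα1 hw hrel
      (by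
        intro s hs h
        refine not_dvd_of_coord hpS hpK nu nv hu hv be hbe (⟨0, hp0⟩, ⟨0, hp0⟩) hs h ?_
        rw [hbe]; simp [ee, hp0]; field_simp)
      (by
        intro s hs h
        rw [hεα] at h
        have h2 : algebraMap S K s * ε ∈ GG S p u v 0 := by
          have := Submodule.sub_mem _ (GG_algmul s hα) h
          convert this using 1; ring
        obtain ⟨t, ht⟩ := (GG_coord hpK nu nv hu hv be hbe).1 h2 (⟨0, hp0⟩, (⟨0, hp0⟩ : Fin p).rev)
        have h3 : algebraMap S K p * (algebraMap S K s * ε) = algebraMap S K s * Pol p u v c e := by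
          rw [hε, hpc]; field_simp
        have e1 := congrArg (fun y => be.repr y (⟨0, hp0⟩, (⟨0, hp0⟩ : Fin p).rev)) h3
        simp only [repr_smulS] at e1
        rw [← repr_smulS, ht, Pol_repr u v c e be hbe, ← map_mul, ← map_mul] at e1
        have e2 := hSL e1
        have e3 : (p : S) ∣ s * c ^ (p - 1) := ⟨-t, by
          simp at e2; linear_combination e2⟩
        exact hpS.not_dvd_mul hs (fun h => hcn (hpS.dvd_of_dvd_pow h)) e3)
      hr2
    rw [hεα] at h1
    have h1' : algebraMap S K s * r = (x1 + algebraMap S K l1 * α) + algebraMap S K (-l1) * ε := by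
      rw [h1, map_neg]; ring
    have hX := Submodule.add_mem _ hx1 (GG_algmul l1 hα)
    have hr21 := hr2 1
    rw [pow_one] at hr21
    obtain ⟨x3, hx3, l3, h3⟩ := descent_G hp3 hpS hpK nu nv hUp hu hv be hbe hcn hce hs hr21
      (GG_algmul (p : S) hX) (l := 0) (l' := (p : S) * -l1) (by
        rw [← hε, map_mul, map_zero, hpc, zero_mul, add_zero]
        linear_combination (p : K) ^ 2 * h1')
    rw [← hε, map_zero, zero_mul, add_zero] at h3
    have h3' : (p : K) * r = x3 + algebraMap S K l3 * ε := by
      apply mul_left_cancel₀ hpK; rw [← h3]; ring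
    obtain ⟨x4, hx4, l4, h4⟩ := descent_G hp3 hpS hpK nu nv hUp hu hv be hbe hcn hce hs hx3
      hX (l := l3) (l' := -l1) (by
        rw [← hε, ← h3']
        linear_combination (p : K) * h1')
    rw [← hε, ← h3'] at h4
    exact ⟨x4, hx4, l4, mul_left_cancel₀ hpK h4⟩
  have hmain : Subalgebra.toSubmodule (integralClosure S K) =
      Submodule.span S (((EE S hpK u v : Subalgebra S K) : Set K) ∪ {ε}) := by
    apply le_antisymm
    · intro r hr
      obtain ⟨x, hx, l, rfl⟩ := hkey r hr
      refine Submodule.add_mem _ (Submodule.subset_span (Or.inl hx)) ?_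
      rw [← Algebra.smul_def]
      exact Submodule.smul_mem _ _ (Submodule.subset_span (Or.inr rfl))
    · rw [Submodule.span_le]
      rintro x (hx | rfl)
      · exact hintE x hx
      · exact hεint
  refine ⟨hmain, ?_⟩
  classical
  refine ⟨insert ε (Finset.univ.image (ee p u v)), ?_, ?_⟩
  · refine (Finset.card_insert_le _ _).trans (Nat.add_le_add_right (Finset.card_image_le.trans ?_) 1)
    simp [sq]
  · rw [hmain]
    have h1 : (((EE S hpK u v : Subalgebra S K) : Set K)) = (Submodule.span S (Set.range (ee p u v)) : Set K) := by
      rw [← hGe]; rfl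
    rw [h1, Submodule.span_union, Submodule.span_span, Finset.coe_insert, Finset.coe_image, Finset.coe_univ, Set.image_univ,
      Submodule.span_insert, sup_comm]
end

section
/- Let S be an unramified regular local ring of mixed characteristic p ≥ 3 and let f = h₁^p + a·p, g = h₂^p + b·p with h₁,h₂,a,b ∈ S. Then: (i) the ideal (p, h₁, h₂) of S can be generated by two elements or equals S if and only if the same holds for the ideal (p, f, g); (ii) the ideal (p, h₁, h₂) has grade three (i.e. contains an S-regular sequence of length three) if and only if (p, f, g) has grade three. -/
open IsLocalRing in
theorem aux_exchange {R : Type*} [CommRing R] [IsLocalRing R] {n : ℕ} (s : Finset R)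
    (hs : Ideal.span (s : Set R) = maximalIdeal R) (hc : s.card ≤ n + 1) {x : R}
    (hx : x ∈ maximalIdeal R) (hx2 : x ∉ maximalIdeal R ^ 2) :
    ∃ t : Finset R, t.card ≤ n ∧ maximalIdeal R = Ideal.span {x} ⊔ Ideal.span (t : Set R) := by
  classical
  have h1 := hx
  rw [← hs] at h1
  obtain ⟨c, -, hcx⟩ := Submodule.mem_span_finset.1 h1
  have h2 : ∃ a ∈ s, IsUnit (c a) := by
    by_contra! hcon
    apply hx2
    rw [← hcx, pow_two]
    refine Ideal.sum_mem _ fun a ha => ?_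
    refine Ideal.mul_mem_mul ((mem_maximalIdeal _).2 (hcon a ha)) ?_
    rw [← hs]; exact Ideal.subset_span ha
  obtain ⟨a, ha, hu⟩ := h2
  refine ⟨s.erase a, by rw [Finset.card_erase_of_mem ha]; omega, ?_⟩
  apply le_antisymm
  · rw [← hs, Ideal.span_le]
    intro b hb
    by_cases hba : b = a
    · subst hba
      rw [← Finset.add_sum_erase s _ ha] at hcx
      have h3 : c b * b ∈ Ideal.span {x} ⊔ Ideal.span ((s.erase b : Finset R) : Set R) := by
        have : c b * b = x - ∑ a ∈ s.erase b, c a • a := by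
          rw [← hcx]; simp
        rw [this]
        refine Ideal.sub_mem _ (Ideal.mem_sup_left (Ideal.mem_span_singleton_self x)) 
          (Ideal.mem_sup_right (Ideal.sum_mem _ fun i hi => ?_))
        exact Ideal.mul_mem_left _ _ (Ideal.subset_span hi)
      exact (Ideal.unit_mul_mem_iff_mem _ hu).1 h3
    · exact Ideal.mem_sup_right (Ideal.subset_span (Finset.mem_coe.2 (Finset.mem_erase.2 ⟨hba, hb⟩)))
  · refine sup_le ((Ideal.span_singleton_le_iff_mem _).2 hx) ?_
    rw [← hs]
    exact Ideal.span_mono (by simp)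

open IsLocalRing in
theorem aux_quot {R : Type*} [CommRing R] [IsLocalRing R] [IsNoetherianRing R] {n : ℕ} (s : Finset R)
    (hs : Ideal.span (s : Set R) = maximalIdeal R) (hc : s.card ≤ n + 1)
    (hd : ((n + 1 : ℕ) : WithBot ℕ∞) ≤ ringKrullDim R) {x : R}
    (hx : x ∈ maximalIdeal R) (hx2 : x ∉ maximalIdeal R ^ 2) :
    ∃ _ : IsLocalRing (R ⧸ Ideal.span {x}), ∃ t : Finset (R ⧸ Ideal.span {x}), t.card ≤ n ∧
      Ideal.span (t : Set (R ⧸ Ideal.span {x})) = maximalIdeal (R ⧸ Ideal.span {x}) ∧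
      (n : WithBot ℕ∞) ≤ ringKrullDim (R ⧸ Ideal.span {x}) := by
  classical
  have hle : Ideal.span {x} ≤ maximalIdeal R := (Ideal.span_singleton_le_iff_mem _).2 hx
  have hnt : Nontrivial (R ⧸ Ideal.span {x}) :=
    Ideal.Quotient.nontrivial_iff.2 (fun h => (maximalIdeal.isMaximal R).ne_top (top_le_iff.1 (h ▸ hle)))
  have hloc : IsLocalRing (R ⧸ Ideal.span {x}) :=
    IsLocalRing.of_surjective' (Ideal.Quotient.mk _) Ideal.Quotient.mk_surjective
  obtain ⟨t, htc, ht⟩ := aux_exchange s hs hc hx hx2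
  refine ⟨hloc, t.image (Ideal.Quotient.mk _), Finset.card_image_le.trans htc, ?_, ?_⟩
  · have hm : maximalIdeal (R ⧸ Ideal.span {x}) = (maximalIdeal R).map (Ideal.Quotient.mk _) := by
      have := IsLocalHom.of_surjective (Ideal.Quotient.mk (Ideal.span {x})) Ideal.Quotient.mk_surjective
      ext y
      obtain ⟨y, rfl⟩ := Ideal.Quotient.mk_surjective y
      rw [Ideal.mem_quotient_iff_mem hle]
      simp [mem_maximalIdeal, mem_nonunits_iff]
    rw [hm, ht, Ideal.map_sup, Ideal.map_span, Ideal.map_span, Finset.coe_image]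
    simp
  · have h := ringKrullDim_le_ringKrullDim_quotient_add_encard ({x} : Set R) (by
      simpa [IsLocalRing.ringJacobson_eq_maximalIdeal] using hx)
    rw [Set.encard_singleton] at h
    have h2 := hd.trans h
    push_cast at h2
    exact (WithBot.add_le_add_iff_right' (c := 1) (by decide) (by decide)).1 h2

open IsLocalRing in
theorem aux_normal {R : Type*} [CommRing R] [IsLocalRing R] [IsNoetherianRing R] [IsDomain R]
    {p : ℕ} (hp : p.Prime) (h0 : (p : R) = 0) {x : R} (hx : Prime x)
    (hN : ∀ u v : R ⧸ Ideal.span {x}, v ^ p ∣ u ^ p → v ∣ u) (u v : R) (huv : v ^ p ∣ u ^ p) :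
    v ∣ u := by
  have : Fact p.Prime := ⟨hp⟩
  have : CharP R p := by
    obtain ⟨q, hq⟩ := CharP.exists R
    have h1 := (CharP.cast_eq_zero_iff R q p).1 h0
    rcases (Nat.dvd_prime hp).1 h1 with h2 | h2
    · exact absurd h2 (CharP.char_ne_one R q)
    · exact h2 ▸ hq
  by_cases hv : v = 0
  · subst hv
    rw [zero_pow hp.ne_zero, zero_dvd_iff] at huv
    rw [pow_eq_zero_iff hp.ne_zero |>.1 huv]
  have key : ∀ v : R, ¬ x ∣ v → ∀ u, v ^ p ∣ u ^ p → v ∣ u := by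
    intro v hxv
    have step : ∀ n : ℕ, ∀ u, v ^ p ∣ u ^ p → ∃ c d, u = c * v + x ^ n * d := by
      intro n
      induction n with
      | zero => intro u _; exact ⟨0, u, by simp⟩
      | succ n ih =>
        intro u hu
        have h1 := hN (Ideal.Quotient.mk _ u) (Ideal.Quotient.mk _ v) (by
          simpa using map_dvd (Ideal.Quotient.mk (Ideal.span {x})) hu)
        obtain ⟨c, hc⟩ := h1
        obtain ⟨c, rfl⟩ := Ideal.Quotient.mk_surjective c
        rw [← map_mul, Ideal.Quotient.eq, Ideal.mem_span_singleton] at hc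
        obtain ⟨u1, hu1⟩ := hc
        obtain ⟨d, hd⟩ := hu
        have hu2 : u = x * u1 + v * c := by linear_combination hu1
        have h3 : x ^ p * u1 ^ p = v ^ p * (d - c ^ p) := by
          rw [hu2, add_pow_char] at hd
          linear_combination hd
        have h4 : x ^ p ∣ d - c ^ p :=
          hx.pow_dvd_of_dvd_mul_left p (fun h => hxv (hx.dvd_of_dvd_pow h)) ⟨_, h3.symm⟩
        obtain ⟨e, he⟩ := h4
        have h5 : v ^ p ∣ u1 ^ p := ⟨e, mul_left_cancel₀ (pow_ne_zero p hx.ne_zero) (by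
          rw [h3, he]; ring)⟩
        obtain ⟨c', d', h6⟩ := ih u1 h5
        exact ⟨c + x * c', d', by rw [hu2, h6]; ring⟩
    intro u hu
    by_cases hvu : IsUnit v
    · exact hvu.dvd
    have hnt : Nontrivial (R ⧸ Ideal.span {v}) :=
      Ideal.Quotient.nontrivial_iff.2 (by rwa [Ne, Ideal.span_singleton_eq_top])
    have hloc : IsLocalRing (R ⧸ Ideal.span {v}) :=
      IsLocalRing.of_surjective' (Ideal.Quotient.mk _) Ideal.Quotient.mk_surjective
    have := IsLocalHom.of_surjective (Ideal.Quotient.mk (Ideal.span {v})) Ideal.Quotient.mk_surjective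
    have hk := Ideal.iInf_pow_eq_bot_of_isLocalRing (maximalIdeal (R ⧸ Ideal.span {v}))
      (maximalIdeal.isMaximal _).ne_top
    have : Ideal.Quotient.mk (Ideal.span {v}) u ∈ (⊥ : Ideal _) := by
      rw [← hk, Ideal.mem_iInf]
      intro n
      obtain ⟨c, d, h⟩ := step n u hu
      have hv0 : Ideal.Quotient.mk (Ideal.span {v}) v = 0 :=
        Ideal.Quotient.eq_zero_iff_mem.2 (Ideal.mem_span_singleton_self v)
      rw [h, map_add, map_mul, hv0, mul_zero, zero_add, map_mul, map_pow]
      refine Ideal.mul_mem_right _ _ (Ideal.pow_mem_pow ?_ n)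
      rw [mem_maximalIdeal, mem_nonunits_iff, isUnit_map_iff]
      exact hx.not_isUnit
    rw [Ideal.mem_bot, Ideal.Quotient.eq_zero_iff_mem, Ideal.mem_span_singleton] at this
    exact this
  have key2 : ∀ (v : R), ¬ x ∣ v → ∀ k : ℕ, ∀ u, (x ^ k * v) ^ p ∣ u ^ p → x ^ k * v ∣ u := by
    intro v hv k
    induction k with
    | zero => intro u hu; simpa using key v hv u (by simpa using hu)
    | succ k ih =>
      intro u hu
      have h1 : x ∣ u := hx.dvd_of_dvd_pow ((dvd_pow (by rw [pow_succ']; exact ⟨x ^ k * v, by ring⟩) hp.ne_zero).trans hu)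
      obtain ⟨u', rfl⟩ := h1
      rw [pow_succ', mul_assoc] at hu ⊢
      rw [mul_pow, mul_pow x] at hu
      exact mul_dvd_mul_left x (ih u' ((mul_dvd_mul_iff_left (pow_ne_zero p hx.ne_zero)).1 hu))
  obtain ⟨v', hv', hxv'⟩ :=
    (FiniteMultiplicity.of_not_isUnit hx.not_isUnit hv).exists_eq_pow_mul_and_not_dvd
  rw [hv'] at huv ⊢
  exact key2 v' hxv' _ u huv

open IsLocalRing in
theorem aux_main {p : ℕ} (hp : p.Prime) (n : ℕ) : ∀ (R : Type*) [CommRing R] [IsLocalRing R] [IsNoetherianRing R]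
    (s : Finset R) (_ : Ideal.span (s : Set R) = maximalIdeal R) (_ : s.card ≤ n)
    (_ : (n : WithBot ℕ∞) ≤ ringKrullDim R), IsDomain R ∧
      ((p : R) = 0 → ∀ u v : R, v ^ p ∣ u ^ p → v ∣ u) := by
  induction n with
  | zero =>
    intro R _ _ _ s hs hc _
    have h0 : s = ∅ := by simpa using hc
    subst h0
    have hF : IsField R := by
      rw [IsLocalRing.isField_iff_maximalIdeal_eq, ← hs]; simp
    have hD := hF.isDomain
    refine ⟨hD, fun _ u v h => ?_⟩
    by_cases hv : v = 0
    · subst hv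
      rw [zero_pow hp.ne_zero, zero_dvd_iff] at h
      rw [pow_eq_zero_iff hp.ne_zero |>.1 h]
    · obtain ⟨w, hw⟩ := hF.mul_inv_cancel hv
      exact ⟨w * u, by rw [← mul_assoc, hw, one_mul]⟩
  | succ n ih =>
    intro R _ _ _ s hs hc hd
    have hmin : ∀ q ∈ minimalPrimes R, ¬ maximalIdeal R ≤ q := by
      intro q hq hle
      have hqp : q.IsPrime := hq.1.1
      have : q = maximalIdeal R := le_antisymm (le_maximalIdeal hqp.ne_top) hle
      subst this
      rw [← IsLocalRing.maximalIdeal_height_eq_ringKrullDim, Ideal.height_eq_zero_iff.2 hq] at hd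
      norm_cast at hd
    have hsq : ¬ maximalIdeal R ≤ maximalIdeal R ^ 2 := by
      intro hle
      have h := Submodule.eq_bot_of_le_smul_of_le_jacobson_bot (maximalIdeal R) (maximalIdeal R)
        (IsNoetherian.noetherian _) (by rwa [pow_two] at hle) (maximalIdeal_le_jacobson _)
      obtain ⟨q, hq, -⟩ := Ideal.exists_minimalPrimes_le (bot_le : ⊥ ≤ maximalIdeal R)
      exact hmin q hq (h ▸ bot_le)
    have hfin := minimalPrimes.finite_of_isNoetherianRing R
    have hex : ∃ x ∈ maximalIdeal R, x ∉ maximalIdeal R ^ 2 ∧ ∀ q ∈ minimalPrimes R, x ∉ q := by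
      classical
      by_contra! hcon
      have := (Ideal.subset_union_prime (s := insert (maximalIdeal R ^ 2) hfin.toFinset) (f := id)
        (maximalIdeal R ^ 2) (maximalIdeal R ^ 2) (I := maximalIdeal R) (by
          intro i hi h1 _
          simp only [Finset.mem_insert, h1, false_or, Set.Finite.mem_toFinset] at hi
          exact hi.1.1)).1 (by
          intro x hx
          by_cases h2 : x ∈ maximalIdeal R ^ 2
          · exact Set.mem_biUnion (by simp) h2
          · obtain ⟨q, hq, hxq⟩ := hcon x hx h2
            exact Set.mem_biUnion (x := q) (by simpa using Or.inr hq) hxq)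
      obtain ⟨i, hi, hle⟩ := this
      simp only [Finset.mem_insert, Set.Finite.mem_toFinset] at hi
      rcases hi with rfl | hi
      · exact hsq hle
      · exact hmin i hi hle
    obtain ⟨x, hx, hx2, hxq⟩ := hex
    obtain ⟨hloc, t, htc, hts, htd⟩ := aux_quot s hs hc hd hx hx2
    obtain ⟨hdom, hN⟩ := ih (R ⧸ Ideal.span {x}) t hts htc htd
    have hxP : (Ideal.span {x}).IsPrime := (Ideal.Quotient.isDomain_iff_prime _).1 hdom
    obtain ⟨q, hq, hqx⟩ := Ideal.exists_minimalPrimes_le (bot_le : ⊥ ≤ Ideal.span {x})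
    have hqP : q.IsPrime := hq.1.1
    have hq0 : q = ⊥ := by
      refine Submodule.eq_bot_of_le_smul_of_le_jacobson_bot (maximalIdeal R) q
        (IsNoetherian.noetherian _) ?_ (maximalIdeal_le_jacobson _)
      intro y hy
      obtain ⟨z, rfl⟩ := Ideal.mem_span_singleton.1 (hqx hy)
      exact Ideal.mul_mem_mul hx ((hqP.mem_or_mem hy).resolve_left (hxq q hq))
    have hD : IsDomain R := by
      subst hq0
      exact IsDomain.of_bot_isPrime R
    refine ⟨hD, fun h0 u v huv => ?_⟩
    have hx0 : x ≠ 0 := by rintro rfl; simp at hx2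
    refine aux_normal hp h0 ((Ideal.span_singleton_prime hx0).1 hxP) (hN ?_) u v huv
    simpa using congrArg (Ideal.Quotient.mk (Ideal.span {x})) h0

theorem aux_loc {R : Type*} [CommRing R] [IsLocalRing R] {a b c : R}
    (h : Ideal.span {a, b} = Ideal.span {c}) : a ∣ b ∨ b ∣ a := by
  have ha : a ∈ Ideal.span {c} := h ▸ Ideal.subset_span (by simp)
  have hb : b ∈ Ideal.span {c} := h ▸ Ideal.subset_span (by simp)
  have hc : c ∈ Ideal.span {a, b} := h ▸ Ideal.subset_span (by simp)
  obtain ⟨u, rfl⟩ := Ideal.mem_span_singleton.1 ha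
  obtain ⟨v, rfl⟩ := Ideal.mem_span_singleton.1 hb
  obtain ⟨r, s, hrs⟩ := Ideal.mem_span_pair.1 hc
  have h1 : c * (1 - (r * u + s * v)) = 0 := by linear_combination -hrs
  rcases IsLocalRing.isUnit_or_isUnit_of_add_one (a := r * u + s * v) (b := 1 - (r * u + s * v)) (by ring) with h2 | h2
  · rcases IsLocalRing.isUnit_or_isUnit_of_isUnit_add h2 with h3 | h3
    · have hu : IsUnit u := isUnit_of_mul_isUnit_right h3
      exact Or.inl (mul_dvd_mul_left c hu.dvd)
    · have hu : IsUnit v := isUnit_of_mul_isUnit_right h3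
      exact Or.inr (mul_dvd_mul_left c hu.dvd)
  · have : c = 0 := by simpa using (h2.mul_left_eq_zero).1 h1
    simp [this]

open IsLocalRing in
theorem aux_two {S : Type*} [CommRing S] [IsLocalRing S] {q : S} [IsLocalRing (S ⧸ Ideal.span {q})]
    (hq2 : q ∉ maximalIdeal S ^ 2) (hq : q ∈ maximalIdeal S) (h k : S) :
    ((∃ x y : S, Ideal.span {q, h, k} = Ideal.span {x, y}) ∨ Ideal.span {q, h, k} = ⊤) ↔
      (Ideal.Quotient.mk (Ideal.span {q}) h ∣ Ideal.Quotient.mk (Ideal.span {q}) k ∨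
        Ideal.Quotient.mk (Ideal.span {q}) k ∣ Ideal.Quotient.mk (Ideal.span {q}) h) := by
  set π := Ideal.Quotient.mk (Ideal.span {q})
  have hπq : π q = 0 := Ideal.Quotient.eq_zero_iff_mem.2 (Ideal.mem_span_singleton_self q)
  have hmap : (Ideal.span {q, h, k}).map π = Ideal.span {π h, π k} := by
    rw [Ideal.map_span, Set.image_insert_eq, Set.image_pair, hπq, Ideal.span_insert_zero]
  constructor
  · rintro (⟨x, y, hxy⟩ | htop)
    · by_cases htop : Ideal.span {q, h, k} = ⊤
      · rw [htop, Ideal.map_top] at hmap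
        exact aux_loc (c := 1) (by rw [← hmap, Ideal.span_singleton_one])
      have hm := le_maximalIdeal htop
      have hx : x ∈ maximalIdeal S := hm (hxy ▸ Ideal.subset_span (by simp))
      have hy : y ∈ maximalIdeal S := hm (hxy ▸ Ideal.subset_span (by simp))
      have hqm : q ∈ Ideal.span {x, y} := hxy ▸ Ideal.subset_span (by simp)
      obtain ⟨r, s, hrs⟩ := Ideal.mem_span_pair.1 hqm
      have hrs' : π r * π x + π s * π y = 0 := by
        rw [← map_mul, ← map_mul, ← map_add]
        exact (congrArg π hrs).trans hπq
      rw [hxy, Ideal.map_span, Set.image_pair] at hmap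
      by_cases hr : IsUnit r
      · refine aux_loc (c := π y) ?_
        rw [← hmap]
        apply Submodule.span_insert_eq_span
        rw [← Ideal.span, ← Ideal.unit_mul_mem_iff_mem _ (hr.map π), Ideal.mem_span_singleton]
        exact ⟨-π s, by linear_combination hrs'⟩
      · by_cases hs : IsUnit s
        · refine aux_loc (c := π x) ?_
          rw [← hmap, Set.pair_comm]
          apply Submodule.span_insert_eq_span
          rw [← Ideal.span, ← Ideal.unit_mul_mem_iff_mem _ (hs.map π), Ideal.mem_span_singleton]
          exact ⟨-π r, by linear_combination hrs'⟩
        · exfalso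
          apply hq2
          rw [← hrs, pow_two]
          exact Ideal.add_mem _ (Ideal.mul_mem_mul ((mem_maximalIdeal _).2 hr) hx)
            (Ideal.mul_mem_mul ((mem_maximalIdeal _).2 hs) hy)
    · rw [htop, Ideal.map_top] at hmap
      exact aux_loc (c := 1) (by rw [← hmap, Ideal.span_singleton_one])
  · have main : ∀ h k : S, π h ∣ π k → Ideal.span {q, h, k} = Ideal.span {q, h} := by
      rintro h k ⟨c, hc⟩
      obtain ⟨c, rfl⟩ := Ideal.Quotient.mk_surjective c
      rw [← map_mul, Ideal.Quotient.eq, Ideal.mem_span_singleton] at hc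
      obtain ⟨d, hd⟩ := hc
      have : ({q, h, k} : Set S) = {k, q, h} := by ext; simp; tauto
      rw [this]
      apply Submodule.span_insert_eq_span
      exact Ideal.mem_span_pair.2 ⟨d, c, by linear_combination -hd⟩
    rintro (hd | hd)
    · exact Or.inl ⟨q, h, main h k hd⟩
    · refine Or.inl ⟨q, k, ?_⟩
      rw [← main k h hd, Set.pair_comm]

open RingTheory.Sequence IsLocalRing in
theorem aux_pow {S : Type*} [CommRing S] [IsLocalRing S] [IsNoetherianRing S] {x y z : S}
    (h : IsRegular S [x, y, z]) (k : ℕ) : IsRegular S [z ^ (k + 1), x, y] := by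
  have hm : ∀ r ∈ [x, y, z], r ∈ maximalIdeal S := by
    intro r (hr : r ∈ {r | r ∈ [x, y, z]})
    refine le_maximalIdeal ?_ (Ideal.subset_span hr)
    exact h.2 ∘ Eq.trans (Submodule.top_smul _).symm ∘ Eq.symm ∘ congrArg (· • ⊤)
  have h1 := (isWeaklyRegular_append_iff S [x, y] [z]).1 h.1
  have h2 := (isWeaklyRegular_append_iff S [x, y] [z ^ (k + 1)]).2 ⟨h1.1, by
    rw [isWeaklyRegular_singleton_iff] at h1 ⊢
    exact h1.2.pow _⟩
  have h3 : IsRegular S [x, y, z ^ (k + 1)] :=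
    IsRegular.of_isWeaklyRegular_of_mem_maximalIdeal S (by
      intro r hr
      simp only [List.mem_cons, List.not_mem_nil, or_false] at hr
      rcases hr with rfl | rfl | rfl
      · exact hm _ (by simp)
      · exact hm _ (by simp)
      · exact Ideal.pow_mem_of_mem _ (hm _ (by simp)) _ (by omega)) h2
  refine isRegular_of_perm h3 ?_
  exact (List.perm_append_comm (l₁ := [x, y]) (l₂ := [z ^ (k + 1)]))

theorem aux_grade {S : Type*} [CommRing S] [IsLocalRing S] [IsNoetherianRing S] {I J : Ideal S}
    (hIJ : I ≤ J.radical) (h : ContainsRegSeq3 S I) : ContainsRegSeq3 S J := by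
  obtain ⟨rs, hl, hmem, hr⟩ := h
  obtain ⟨x, y, z, rfl⟩ := List.length_eq_three.1 hl
  have hp : ∀ r ∈ I, ∃ k : ℕ, r ^ (k + 1) ∈ J := by
    intro r hr
    obtain ⟨k, hk⟩ := hIJ hr
    exact ⟨k, by rw [pow_succ]; exact Ideal.mul_mem_right _ _ hk⟩
  obtain ⟨i, hi⟩ := hp x (hmem x (by simp))
  obtain ⟨j, hj⟩ := hp y (hmem y (by simp))
  obtain ⟨k, hk⟩ := hp z (hmem z (by simp))
  refine ⟨[x ^ (i + 1), y ^ (j + 1), z ^ (k + 1)], rfl, ?_, aux_pow (aux_pow (aux_pow hr k) j) i⟩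
  simp [hi, hj, hk]

theorem stmt13
    {S : Type*} [CommRing S] [IsDomain S] [IsNoetherianRing S] [IsLocalRing S]
    {p : ℕ} (hp : p.Prime) (hp3 : 3 ≤ p)
    (hreg : ∃ s : Finset S, Ideal.span (s : Set S) = IsLocalRing.maximalIdeal S ∧
      (s.card : WithBot ℕ∞) = ringKrullDim S)
    (hmix : ((p : ℕ) : S) ∈ IsLocalRing.maximalIdeal S ∧
      ((p : ℕ) : S) ∉ IsLocalRing.maximalIdeal S ^ 2)
    {f g h₁ h₂ a b : S} (hf : f = h₁ ^ p + a * (p : S)) (hg : g = h₂ ^ p + b * (p : S)) :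
    (((∃ x y : S, Ideal.span {((p : ℕ) : S), h₁, h₂} = Ideal.span {x, y}) ∨ Ideal.span {((p : ℕ) : S), h₁, h₂} = ⊤) ↔ ((∃ x y : S, Ideal.span {((p : ℕ) : S), f, g} = Ideal.span {x, y}) ∨ Ideal.span {((p : ℕ) : S), f, g} = ⊤)) ∧
      (ContainsRegSeq3 S (Ideal.span {((p : ℕ) : S), h₁, h₂}) ↔
        ContainsRegSeq3 S (Ideal.span {((p : ℕ) : S), f, g})) := by
  have hq2 := hmix.2
  have hq := hmix.1
  have hfm : Ideal.Quotient.mk (Ideal.span {(p : S)}) f =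
      Ideal.Quotient.mk (Ideal.span {(p : S)}) h₁ ^ p := by
    rw [← map_pow, Ideal.Quotient.eq, Ideal.mem_span_singleton]
    exact ⟨a, by rw [hf]; ring⟩
  have hgm : Ideal.Quotient.mk (Ideal.span {(p : S)}) g =
      Ideal.Quotient.mk (Ideal.span {(p : S)}) h₂ ^ p := by
    rw [← map_pow, Ideal.Quotient.eq, Ideal.mem_span_singleton]
    exact ⟨b, by rw [hg]; ring⟩
  constructor
  · obtain ⟨s, hs, hc⟩ := hreg
    have hpos : s.card ≠ 0 := by
      intro h0
      have h1 : s = ∅ := by simpa using h0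
      subst h1
      rw [← hs] at hq hq2
      apply hq2
      have : (p : S) = 0 := by simpa using hq
      rw [this]; exact Ideal.zero_mem _
    obtain ⟨n, hn⟩ := Nat.exists_eq_succ_of_ne_zero hpos
    obtain ⟨hloc, t, htc, hts, htd⟩ := aux_quot (n := n) s hs hn.le (by rw [← hc, hn]) hq hq2
    obtain ⟨-, hN⟩ := aux_main hp n _ t hts htc htd
    have hN' := hN (by
      rw [← map_natCast (Ideal.Quotient.mk (Ideal.span {(p : S)})), Ideal.Quotient.eq_zero_iff_mem]
      exact Ideal.mem_span_singleton_self _)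
    rw [aux_two hq2 hq, aux_two hq2 hq, hfm, hgm]
    exact or_congr ⟨fun h => pow_dvd_pow_of_dvd h p, hN' _ _⟩
      ⟨fun h => pow_dvd_pow_of_dvd h p, hN' _ _⟩
  · constructor
    · apply aux_grade
      rw [Ideal.span_le]
      have hpm : (p : S) ∈ Ideal.span {(p : S), f, g} := Ideal.subset_span (by simp)
      have hfm' : f ∈ Ideal.span {(p : S), f, g} := Ideal.subset_span (by simp)
      have hgm' : g ∈ Ideal.span {(p : S), f, g} := Ideal.subset_span (by simp)
      rintro r (rfl | rfl | rfl)
      · exact Ideal.le_radical hpm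
      · refine ⟨p, ?_⟩
        rw [show r ^ p = f - a * p by rw [hf]; ring]
        exact Ideal.sub_mem _ hfm' (Ideal.mul_mem_left _ _ hpm)
      · refine ⟨p, ?_⟩
        rw [show r ^ p = g - b * p by rw [hg]; ring]
        exact Ideal.sub_mem _ hgm' (Ideal.mul_mem_left _ _ hpm)
    · apply aux_grade
      refine le_trans ?_ Ideal.le_radical
      rw [Ideal.span_le]
      have hpm : (p : S) ∈ Ideal.span {(p : S), h₁, h₂} := Ideal.subset_span (by simp)
      have hm1 : h₁ ∈ Ideal.span {(p : S), h₁, h₂} := Ideal.subset_span (by simp)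
      have hm2 : h₂ ∈ Ideal.span {(p : S), h₁, h₂} := Ideal.subset_span (by simp)
      rintro r (rfl | rfl | rfl)
      · exact hpm
      · rw [hf]
        exact Ideal.add_mem _ (Ideal.pow_mem_of_mem _ hm1 _ hp.pos) (Ideal.mul_mem_left _ _ hpm)
      · rw [hg]
        exact Ideal.add_mem _ (Ideal.pow_mem_of_mem _ hm2 _ hp.pos) (Ideal.mul_mem_left _ _ hpm)
end
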